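/- (Density of equivariant locally Lipschitz functions) Let 1 < p < ∞, and let f ∈ N^{1,p}_loc(T̃) satisfy f ∘ τ − f = 1 almost everywhere. Then for every ε > 0 there exists a locally Lipschitz function v: T̃ → ℝ with v ∘ τ − v = 1 such that for every open domain U compactly contained in T̃ one has ‖v − f‖_{N^{1,p}(U)} ≤ C(U) ε for a constant C(U) depending on U. In particular, degree-1 locally Lipschitz functions are dense in the set of degree-1 functions of N^{1,p}_loc(T̃) with respect to the N^{1,p}(U)-seminorm on each such U. -/

import Mathlib

open MeasureTheory Metric Set Filter Topology
open scoped ENNReal NNReal unitInterval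

noncomputable section

namespace Duality

/-! ### Rectifiable curves, line integrals and upper gradients

A rectifiable path is encoded by its arclength-type parametrization: a `1`-Lipschitz
map defined on a compact interval `[a, b]`.  The line integral `∫_γ ρ ds` of a
nonnegative Borel function is then the Lebesgue integral of `ρ ∘ γ` over `[a, b]`. -/

structure UPath (X : Type*) [PseudoMetricSpace X] where
  a : ℝ
  b : ℝ
  hab : a ≤ b
  toFun : ℝ → X
  lip : LipschitzOnWith 1 toFun (Set.Icc a b)

namespace UPath

variable {X : Type*} [PseudoMetricSpace X]

/-- starting point of the path -/
def start (γ : UPath X) : X := γ.toFun γ.a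

/-- end point of the path -/
def finish (γ : UPath X) : X := γ.toFun γ.b

/-- The line integral `∫_γ ρ ds`. -/
def integral (γ : UPath X) (ρ : X → ℝ≥0∞) : ℝ≥0∞ :=
  ∫⁻ t in Set.Icc γ.a γ.b, ρ (γ.toFun t)

/-- The image (trace) `|γ|` of the path. -/
def trace (γ : UPath X) : Set X := γ.toFun '' Set.Icc γ.a γ.b

/-- The length of the path. -/
def length (γ : UPath X) : ℝ≥0∞ := eVariationOn γ.toFun (Set.Icc γ.a γ.b)

/-- The path stays inside the set `W`. -/
def InSet (γ : UPath X) (W : Set X) : Prop := ∀ t ∈ Set.Icc γ.a γ.b, γ.toFun t ∈ W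

/-- The reparametrization of a rectifiable path as a `Path` (continuous map from `[0,1]`). -/
def toPath (γ : UPath X) : Path γ.start γ.finish where
  toFun := fun t => γ.toFun (γ.a + (t : ℝ) * (γ.b - γ.a))
  continuous_toFun := by
    have hmem : ∀ t : unitInterval, γ.a + (t : ℝ) * (γ.b - γ.a) ∈ Set.Icc γ.a γ.b := by
      intro t
      obtain ⟨ht0, ht1⟩ := t.2
      constructor
      · nlinarith [γ.hab]
      · nlinarith [γ.hab]
    exact γ.lip.continuousOn.comp_continuous (by continuity) hmem
  source' := by simp [start]
  target' := by simp [finish]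

end UPath

/-- `ρ` is an upper gradient of `u`. -/
def IsUpperGradient {X : Type*} [PseudoMetricSpace X] {Y : Type*} [PseudoEMetricSpace Y]
    (u : X → Y) (ρ : X → ℝ≥0∞) : Prop :=
  ∀ γ : UPath X, edist (u γ.start) (u γ.finish) ≤ γ.integral ρ

/-- The `p`-modulus of a family of (rectifiable) paths. -/
def pathMod {X : Type*} [PseudoMetricSpace X] [MeasurableSpace X]
    (μ : Measure X) (p : ℝ) (Γ : Set (UPath X)) : ℝ≥0∞ :=
  ⨅ (ρ : X → ℝ≥0∞) (_ : Measurable ρ ∧ ∀ γ ∈ Γ, 1 ≤ γ.integral ρ),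
    ∫⁻ x, ρ x ^ p ∂μ

/-- `ρ` is a `p`-weak upper gradient of `u`: the upper gradient inequality may fail
only on a path family of zero `p`-modulus. -/
def IsWeakUpperGradient {X : Type*} [PseudoMetricSpace X] [MeasurableSpace X]
    {Y : Type*} [PseudoEMetricSpace Y] (μ : Measure X) (p : ℝ)
    (u : X → Y) (ρ : X → ℝ≥0∞) : Prop :=
  pathMod μ p {γ : UPath X | ¬ edist (u γ.start) (u γ.finish) ≤ γ.integral ρ} = 0

/-- `ρ` is a `p`-weak upper gradient of `u` in the subset `U`. -/
def IsWeakUpperGradientOn {X : Type*} [PseudoMetricSpace X] [MeasurableSpace X]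
    {Y : Type*} [PseudoEMetricSpace Y] (μ : Measure X) (p : ℝ) (U : Set X)
    (u : X → Y) (ρ : X → ℝ≥0∞) : Prop :=
  pathMod (μ.restrict U) p
    {γ : UPath X | γ.InSet U ∧ ¬ edist (u γ.start) (u γ.finish) ≤ γ.integral ρ} = 0

/-- `ρ` is the minimal `p`-weak upper gradient of `u`: it is a `p`-integrable `p`-weak
upper gradient which is `μ`-a.e. dominated by every other one. -/
def IsMinimalWeakUpperGradient {X : Type*} [PseudoMetricSpace X] [MeasurableSpace X]
    {Y : Type*} [PseudoEMetricSpace Y] (μ : Measure X) (p : ℝ)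
    (u : X → Y) (ρ : X → ℝ≥0∞) : Prop :=
  Measurable ρ ∧ IsWeakUpperGradient μ p u ρ ∧ (∫⁻ x, ρ x ^ p ∂μ) < ⊤ ∧
    ∀ ρ' : X → ℝ≥0∞, Measurable ρ' → IsWeakUpperGradient μ p u ρ' →
      (∫⁻ x, ρ' x ^ p ∂μ) < ⊤ → ∀ᵐ x ∂μ, ρ x ≤ ρ' x

/-! ### Doubling measures, Poincaré inequalities, Ahlfors regularity -/

/-- `μ` is a doubling (Borel) measure with doubling constant `Cμ`:
`0 < μ(2B) ≤ Cμ · μ(B) < ∞` for every ball `B` of radius `r < diam T`. -/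
def IsDoubling {X : Type*} [MetricSpace X] [MeasurableSpace X]
    (μ : Measure X) (Cμ : ℝ≥0∞) : Prop :=
  ∀ (x : X) (r : ℝ), 0 < r → r < Metric.diam (Set.univ : Set X) →
    0 < μ (ball x (2 * r)) ∧ μ (ball x (2 * r)) ≤ Cμ * μ (ball x r) ∧
      Cμ * μ (ball x r) < ⊤

/-- `(X, d, μ)` supports a weak `1`-Poincaré inequality with constants `CP`, `lP`:
`⨍_B |u - u_B| dμ ≤ CP · diam B · ⨍_{lP·B} ρ dμ` for every locally integrable `u`
and every upper gradient `ρ` of `u`, and balls have positive finite measure. -/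
def SupportsPoincare {X : Type*} [MetricSpace X] [MeasurableSpace X]
    (μ : Measure X) (CP lP : ℝ) : Prop :=
  (∀ (x : X) (r : ℝ), 0 < r → 0 < μ (ball x r) ∧ μ (ball x r) < ⊤) ∧
  ∀ (u : X → ℝ) (ρ : X → ℝ≥0∞), LocallyIntegrable u μ → Measurable ρ →
    IsUpperGradient u ρ → ∀ (x : X) (r : ℝ), 0 < r →
      (∫⁻ y in ball x r, ENNReal.ofReal |u y - ⨍ z in ball x r, u z ∂μ| ∂μ) /
          μ (ball x r) ≤
        ENNReal.ofReal (CP * Metric.diam (ball x r)) *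
          ((∫⁻ y in ball x (lP * r), ρ y ∂μ) / μ (ball x (lP * r)))

/-- `μ` is Ahlfors `q`-regular with constants `0 < aA ≤ AA`. -/
def IsAhlforsRegular {X : Type*} [MetricSpace X] [MeasurableSpace X]
    (μ : Measure X) (q aA AA : ℝ) : Prop :=
  0 < aA ∧ aA ≤ AA ∧
    ∀ (x : X) (r : ℝ), 0 < r → r < Metric.diam (Set.univ : Set X) →
      ENNReal.ofReal (aA * r ^ q) ≤ μ (ball x r) ∧
        μ (ball x r) ≤ ENNReal.ofReal (AA * r ^ q)

/-! ### The circle `ℝ/ℤ`, loops and degree -/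

lemma intCast_coe_eq_zero (k : ℤ) : ((k : ℝ) : UnitAddCircle) = 0 :=
  (AddCircle.coe_eq_zero_iff _).mpr ⟨k, by simp⟩

/-- The standard loop of degree `k` in `ℝ/ℤ` based at `y`: `t ↦ y + [k t]`. -/
def stdLoop (k : ℤ) (y : UnitAddCircle) : Path y y where
  toFun := fun t => y + (((k : ℝ) * (t : ℝ) : ℝ) : UnitAddCircle)
  continuous_toFun := by
    refine continuous_const.add ?_
    exact (AddCircle.continuous_mk' 1).comp (by continuity)
  source' := by simp
  target' := by
    have h1 : ((1 : unitInterval) : ℝ) = 1 := rfl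
    have h : (((k : ℝ) * ((1 : unitInterval) : ℝ) : ℝ) : UnitAddCircle) = 0 := by
      rw [h1, mul_one]; exact intCast_coe_eq_zero k
    simp [h]

/-- Concatenation of `n` copies of a loop. -/
def loopPow {X : Type*} [TopologicalSpace X] {x : X} (γ : Path x x) : ℕ → Path x x
  | 0 => Path.refl x
  | n + 1 => (loopPow γ n).trans γ

/-- A loop `γ` based at `x` has degree 1 (relative to the chosen generator `α₀` based
at `x₀`) if it is loop-homotopic to a conjugate `η * α₀ * η⁻¹` of `α₀`. -/
def IsDegreeOneLoop {T : Type*} [TopologicalSpace T] (x₀ : T) (α₀ : Path x₀ x₀)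
    {x : T} (γ : Path x x) : Prop :=
  ∃ η : Path x x₀, Path.Homotopic γ (η.trans (α₀.trans η.symm))

/-- A map `f : T → ℝ/ℤ` has degree `k`: it pushes every degree-1 loop based at `x`
to a loop which is loop-homotopic to `[f x] + k·β`, `β (t) = [t]`. -/
def HasDegree {T : Type*} [TopologicalSpace T] (x₀ : T) (α₀ : Path x₀ x₀)
    (f : T → UnitAddCircle) (k : ℤ) : Prop :=
  ∃ hf : Continuous f, ∀ (x : T) (γ : Path x x), IsDegreeOneLoop x₀ α₀ γ →
    Path.Homotopic (γ.map hf) (stdLoop k (f x))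

/-- The class of `α₀` generates `π₁(T, x₀) ≅ ℤ`. -/
def IsGenerator {T : Type*} [TopologicalSpace T] (x₀ : T) (α₀ : Path x₀ x₀) : Prop :=
  Function.Bijective fun k : ℤ =>
    (FundamentalGroup.fromPath (X := TopCat.of T) ⟦α₀⟧ : FundamentalGroup (TopCat.of T) x₀) ^ k

/-- `T` is semilocally simply connected. -/
def SemilocallySimplyConnected (T : Type*) [TopologicalSpace T] : Prop :=
  ∀ x : T, ∃ U ∈ 𝓝 x, ∀ γ : Path x x, (∀ t, γ t ∈ U) → Path.Homotopic γ (Path.refl x)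

/-- `f` is a Lipschitz map of degree 1. -/
def DegOneLip {T : Type*} [MetricSpace T] (x₀ : T) (α₀ : Path x₀ x₀)
    (f : T → UnitAddCircle) : Prop :=
  (∃ L : ℝ≥0, LipschitzWith L f) ∧ HasDegree x₀ α₀ f 1

/-! ### Capacity and surface modulus -/

/-- The degree 1 `p`-capacity of `T`, defined through minimal `p`-weak upper gradients:
the infimum of `∫ ρ^p dμ` over `p`-weak upper gradients `ρ` of Lipschitz degree-1 maps. -/
def cap {T : Type*} [MetricSpace T] [MeasurableSpace T] (μ : Measure T) (p : ℝ)
    (x₀ : T) (α₀ : Path x₀ x₀) : ℝ≥0∞ :=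
  ⨅ (f : T → UnitAddCircle) (_ : DegOneLip x₀ α₀ f) (ρ : T → ℝ≥0∞)
    (_ : Measurable ρ ∧ IsWeakUpperGradient μ p f ρ),
      ∫⁻ x, ρ x ^ p ∂μ

/-- The pointwise Lipschitz constant `Lip f (x)`. -/
def pLip {T : Type*} [MetricSpace T] (f : T → UnitAddCircle) (x : T) : ℝ≥0∞ :=
  Filter.limsup
    (fun r : ℝ => ⨆ y ∈ ball x r, edist (f x) (f y) / ENNReal.ofReal r) (𝓝[>] (0 : ℝ))

/-- The degree 1 `p`-capacity of `T`, defined through pointwise Lipschitz constants. -/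
def capLip {T : Type*} [MetricSpace T] [MeasurableSpace T] (μ : Measure T) (p : ℝ)
    (x₀ : T) (α₀ : Path x₀ x₀) : ℝ≥0∞ :=
  ⨅ (f : T → UnitAddCircle) (_ : DegOneLip x₀ α₀ f), ∫⁻ x, pLip f x ^ p ∂μ

/-- The codimension 1 spherical Hausdorff measure, as a set function:
`H(A) = sup_{δ>0} inf { ∑ μ(B_i)/r_i }`, the infimum being over countable covers of `A`
by balls `B_i` of radii `r_i ≤ δ`. -/
def codimH {T : Type*} [MetricSpace T] [MeasurableSpace T] (μ : Measure T)
    (A : Set T) : ℝ≥0∞ :=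
  ⨆ (δ : ℝ) (_ : 0 < δ),
    ⨅ (c : ℕ → T) (r : ℕ → ℝ) (_ : ∀ i, r i ≤ δ)
      (_ : A ⊆ ⋃ i, ball (c i) (r i)),
        ∑' i, μ (ball (c i) (r i)) / ENNReal.ofReal (r i)

/-- The integral `∫_S g dH` of `g ≥ 0` over `S` against the codimension 1 Hausdorff
measure, via the layer-cake (Choquet) formula. -/
def choquetIntegral {T : Type*} [MetricSpace T] [MeasurableSpace T] (μ : Measure T)
    (S : Set T) (g : T → ℝ≥0∞) : ℝ≥0∞ :=
  ∫⁻ t in Set.Ioi (0 : ℝ), codimH μ {x | x ∈ S ∧ ENNReal.ofReal t < g x}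

/-- The family `Γ*` of all level sets `φ⁻¹[0]` of finite codimension 1 Hausdorff measure
of continuous degree-1 maps `φ : T → ℝ/ℤ`. -/
def Surfaces {T : Type*} [MetricSpace T] [MeasurableSpace T] (μ : Measure T)
    (x₀ : T) (α₀ : Path x₀ x₀) : Set (Set T) :=
  {S | ∃ φ : T → UnitAddCircle, HasDegree x₀ α₀ φ 1 ∧ S = φ ⁻¹' {0} ∧ codimH μ S < ⊤}

/-- The surface `q`-modulus of a family of surfaces, the surfaces being equipped with the
codimension 1 Hausdorff measure. -/
def surfModOf {T : Type*} [MetricSpace T] [MeasurableSpace T] (μ : Measure T) (q : ℝ)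
    (𝒮 : Set (Set T)) : ℝ≥0∞ :=
  ⨅ (ρ : T → ℝ≥0∞) (_ : Measurable ρ ∧ ∀ S ∈ 𝒮, 1 ≤ choquetIntegral μ S ρ),
    ∫⁻ x, ρ x ^ q ∂μ

/-- The surface modulus `mod_q T`. -/
def surfMod {T : Type*} [MetricSpace T] [MeasurableSpace T] (μ : Measure T) (q : ℝ)
    (x₀ : T) (α₀ : Path x₀ x₀) : ℝ≥0∞ :=
  surfModOf μ q (Surfaces μ x₀ α₀)

/-- The family `Γ*` with the `(q-1)`-dimensional Hausdorff measure instead. -/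
def SurfacesH {T : Type*} [MetricSpace T] [MeasurableSpace T] [BorelSpace T] (q : ℝ)
    (x₀ : T) (α₀ : Path x₀ x₀) : Set (Set T) :=
  {S | ∃ φ : T → UnitAddCircle, HasDegree x₀ α₀ φ 1 ∧ S = φ ⁻¹' {0} ∧ μH[q - 1] S < ⊤}

/-- The surface modulus `mod_q T` defined through the `(q-1)`-dimensional Hausdorff
measures `H^{q-1} ⌞ S`, `S ∈ Γ*`. -/
def surfModH {T : Type*} [MetricSpace T] [MeasurableSpace T] [BorelSpace T]
    (μ : Measure T) (q pstar : ℝ) (x₀ : T) (α₀ : Path x₀ x₀) : ℝ≥0∞ :=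
  ⨅ (ρ : T → ℝ≥0∞)
    (_ : Measurable ρ ∧ ∀ S ∈ SurfacesH (T := T) q x₀ α₀, 1 ≤ ∫⁻ x in S, ρ x ∂μH[q - 1]),
      ∫⁻ x, ρ x ^ pstar ∂μ

/-- The standing assumptions 2.1. -/
def Standing {T : Type*} [MetricSpace T] [MeasurableSpace T] (μ : Measure T)
    (Cμ : ℝ≥0∞) (CP lP : ℝ) (x₀ : T) (α₀ : Path x₀ x₀) : Prop :=
  IsDoubling μ Cμ ∧ SupportsPoincare μ CP lP ∧ SemilocallySimplyConnected T ∧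
    IsGenerator x₀ α₀ ∧ ∃ f : T → UnitAddCircle, DegOneLip x₀ α₀ f

/-! ### The universal cover -/

/-- `π` is a local isometry. -/
def IsLocalIsometry {X Y : Type*} [MetricSpace X] [MetricSpace Y] (π : X → Y) : Prop :=
  ∀ x : X, ∃ ε : ℝ, 0 < ε ∧
    ∀ y ∈ ball x ε, ∀ z ∈ ball x ε, dist (π y) (π z) = dist y z

/-- `(T̃, π)` is the universal cover of `T`, with `T̃` carrying the length metric pulled
back by `π` (so that `π` is a local isometry). -/
def CoverSetup {T Tt : Type*} [MetricSpace T] [MetricSpace Tt] (π : Tt → T) : Prop :=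
  IsCoveringMap π ∧ Function.Surjective π ∧ IsLocalIsometry π ∧ SimplyConnectedSpace Tt

/-- `τ` is the deck transformation of the cover `π` determined by
`τ (γ̃ 0) = γ̃ 1` for every lift `γ̃` of every degree-1 loop `γ`. -/
def IsDeck {T Tt : Type*} [MetricSpace T] [MetricSpace Tt] (π : Tt → T)
    (x₀ : T) (α₀ : Path x₀ x₀) (τ : Tt → Tt) : Prop :=
  Continuous τ ∧ (∀ x, π (τ x) = π x) ∧
    ∀ (x : T) (γ : Path x x), IsDegreeOneLoop x₀ α₀ γ →
      ∀ γt : C(unitInterval, Tt), (∀ t, π (γt t) = γ t) → τ (γt 0) = γt 1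

/-- `μ̃` is the natural lift of `μ` to the cover:
`μ̃ (A) = ∫ #(π⁻¹(x) ∩ A) dμ (x)`. -/
def IsLiftedMeasure {T Tt : Type*} [MetricSpace T] [MeasurableSpace T]
    [MetricSpace Tt] [MeasurableSpace Tt] (π : Tt → T) (μ : Measure T)
    (μt : Measure Tt) : Prop :=
  ∀ A : Set Tt, MeasurableSet A → μt A = ∫⁻ x, ((π ⁻¹' {x} ∩ A).encard : ℝ≥0∞) ∂μ

/-! ### Newtonian spaces -/

/-- The seminorm of `N^{1,p}(U)`. -/
def NSeminorm {X : Type*} [PseudoMetricSpace X] [MeasurableSpace X] (μ : Measure X)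
    (p : ℝ) (U : Set X) (f : X → ℝ) : ℝ≥0∞ :=
  (∫⁻ x in U, ENNReal.ofReal |f x| ^ p ∂μ) ^ (1 / p) +
    ⨅ (ρ : X → ℝ≥0∞) (_ : Measurable ρ ∧ IsWeakUpperGradientOn μ p U f ρ),
      (∫⁻ x in U, ρ x ^ p ∂μ) ^ (1 / p)

/-- `f ∈ N^{1,p}_loc`. -/
def MemNloc {X : Type*} [PseudoMetricSpace X] [MeasurableSpace X] (μ : Measure X)
    (p : ℝ) (f : X → ℝ) : Prop :=
  ∀ U : Set X, IsOpen U → IsCompact (closure U) →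
    (∫⁻ x in U, ENNReal.ofReal |f x| ^ p ∂μ) < ⊤ ∧
      ∃ ρ : X → ℝ≥0∞, Measurable ρ ∧ IsWeakUpperGradientOn μ p U f ρ ∧
        (∫⁻ x in U, ρ x ^ p ∂μ) < ⊤

/-- The collection `F`: nonnegative Borel functions `ρ` on `T` such that `ρ ∘ π` is a
`p`-weak upper gradient of some `f ∈ N^{1,p}_loc (T̃)` with `f ∘ τ - f = 1` a.e. -/
def MemF {T Tt : Type*} [MetricSpace T] [MeasurableSpace T] [MetricSpace Tt]
    [MeasurableSpace Tt] (π : Tt → T) (τ : Tt → Tt) (μt : Measure Tt) (p : ℝ)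
    (ρ : T → ℝ≥0∞) : Prop :=
  Measurable ρ ∧ ∃ f : Tt → ℝ, MemNloc μt p f ∧ (∀ᵐ x ∂μt, f (τ x) - f x = 1) ∧
    IsWeakUpperGradient μt p f (ρ ∘ π)

/-- The capacity `cap_p^F T`. -/
def capF {T Tt : Type*} [MetricSpace T] [MeasurableSpace T] [MetricSpace Tt]
    [MeasurableSpace Tt] (μ : Measure T) (π : Tt → T) (τ : Tt → Tt) (μt : Measure Tt)
    (p : ℝ) : ℝ≥0∞ :=
  ⨅ (ρ : T → ℝ≥0∞) (_ : MemF π τ μt p ρ), ∫⁻ x, ρ x ^ p ∂μ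

/-! ### Miscellaneous operators -/

/-- The restricted Hardy–Littlewood maximal operator `M_R`. -/
def restrMax {T : Type*} [MetricSpace T] [MeasurableSpace T] (μ : Measure T)
    (R : ℝ≥0∞) (g : T → ℝ≥0∞) (x : T) : ℝ≥0∞ :=
  ⨆ (s : ℝ) (_ : 0 < s ∧ ENNReal.ofReal s ≤ R),
    (∫⁻ y in ball x s, g y ∂μ) / μ (ball x s)

/-- The upper Lebesgue integral. -/
def upperLintegral {Y : Type*} [MeasurableSpace Y] (ν : Measure Y)
    (F : Y → ℝ≥0∞) : ℝ≥0∞ :=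
  ⨅ (G : Y → ℝ≥0∞) (_ : Measurable G ∧ ∀ y, F y ≤ G y), ∫⁻ y, G y ∂ν

/-! ### The sets `Ω` and the functions `ψ̃`, `ζ`, `ψ` of Section 4.3 -/

/-- The set of points reachable from `A` by a rectifiable path inside `W`. -/
def reach {T : Type*} [MetricSpace T] (A W : Set T) : Set T :=
  {x | ∃ γ : UPath T, γ.start ∈ A ∧ γ.finish = x ∧ γ.InSet W}

/-- `inf_γ ∫_γ ρ ds` over rectifiable paths connecting `A` to `x` inside `W`. -/
def pathDist {T : Type*} [MetricSpace T] (ρ : T → ℝ≥0∞) (A W : Set T) (x : T) : ℝ≥0∞ :=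
  ⨅ (γ : UPath T) (_ : γ.start ∈ A ∧ γ.finish = x ∧ γ.InSet W), γ.integral ρ

open scoped Classical in
/-- The function `ψ̃`. -/
def psiTilde {T : Type*} [MetricSpace T] (ρ : T → ℝ≥0∞) (A W : Set T) (x : T) : ℝ :=
  if x ∈ reach A W then (pathDist ρ A W x).toReal else 0

/-- The function `min {1, ψ̃}`. -/
def zeta {T : Type*} [MetricSpace T] (ρ : T → ℝ≥0∞) (A W : Set T) (x : T) : ℝ :=
  min 1 (psiTilde ρ A W x)

/-- The competing admissible map `ψ = [min {1, ψ̃}] : T → ℝ/ℤ`. -/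
def psiMap {T : Type*} [MetricSpace T] (ρ : T → ℝ≥0∞) (A W : Set T) (x : T) :
    UnitAddCircle :=
  ((zeta ρ A W x : ℝ) : UnitAddCircle)

end Duality

/-!
The function is truncated by its Lipschitz behaviour. A `p`-weak upper gradient can be enlarged, at
no cost in `L^p`, to a genuine one, so on an evenly covered ball `f`, read through a section of
`π`, has a lower semicontinuous upper gradient `g` with `∫ g ^ p < ∞`. Applying the Poincaré
inequality to the cost of cheapest chains of small steps, and telescoping over shrinking balls,
joins any two points at which the averages of `g` over balls are at most `l` by a curve of length
`≲ d` on which `g` integrates to `≲ l d`; the curve arises as a limit of chains. Hence `f` is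
`O(l)`-Lipschitz off the set `N l` where the maximal function of `g` exceeds `l`, and
`l ^ p μ(N l) → 0`. Extend `f` from the complement of `N l` by McShane's formula on each chart and
glue the translates with a partition of unity that is invariant under the deck group: the result
`v` is equivariant, `O(l)`-Lipschitz, and differs from `f` only over `N l`; the `L^p` norms over
`N l` of `O(l) + |f|` and of the upper gradient `O(l) + g` of `v - f` tend to `0`.
-/

namespace Duality

/-! ### Path modulus and upper gradients -/

lemma le_tsum_rpow_one_div {ι : Type*} {p : ℝ} (hp : 0 < p) (a : ι → ℝ≥0∞) (i : ι) :
    a i ≤ (∑' j, a j ^ p) ^ (1 / p) := by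
  rw [one_div, ENNReal.le_rpow_inv_iff hp]
  exact ENNReal.le_tsum i

lemma add_rpow_le_two_rpow_mul {p : ℝ} (hp : 1 ≤ p) (a b : ℝ≥0∞) :
    (a + b) ^ p ≤ 2 ^ p * (a ^ p + b ^ p) :=
  (ENNReal.rpow_add_le_mul_rpow_add_rpow a b hp).trans (by
    gcongr
    · norm_num
    · linarith)

lemma lintegral_add_rpow_lt_top {α : Type*} [MeasurableSpace α] {μ : Measure α} {p : ℝ}
    (hp : 1 ≤ p) {f g : α → ℝ≥0∞} (hf : Measurable f) (hf' : ∫⁻ x, f x ^ p ∂μ < ⊤)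
    (hg' : ∫⁻ x, g x ^ p ∂μ < ⊤) : ∫⁻ x, (f x + g x) ^ p ∂μ < ⊤ := by
  refine (lintegral_mono fun x => add_rpow_le_two_rpow_mul hp (f x) (g x)).trans_lt ?_
  rw [lintegral_const_mul' _ _ (by finiteness), lintegral_add_left (hf.pow_const p)]
  finiteness

/-- `ρ` is an upper gradient of `u` along the paths contained in `U`. -/
def IsUpperGradientOn {X Y : Type*} [PseudoMetricSpace X] [PseudoEMetricSpace Y] (U : Set X)
    (u : X → Y) (ρ : X → ℝ≥0∞) : Prop :=
  ∀ γ : UPath X, γ.InSet U → edist (u γ.start) (u γ.finish) ≤ γ.integral ρ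

section Modulus

variable {X Y : Type*} [PseudoMetricSpace X] [PseudoEMetricSpace Y]

lemma UPath.integral_const_mul (γ : UPath X) {c : ℝ≥0∞} (hc : c ≠ ⊤) (ρ : X → ℝ≥0∞) :
    γ.integral (fun x => c * ρ x) = c * γ.integral ρ :=
  lintegral_const_mul' _ _ hc

lemma UPath.integral_mono (γ : UPath X) {ρ ρ' : X → ℝ≥0∞} (h : ∀ x, ρ x ≤ ρ' x) :
    γ.integral ρ ≤ γ.integral ρ' :=
  lintegral_mono fun t => h (γ.toFun t)

lemma IsUpperGradientOn.mono {U : Set X} {u : X → Y} {ρ ρ' : X → ℝ≥0∞}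
    (h : IsUpperGradientOn U u ρ) (hρ : ∀ x, ρ x ≤ ρ' x) : IsUpperGradientOn U u ρ' :=
  fun γ hγ => (h γ hγ).trans (γ.integral_mono hρ)

variable [MeasurableSpace X] {μ : Measure X} {p : ℝ}

lemma pathMod_eq_zero_of_integral_eq_top (hp : 0 < p) {Γ : Set (UPath X)} {H : X → ℝ≥0∞}
    (hH : Measurable H) (hfin : ∫⁻ x, H x ^ p ∂μ < ⊤) (hΓ : ∀ γ ∈ Γ, γ.integral H = ⊤) :
    pathMod μ p Γ = 0 := by
  have mod_le : ∀ c : ℝ≥0, 0 < c → pathMod μ p Γ ≤ (c : ℝ≥0∞) ^ p * ∫⁻ x, H x ^ p ∂μ := by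
    intro c hc
    have hadm : ∀ γ ∈ Γ, 1 ≤ γ.integral (fun x => (c : ℝ≥0∞) * H x) := fun γ hγ => by
      rw [γ.integral_const_mul ENNReal.coe_ne_top, hΓ γ hγ,
        ENNReal.mul_top (by exact_mod_cast hc.ne')]
      exact le_top
    refine (iInf₂_le (fun x => (c : ℝ≥0∞) * H x) ⟨hH.const_mul _, hadm⟩).trans_eq ?_
    simp_rw [ENNReal.mul_rpow_of_nonneg _ _ hp.le]
    rw [lintegral_const_mul _ (hH.pow_const p)]
  have tendsto_rpow : Tendsto (fun c : ℝ≥0 => (c : ℝ≥0∞) ^ p) (𝓝[>] 0) (𝓝 0) := by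
    have hcont : Continuous fun c : ℝ≥0 => (c : ℝ≥0∞) ^ p :=
      ENNReal.continuous_rpow_const.comp ENNReal.continuous_coe
    simpa [ENNReal.zero_rpow_of_pos hp] using
      (hcont.tendsto 0).mono_left (nhdsWithin_le_nhds (s := Ioi 0))
  have tendsto_energy :
      Tendsto (fun c : ℝ≥0 => (c : ℝ≥0∞) ^ p * ∫⁻ x, H x ^ p ∂μ) (𝓝[>] 0) (𝓝 0) := by
    simpa using ENNReal.Tendsto.mul_const tendsto_rpow (Or.inr hfin.ne)
  exact nonpos_iff_eq_zero.1
    (ge_of_tendsto tendsto_energy (eventually_mem_nhdsWithin.mono mod_le))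

lemma exists_lintegral_rpow_le_of_pathMod_eq_zero (hp : 0 < p) {Γ : Set (UPath X)}
    (h0 : pathMod μ p Γ = 0) (n : ℕ) {ε : ℝ≥0∞} (hε : ε ≠ 0) :
    ∃ ρ : X → ℝ≥0∞, Measurable ρ ∧ (∀ γ ∈ Γ, n ≤ γ.integral ρ) ∧ ∫⁻ x, ρ x ^ p ∂μ ≤ ε := by
  have hpos : 0 < ε / ((n : ℝ≥0∞) ^ p + 1) := ENNReal.div_pos hε (by finiteness)
  obtain ⟨ρ, ⟨hρ, hadm⟩, hlt⟩ : ∃ ρ : X → ℝ≥0∞, (Measurable ρ ∧ ∀ γ ∈ Γ, 1 ≤ γ.integral ρ) ∧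
      ∫⁻ x, ρ x ^ p ∂μ < ε / ((n : ℝ≥0∞) ^ p + 1) := by
    rw [← h0] at hpos
    simpa only [pathMod, iInf_lt_iff, exists_prop] using hpos
  refine ⟨fun x => n * ρ x, hρ.const_mul _, fun γ hγ => ?_, ?_⟩
  · rw [γ.integral_const_mul (ENNReal.natCast_ne_top n)]
    exact le_mul_of_one_le_right zero_le (hadm γ hγ)
  · simp_rw [ENNReal.mul_rpow_of_nonneg _ _ hp.le]
    rw [lintegral_const_mul _ (hρ.pow_const p)]
    calc (n : ℝ≥0∞) ^ p * ∫⁻ x, ρ x ^ p ∂μ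
        ≤ ((n : ℝ≥0∞) ^ p + 1) * (ε / ((n : ℝ≥0∞) ^ p + 1)) := by
          gcongr
          exact le_self_add
      _ ≤ ε := ENNReal.mul_div_le

lemma exists_integral_eq_top_of_pathMod_eq_zero (hp : 0 < p) {Γ : Set (UPath X)}
    (h0 : pathMod μ p Γ = 0) :
    ∃ H : X → ℝ≥0∞, Measurable H ∧ ∫⁻ x, H x ^ p ∂μ < ⊤ ∧ ∀ γ ∈ Γ, γ.integral H = ⊤ := by
  choose ρ hρ hadm hint using fun n : ℕ =>
    exists_lintegral_rpow_le_of_pathMod_eq_zero hp h0 n (ε := 2⁻¹ ^ n) (by simp)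
  refine ⟨fun x => (∑' n, ρ n x ^ p) ^ (1 / p),
    (Measurable.tsum fun n => (hρ n).pow_const p).pow_const _, ?_, fun γ hγ => ?_⟩
  · simp_rw [← ENNReal.rpow_mul, one_div, inv_mul_cancel₀ hp.ne', ENNReal.rpow_one]
    rw [lintegral_tsum fun n => ((hρ n).pow_const p).aemeasurable]
    refine (ENNReal.tsum_le_tsum hint).trans_lt ?_
    rw [ENNReal.tsum_geometric]
    simp
  · refine ENNReal.eq_top_of_forall_nnreal_le fun r => ?_
    obtain ⟨n, hn⟩ := exists_nat_ge r
    calc (r : ℝ≥0∞) ≤ n := by exact_mod_cast hn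
      _ ≤ γ.integral (ρ n) := hadm n γ hγ
      _ ≤ _ := γ.integral_mono fun x => le_tsum_rpow_one_div hp (fun n => ρ n x) n

lemma IsWeakUpperGradientOn.exists_isUpperGradientOn (hp : 1 ≤ p) {U : Set X} {u : X → Y}
    {ρ : X → ℝ≥0∞} (hu : IsWeakUpperGradientOn μ p U u ρ) (hρ : Measurable ρ)
    (hfin : ∫⁻ x in U, ρ x ^ p ∂μ < ⊤) :
    ∃ H : X → ℝ≥0∞, Measurable H ∧ ∫⁻ x in U, H x ^ p ∂μ < ⊤ ∧ IsUpperGradientOn U u H := by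
  obtain ⟨H, hH, hHfin, htop⟩ :=
    exists_integral_eq_top_of_pathMod_eq_zero (zero_lt_one.trans_le hp) hu
  refine ⟨fun x => ρ x + H x, hρ.add hH, lintegral_add_rpow_lt_top hp hρ hfin hHfin,
    fun γ hγ => ?_⟩
  by_cases h : edist (u γ.start) (u γ.finish) ≤ γ.integral ρ
  · exact h.trans (γ.integral_mono fun x => le_self_add)
  · have hle : γ.integral H ≤ γ.integral (fun x => ρ x + H x) :=
      γ.integral_mono fun x => le_add_self
    rw [htop γ ⟨hγ, h⟩, top_le_iff] at hle
    exact hle ▸ le_top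

end Modulus

namespace UPath

variable {X : Type*} [PseudoMetricSpace X]

/-- The restriction of a path to a subinterval. -/
def sub (γ : UPath X) (s t : ℝ) (hst : s ≤ t) (hs : γ.a ≤ s) (ht : t ≤ γ.b) : UPath X where
  a := s
  b := t
  hab := hst
  toFun := γ.toFun
  lip := γ.lip.mono (Icc_subset_Icc hs ht)

lemma reflect_mem_Icc (γ : UPath X) {t : ℝ} :
    γ.a + γ.b - t ∈ Icc γ.a γ.b ↔ t ∈ Icc γ.a γ.b := by
  simp only [mem_Icc]
  constructor <;> rintro ⟨h₁, h₂⟩ <;> constructor <;> linarith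

/-- The path traversed backwards. -/
def rev (γ : UPath X) : UPath X where
  a := γ.a
  b := γ.b
  hab := γ.hab
  toFun := fun t => γ.toFun (γ.a + γ.b - t)
  lip := fun s hs t ht => by
    simpa only [edist_sub_left] using
      γ.lip (γ.reflect_mem_Icc.2 hs) (γ.reflect_mem_Icc.2 ht)

lemma rev_start (γ : UPath X) : γ.rev.start = γ.finish := by simp [rev, start, finish]

lemma rev_finish (γ : UPath X) : γ.rev.finish = γ.start := by simp [rev, start, finish]

lemma integral_rev (γ : UPath X) (ρ : X → ℝ≥0∞) : γ.rev.integral ρ = γ.integral ρ := by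
  simp only [integral, rev]
  rw [← lintegral_indicator measurableSet_Icc, ← lintegral_indicator measurableSet_Icc,
    ← lintegral_sub_left_eq_self _ (γ.a + γ.b)]
  congr with t
  simp only [indicator, γ.reflect_mem_Icc, sub_sub_cancel]

end UPath

lemma setLIntegral_Icc_add_Icc (F : ℝ → ℝ≥0∞) {a b c : ℝ} (hab : a ≤ b) (hbc : b ≤ c) :
    (∫⁻ t in Icc a b, F t) + ∫⁻ t in Icc b c, F t = ∫⁻ t in Icc a c, F t := by
  rw [← Icc_union_Ioc_eq_Icc hab hbc, lintegral_union measurableSet_Ioc,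
    Measure.restrict_congr_set (Ioc_ae_eq_Icc (a := b) (b := c))]
  exact disjoint_left.2 fun x hx hx' => absurd hx.2 (not_le.2 hx'.1)

lemma edist_le_lintegral_of_locally {Y : Type*} [PseudoEMetricSpace Y] {w : ℝ → Y}
    {F : ℝ → ℝ≥0∞} {a b : ℝ} (hab : a ≤ b)
    (hloc : ∀ t₀ ∈ Icc a b, ∃ δ > 0, ∀ s ∈ Icc a b, ∀ t ∈ Icc a b, s ≤ t →
      dist s t₀ < δ → dist t t₀ < δ → edist (w s) (w t) ≤ ∫⁻ r in Icc s t, F r) :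
    edist (w a) (w b) ≤ ∫⁻ r in Icc a b, F r := by
  choose! δ hδ hloc using hloc
  obtain ⟨x, hx0, hmono, ⟨m, hm⟩, hcov⟩ := exists_monotone_Icc_subset_open_cover_Icc hab
    (c := fun i : Icc a b => ball i (δ i)) (fun i => isOpen_ball) (fun i _ =>
      mem_iUnion.2 ⟨i, mem_ball_self (hδ _ i.2)⟩)
  have edist_le : ∀ n, edist (w a) (w (x n)) ≤ ∫⁻ r in Icc a (x n : ℝ), F r := by
    intro n
    induction n with
    | zero => simp [hx0]
    | succ n ih =>
      obtain ⟨i, hi⟩ := hcov n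
      have hle : x n ≤ x (n + 1) := hmono n.le_succ
      rw [← setLIntegral_Icc_add_Icc F (x n).2.1 hle]
      exact (edist_triangle _ (w (x n)) _).trans (add_le_add ih
        (hloc i i.2 _ (x n).2 _ (x (n + 1)).2 hle (hi (left_mem_Icc.2 hle))
          (hi (right_mem_Icc.2 hle))))
  simpa only [hm m le_rfl] using edist_le m

lemma setLIntegral_Icc_comp_sub (F : ℝ → ℝ≥0∞) (a b c : ℝ) :
    ∫⁻ t in Icc (a + c) (b + c), F (t - c) = ∫⁻ t in Icc a b, F t := by
  simpa using (measurePreserving_sub_right volume c).setLIntegral_comp_preimage_emb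
    (measurableEmbedding_subRight c) F (Icc a b)

/-! ### Lipschitz estimates for `ℝ≥0∞`-valued functions -/

lemma edist_toReal_le {a b c : ℝ≥0∞} (ha : a ≠ ⊤) (hb : b ≠ ⊤) (hab : a ≤ b + c)
    (hba : b ≤ a + c) : edist a.toReal b.toReal ≤ c := by
  rcases eq_or_ne c ⊤ with rfl | hc
  · exact le_top
  lift a to ℝ≥0 using ha
  lift b to ℝ≥0 using hb
  lift c to ℝ≥0 using hc
  norm_cast at hab hba
  rw [edist_dist, ENNReal.ofReal_le_coe, Real.dist_eq]
  have hab' : (a : ℝ) ≤ b + c := by exact_mod_cast hab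
  have hba' : (b : ℝ) ≤ a + c := by exact_mod_cast hba
  exact abs_sub_le_iff.2 ⟨sub_le_iff_le_add'.2 hab', sub_le_iff_le_add'.2 hba'⟩

/-! ### Coarse curves -/

section Coarse

variable {T : Type*} [PseudoMetricSpace T] {δ : ℝ} {h : T → ℝ≥0∞}

/-- `c` is `1`-Lipschitz up to jumps of size `δ`. -/
def IsCoarse (δ : ℝ) (c : ℝ → T) : Prop := ∀ s t, dist (c s) (c t) ≤ |s - t| + δ

/-- The infimum of the `h`-lengths of the coarse curves from `x` to `z`. Since coarse curves may
jump, this is continuous in `z` for bounded `h`, whatever the rectifiable curves of `T` are. -/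
def coarseDist (h : T → ℝ≥0∞) (δ : ℝ) (x z : T) : ℝ≥0∞ :=
  ⨅ (ℓ : ℝ) (c : ℝ → T) (_ : 0 ≤ ℓ ∧ IsCoarse δ c ∧ c 0 = x ∧ c ℓ = z),
    ∫⁻ t in Icc 0 ℓ, h (c t)

lemma IsCoarse.of_le {c : ℝ → T} (h : ∀ s t, s ≤ t → dist (c s) (c t) ≤ t - s + δ) :
    IsCoarse δ c := by
  intro s t
  rcases le_total s t with hst | hst
  · rw [abs_sub_comm, abs_of_nonneg (sub_nonneg.2 hst)]
    exact h s t hst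
  · rw [dist_comm, abs_of_nonneg (sub_nonneg.2 hst)]
    exact h t s hst

lemma IsCoarse.dist_le {c : ℝ → T} (h : IsCoarse δ c) {s t : ℝ} (hst : s ≤ t) :
    dist (c s) (c t) ≤ t - s + δ := by
  simpa only [abs_sub_comm s, abs_of_nonneg (sub_nonneg.2 hst)] using h s t

lemma coarseDist_le {ℓ : ℝ} {c : ℝ → T} (hℓ : 0 ≤ ℓ) (hc : IsCoarse δ c) :
    coarseDist h δ (c 0) (c ℓ) ≤ ∫⁻ t in Icc 0 ℓ, h (c t) :=
  iInf_le_of_le ℓ (iInf_le_of_le c (iInf_le_of_le ⟨hℓ, hc, rfl, rfl⟩ le_rfl))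

lemma coarseDist_self (h : T → ℝ≥0∞) (hδ : 0 ≤ δ) (x : T) : coarseDist h δ x x = 0 := by
  have hconst : IsCoarse δ fun _ : ℝ => x := fun s t => by
    rw [dist_self]
    positivity
  simpa using coarseDist_le (h := h) le_rfl hconst

lemma IsCoarse.concat {ℓ : ℝ} {c e : ℝ → T} (hc : IsCoarse δ c) (he : IsCoarse δ e)
    (he0 : ∀ t, 0 ≤ t → dist (e 0) (e t) ≤ t) (hce : c ℓ = e 0) :
    IsCoarse δ fun t => if t ≤ ℓ then c t else e (t - ℓ) := by
  refine IsCoarse.of_le fun s t hst => ?_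
  split_ifs with hs ht ht
  · exact hc.dist_le hst
  · have hcs := hc.dist_le hs
    have het := he0 (t - ℓ) (by linarith)
    rw [← hce] at het
    linarith [dist_triangle (c s) (c ℓ) (e (t - ℓ))]
  · exact absurd (hst.trans ht) hs
  · simpa only [sub_sub_sub_cancel_right] using he.dist_le (sub_le_sub_right hst ℓ)

-- Appending `e` to a coarse curve does not add up the jumps because `e` issues from its starting
-- point without a jump.
lemma coarseDist_le_add_lintegral (h : T → ℝ≥0∞) (x : T) {e : ℝ → T} {d : ℝ} (hd : 0 ≤ d)
    (he : IsCoarse δ e) (he0 : ∀ t, 0 ≤ t → dist (e 0) (e t) ≤ t) :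
    coarseDist h δ x (e d) ≤ coarseDist h δ x (e 0) + ∫⁻ t in Icc 0 d, h (e t) := by
  conv_rhs => rw [coarseDist]
  simp only [ENNReal.iInf_add]
  refine le_iInf fun ℓ => le_iInf fun c => le_iInf fun ⟨hℓ, hc, hc0, hcℓ⟩ => ?_
  set c' : ℝ → T := fun t => if t ≤ ℓ then c t else e (t - ℓ)
  have left (t) (ht : t ≤ ℓ) : c' t = c t := if_pos ht
  have right (t) (ht : ℓ ≤ t) : c' t = e (t - ℓ) := by
    rcases ht.eq_or_lt with rfl | ht
    · rw [left _ le_rfl, hcℓ, sub_self]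
    · exact if_neg ht.not_ge
  have hℓd : ℓ ≤ ℓ + d := by linarith
  calc coarseDist h δ x (e d)
      = coarseDist h δ (c' 0) (c' (ℓ + d)) := by
        rw [left 0 hℓ, hc0, right _ hℓd, add_sub_cancel_left]
    _ ≤ ∫⁻ t in Icc 0 (ℓ + d), h (c' t) :=
        coarseDist_le (hℓ.trans hℓd) (hc.concat he he0 hcℓ)
    _ = (∫⁻ t in Icc 0 ℓ, h (c' t)) + ∫⁻ t in Icc ℓ (ℓ + d), h (c' t) :=
        (setLIntegral_Icc_add_Icc _ hℓ hℓd).symm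
    _ = (∫⁻ t in Icc 0 ℓ, h (c t)) + ∫⁻ t in Icc 0 d, h (e t) := by
        congr 1
        · exact setLIntegral_congr_fun measurableSet_Icc fun t ht => by simp only [left t ht.2]
        · rw [← setLIntegral_Icc_comp_sub _ 0 d ℓ, zero_add, add_comm d]
          exact setLIntegral_congr_fun measurableSet_Icc fun t ht => by simp only [right t ht.1]

lemma coarseDist_finish_le (h : T → ℝ≥0∞) (hδ : 0 ≤ δ) (x : T) (γ : UPath T) :
    coarseDist h δ x γ.finish ≤ coarseDist h δ x γ.start + γ.integral h := by
  set e : ℝ → T := fun t => γ.toFun (projIcc γ.a γ.b γ.hab (γ.a + t)) with he_def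
  have he : LipschitzWith 1 e := (γ.lip.to_restrict.comp
    ((LipschitzWith.projIcc γ.hab).comp (isometry_add_left γ.a).lipschitz)).weaken (by simp)
  have hcoarse : IsCoarse δ e := fun s t => by
    simpa [← Real.dist_eq] using (he.dist_le_mul s t).trans (by simpa using hδ)
  have he0 (t : ℝ) (ht : 0 ≤ t) : dist (e 0) (e t) ≤ t := by
    simpa [abs_of_nonneg ht] using he.dist_le_mul 0 t
  have hint : ∫⁻ t in Icc 0 (γ.b - γ.a), h (e t) = γ.integral h := by
    rw [UPath.integral, ← setLIntegral_Icc_comp_sub _ 0 (γ.b - γ.a) γ.a, zero_add, sub_add_cancel]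
    refine setLIntegral_congr_fun measurableSet_Icc fun t ht => ?_
    simp only [he_def, add_sub_cancel, projIcc_of_mem γ.hab ht]
  have hle := coarseDist_le_add_lintegral h x (sub_nonneg.2 γ.hab) hcoarse he0
  rw [hint] at hle
  simpa [he_def, UPath.start, UPath.finish] using hle

lemma isUpperGradient_coarseDist (hδ : 0 ≤ δ) (x : T) (hfin : ∀ z, coarseDist h δ x z ≠ ⊤) :
    IsUpperGradient (fun z => (coarseDist h δ x z).toReal) h := fun γ =>
  edist_toReal_le (hfin _) (hfin _)
    (by simpa only [γ.rev_start, γ.rev_finish, γ.integral_rev] using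
      coarseDist_finish_le h hδ x γ.rev)
    (coarseDist_finish_le h hδ x γ)

end Coarse

section CoarseBounded

variable {T : Type*} [MetricSpace T] {δ : ℝ} {h : T → ℝ≥0∞} {M : ℝ≥0}

lemma coarseDist_le_add (hM : ∀ z, h z ≤ M) (x : T) {z w : T} (hzw : dist z w ≤ δ) :
    coarseDist h δ x w ≤ coarseDist h δ x z + M * edist z w := by
  rcases eq_or_ne z w with rfl | hne
  · exact le_self_add
  have hd : 0 < dist z w := dist_pos.2 hne
  set e : ℝ → T := fun t => if t < dist z w then z else w with he_def
  have he : IsCoarse δ e := fun s t => by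
    have hwz : dist w z ≤ δ := by rwa [dist_comm]
    simp only [he_def]
    split_ifs <;> linarith [abs_nonneg (s - t), dist_self z, dist_self w]
  have he0 (t : ℝ) (ht : 0 ≤ t) : dist (e 0) (e t) ≤ t := by
    simp only [he_def, hd, if_true]
    split_ifs with h
    · simpa only [dist_self] using ht
    · exact not_lt.1 h
  have hint : ∫⁻ t in Icc 0 (dist z w), h (e t) ≤ M * edist z w :=
    (lintegral_mono fun t => hM (e t)).trans_eq (by simp [edist_dist])
  have hle := coarseDist_le_add_lintegral h x hd.le he he0
  simp only [he_def, hd, lt_irrefl, if_true, if_false] at hle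
  exact hle.trans (by gcongr)

lemma coarseDist_ne_top [PreconnectedSpace T] (hM : ∀ z, h z ≤ M) (hδ : 0 < δ) (x z : T) :
    coarseDist h δ x z ≠ ⊤ := by
  have ne_top_of_dist_lt {z w : T} (hzw : dist z w < δ) (hz : coarseDist h δ x z ≠ ⊤) :
      coarseDist h δ x w ≠ ⊤ :=
    ne_top_of_le_ne_top (by finiteness) (coarseDist_le_add hM x hzw.le)
  have hopen : IsOpen {z | coarseDist h δ x z ≠ ⊤} := Metric.isOpen_iff.2 fun z hz =>
    ⟨δ, hδ, fun w hw => ne_top_of_dist_lt (mem_ball'.1 hw) hz⟩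
  have hclosed : IsClosed {z | coarseDist h δ x z ≠ ⊤} :=
    ⟨Metric.isOpen_iff.2 fun z hz => ⟨δ, hδ, fun w hw hw' => hz (ne_top_of_dist_lt hw hw')⟩⟩
  have huniv := IsClopen.eq_univ ⟨hclosed, hopen⟩ ⟨x, by simp [coarseDist_self h hδ.le x]⟩
  exact eq_univ_iff_forall.1 huniv z

lemma locallyLipschitz_coarseDist [PreconnectedSpace T] (hM : ∀ z, h z ≤ M) (hδ : 0 < δ) (x : T) :
    LocallyLipschitz fun z => (coarseDist h δ x z).toReal := fun y => by
  refine ⟨M, ball y (δ / 2), ball_mem_nhds y (half_pos hδ), fun z hz w hw => ?_⟩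
  have hzw : dist z w ≤ δ := by
    linarith [dist_triangle_right z w y, mem_ball.1 hz, mem_ball.1 hw]
  have hfin := coarseDist_ne_top hM hδ x
  refine edist_toReal_le (hfin z) (hfin w) ?_ (coarseDist_le_add hM x hzw)
  rw [edist_comm]
  exact coarseDist_le_add hM x ((dist_comm w z).trans_le hzw)

end CoarseBounded

/-! ### Telescoping along shrinking balls -/

/-- The constant of the pointwise estimate `SupportsPoincare.abs_sub_le`. -/
def telescopingConst (Cμ : ℝ≥0∞) (CP : ℝ) : ℝ :=
  (12 * Cμ.toReal + 4 * Cμ.toReal ^ 2) * max CP 0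

lemma telescopingConst_nonneg (Cμ : ℝ≥0∞) (CP : ℝ) : 0 ≤ telescopingConst Cμ CP := by
  unfold telescopingConst
  positivity

lemma ofReal_abs_setAverage_sub_mul_le {T : Type*} [MeasurableSpace T] {μ : Measure T} {u : T → ℝ}
    {B : Set T} (hu : IntegrableOn u B μ) (htop : μ B ≠ ⊤) (c : ℝ) :
    ENNReal.ofReal |(⨍ y in B, u y ∂μ) - c| * μ B ≤ ∫⁻ y in B, ENNReal.ofReal |u y - c| ∂μ := by
  have hc : IntegrableOn (fun _ : T => c) B μ := integrableOn_const htop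
  calc ENNReal.ofReal |(⨍ y in B, u y ∂μ) - c| * μ B
      = ENNReal.ofReal |∫ y in B, (u y - c) ∂μ| := by
        rw [← ENNReal.ofReal_toReal htop, ← ENNReal.ofReal_mul (abs_nonneg _), ← Measure.real,
          ← abs_of_nonneg (measureReal_nonneg (μ := μ) (s := B)), ← abs_mul, sub_mul, mul_comm,
          ← smul_eq_mul, measure_smul_setAverage u htop, integral_sub hu hc, setIntegral_const,
          smul_eq_mul, mul_comm c]
    _ ≤ ENNReal.ofReal (∫ y in B, |u y - c| ∂μ) :=
        ENNReal.ofReal_le_ofReal abs_integral_le_integral_abs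
    _ = ∫⁻ y in B, ENNReal.ofReal |u y - c| ∂μ :=
        ofReal_integral_eq_lintegral_ofReal (hu.sub hc).abs (ae_of_all _ fun _ => abs_nonneg _)

lemma tendsto_setAverage_ball {T E : Type*} [PseudoMetricSpace T] [MeasurableSpace T]
    [OpensMeasurableSpace T] [NormedAddCommGroup E] [NormedSpace ℝ E] [CompleteSpace E]
    {μ : Measure T} {u : T → E} {x : T} (hball : ∀ r > 0, 0 < μ (ball x r) ∧ μ (ball x r) < ⊤)
    (hu : Integrable u μ) (hcont : ContinuousAt u x) :
    Tendsto (fun r => ⨍ y in ball x r, u y ∂μ) (𝓝[>] 0) (𝓝 (u x)) := by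
  refine Metric.nhds_basis_closedBall.tendsto_right_iff.2 fun ε hε => ?_
  obtain ⟨δ, hδ, hclose⟩ := Metric.continuousAt_iff.1 hcont ε hε
  filter_upwards [Ioo_mem_nhdsGT hδ] with r ⟨hr, hrδ⟩
  refine (convex_closedBall (u x) ε).set_average_mem isClosed_closedBall (hball r hr).1.ne'
    (hball r hr).2.ne (ae_restrict_of_forall_mem measurableSet_ball fun y hy => ?_) hu.integrableOn
  exact (hclose (hy.trans hrδ)).le

section Telescoping

variable {T : Type*} [MetricSpace T] [MeasurableSpace T] {μ : Measure T} {Cμ : ℝ≥0∞} {CP lP : ℝ}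

-- With `Cμ = ∞`, the finiteness clause in `IsDoubling` would force all small balls to be null.
lemma IsDoubling.ne_top (h : IsDoubling μ Cμ) (hd : 0 < diam (univ : Set T)) : Cμ ≠ ⊤ := by
  rintro rfl
  obtain ⟨x⟩ : Nonempty T := by
    by_contra hempty
    rw [not_nonempty_iff] at hempty
    simp [univ_eq_empty_iff.2 hempty] at hd
  set r := diam (univ : Set T) / 4
  have hr : 0 < r := by positivity
  have hrd : r < diam (univ : Set T) := div_lt_self hd (by norm_num)
  have hpos : 0 < μ (ball x r) := by
    have hhalf := (h x (r / 2) (half_pos hr) ((half_lt_self hr).trans hrd)).1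
    rwa [mul_div_cancel₀ r two_ne_zero] at hhalf
  have hlt := (h x r hr hrd).2.2
  rw [ENNReal.top_mul hpos.ne'] at hlt
  exact hlt.ne rfl

variable (hPI : SupportsPoincare μ CP lP) {u : T → ℝ} {H : T → ℝ≥0∞}
  (hu : Integrable u μ) (hH : Measurable H) (huH : IsUpperGradient u H) {x y : T} {r l : ℝ}

include hPI hu hH huH

lemma SupportsPoincare.lintegral_abs_sub_setAverage_le (hr : 0 < r)
    (havg : ∫⁻ y in ball x (lP * r), H y ∂μ ≤ ENNReal.ofReal l * μ (ball x (lP * r))) :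
    ∫⁻ y in ball x r, ENNReal.ofReal |u y - ⨍ z in ball x r, u z ∂μ| ∂μ ≤
      ENNReal.ofReal (2 * max CP 0 * r * l) * μ (ball x r) := by
  have hball := hPI.1 x r hr
  have hconst : CP * diam (ball x r) ≤ 2 * max CP 0 * r :=
    calc CP * diam (ball x r) ≤ max CP 0 * diam (ball x r) := by
          gcongr
          exact le_max_left _ _
      _ ≤ max CP 0 * (2 * r) := by
          gcongr
          exact diam_ball hr.le
      _ = 2 * max CP 0 * r := by ring
  rw [← ENNReal.div_le_iff hball.1.ne' hball.2.ne, ENNReal.ofReal_mul (by positivity)]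
  exact (hPI.2 u H hu.locallyIntegrable hH huH x r hr).trans
    (mul_le_mul' (ENNReal.ofReal_le_ofReal hconst) (ENNReal.div_le_of_le_mul havg))

lemma SupportsPoincare.abs_setAverage_sub_setAverage_le (hr : 0 < r) (hl : 0 ≤ l)
    (havg : ∫⁻ y in ball x (lP * r), H y ∂μ ≤ ENNReal.ofReal l * μ (ball x (lP * r)))
    {B : Set T} (hB : B ⊆ ball x r) {K : ℝ} (hK : 0 ≤ K)
    (hμB : μ (ball x r) ≤ ENNReal.ofReal K * μ B) :
    |(⨍ y in B, u y ∂μ) - ⨍ y in ball x r, u y ∂μ| ≤ K * (2 * max CP 0 * r * l) := by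
  have hball := hPI.1 x r hr
  have hB0 : μ B ≠ 0 := fun h => by
    rw [h, mul_zero] at hμB
    exact hball.1.not_ge hμB
  have hBtop : μ B ≠ ⊤ := ((measure_mono hB).trans_lt hball.2).ne
  rw [← ENNReal.ofReal_le_ofReal_iff (by positivity), ← ENNReal.mul_le_mul_iff_left hB0 hBtop]
  calc ENNReal.ofReal |(⨍ y in B, u y ∂μ) - ⨍ y in ball x r, u y ∂μ| * μ B
      ≤ ∫⁻ y in B, ENNReal.ofReal |u y - ⨍ z in ball x r, u z ∂μ| ∂μ :=
        ofReal_abs_setAverage_sub_mul_le hu.integrableOn hBtop _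
    _ ≤ ∫⁻ y in ball x r, ENNReal.ofReal |u y - ⨍ z in ball x r, u z ∂μ| ∂μ :=
        lintegral_mono_set hB
    _ ≤ ENNReal.ofReal (2 * max CP 0 * r * l) * μ (ball x r) :=
        hPI.lintegral_abs_sub_setAverage_le hu hH huH hr havg
    _ ≤ ENNReal.ofReal (2 * max CP 0 * r * l) * (ENNReal.ofReal K * μ B) := by gcongr
    _ = ENNReal.ofReal (K * (2 * max CP 0 * r * l)) * μ B := by
        rw [ENNReal.ofReal_mul hK, mul_left_comm (ENNReal.ofReal _), ← mul_assoc]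

variable [OpensMeasurableSpace T] (hdbl : IsDoubling μ Cμ) (hCμ : Cμ ≠ ⊤)

include hdbl hCμ

lemma SupportsPoincare.abs_sub_setAverage_le (hcont : ContinuousAt u x) (hr : 0 < r) (hl : 0 ≤ l)
    (hrd : r < diam (univ : Set T))
    (havg : ∀ s ≤ max lP 1 * r, ∫⁻ y in ball x s, H y ∂μ ≤ ENNReal.ofReal l * μ (ball x s)) :
    |u x - ⨍ y in ball x r, u y ∂μ| ≤ 4 * Cμ.toReal * max CP 0 * r * l := by
  have hpos (n : ℕ) : 0 < r / 2 ^ n := by positivity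
  have hle (n : ℕ) : r / 2 ^ n ≤ r := div_le_self hr.le (one_le_pow₀ one_le_two)
  have hhalf (n : ℕ) : 2 * (r / 2 ^ (n + 1)) = r / 2 ^ n := by
    rw [pow_succ]
    field_simp
  have hstep (n : ℕ) : dist (⨍ y in ball x (r / 2 ^ n), u y ∂μ)
      (⨍ y in ball x (r / 2 ^ (n + 1)), u y ∂μ) ≤
        4 * Cμ.toReal * max CP 0 * r * l / 2 / 2 ^ n := by
    have hdouble := (hdbl x _ (hpos (n + 1)) ((hle (n + 1)).trans_lt hrd)).2.1
    rw [hhalf, ← ENNReal.ofReal_toReal hCμ] at hdouble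
    rw [dist_comm, Real.dist_eq]
    refine (hPI.abs_setAverage_sub_setAverage_le hu hH huH (hpos n) hl (havg _ ?_)
      (ball_subset_ball ?_) ENNReal.toReal_nonneg hdouble).trans_eq (by ring)
    · exact mul_le_mul (le_max_left _ _) (hle n) (hpos n).le (by positivity)
    · linarith [hhalf n, hpos (n + 1)]
  have hradius : Tendsto (fun n : ℕ => r / 2 ^ n) atTop (𝓝[>] 0) :=
    tendsto_nhdsWithin_iff.2 ⟨by
      simpa [div_eq_mul_inv] using (tendsto_pow_atTop_nhds_zero_of_lt_one
        (r := (2⁻¹ : ℝ)) (by norm_num) (by norm_num)).const_mul r, Eventually.of_forall hpos⟩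
  have hlim := (tendsto_setAverage_ball (hPI.1 x) hu hcont).comp hradius
  simpa [Real.dist_eq, abs_sub_comm] using dist_le_of_le_geometric_two_of_tendsto₀ hstep hlim

lemma SupportsPoincare.abs_sub_le (hux : ContinuousAt u x) (huy : ContinuousAt u y)
    (hxy : 0 < dist x y) (hl : 0 ≤ l) (hrd : 2 * dist x y < diam (univ : Set T))
    (hx : ∀ s ≤ 2 * max lP 1 * dist x y,
      ∫⁻ z in ball x s, H z ∂μ ≤ ENNReal.ofReal l * μ (ball x s))
    (hy : ∀ s ≤ 2 * max lP 1 * dist x y,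
      ∫⁻ z in ball y s, H z ∂μ ≤ ENNReal.ofReal l * μ (ball y s)) :
    |u x - u y| ≤ telescopingConst Cμ CP * dist x y * l := by
  set d := dist x y
  have hd2 : 0 < 2 * d := by positivity
  have hm : 0 < max lP 1 := by positivity
  have hmul : 2 * max lP 1 * d = max lP 1 * (2 * d) := by ring
  have hcover : μ (ball x (2 * d)) ≤ ENNReal.ofReal (Cμ.toReal ^ 2) * μ (ball y d) :=
    calc μ (ball x (2 * d)) ≤ μ (ball y (2 * (2 * d))) :=
          measure_mono (ball_subset_ball' (by linarith))
      _ ≤ Cμ * μ (ball y (2 * d)) := (hdbl y (2 * d) hd2 hrd).2.1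
      _ ≤ Cμ * (Cμ * μ (ball y d)) := by
          gcongr
          exact (hdbl y d hxy (by linarith)).2.1
      _ = ENNReal.ofReal (Cμ.toReal ^ 2) * μ (ball y d) := by
          rw [← mul_assoc, sq, ENNReal.ofReal_mul ENNReal.toReal_nonneg, ENNReal.ofReal_toReal hCμ]
  have hux_avg := hPI.abs_sub_setAverage_le hu hH huH hdbl hCμ hux hd2 hl hrd
    fun s hs => hx s (hs.trans_eq hmul.symm)
  have huy_avg := hPI.abs_sub_setAverage_le hu hH huH hdbl hCμ huy hxy hl (by linarith)
    fun s hs => hy s (by nlinarith)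
  have havg_avg := hPI.abs_setAverage_sub_setAverage_le hu hH huH hd2 hl
    (hx _ (by nlinarith [le_max_left lP 1]))
    (ball_subset_ball' (by linarith [dist_comm y x] : d + dist y x ≤ 2 * d)) (by positivity) hcover
  rw [abs_sub_comm] at huy_avg havg_avg
  calc |u x - u y| ≤ |u x - ⨍ z in ball x (2 * d), u z ∂μ| +
        (|(⨍ z in ball x (2 * d), u z ∂μ) - ⨍ z in ball y d, u z ∂μ| +
          |(⨍ z in ball y d, u z ∂μ) - u y|) :=
        (_root_.abs_sub_le _ _ _).trans (add_le_add_right (_root_.abs_sub_le _ _ _) _)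
    _ ≤ 4 * Cμ.toReal * max CP 0 * (2 * d) * l + (Cμ.toReal ^ 2 * (2 * max CP 0 * (2 * d) * l) +
          4 * Cμ.toReal * max CP 0 * d * l) := by gcongr
    _ = telescopingConst Cμ CP * d * l := by
        rw [telescopingConst]
        ring

end Telescoping

/-! ### Lipschitz regularization of lower semicontinuous functions -/

section Regularization

variable {T : Type*} [PseudoEMetricSpace T]

/-- The largest `j`-Lipschitz function below `min g j`. For lower semicontinuous `g`, these
regularizations increase to `g` as `j → ∞`. -/
def infConv (g : T → ℝ≥0∞) (j : ℕ) (z : T) : ℝ≥0∞ := ⨅ w, (min (g w) j + j * edist z w)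

lemma infConv_le_min (g : T → ℝ≥0∞) (j : ℕ) (z : T) : infConv g j z ≤ min (g z) j :=
  (iInf_le _ z).trans (by simp)

lemma infConv_le (g : T → ℝ≥0∞) (j : ℕ) (z : T) : infConv g j z ≤ g z :=
  (infConv_le_min g j z).trans (min_le_left _ _)

lemma infConv_le_natCast (g : T → ℝ≥0∞) (j : ℕ) (z : T) : infConv g j z ≤ j :=
  (infConv_le_min g j z).trans (min_le_right _ _)

lemma infConv_le_add (g : T → ℝ≥0∞) (j : ℕ) (z w : T) :
    infConv g j z ≤ infConv g j w + j * edist z w := by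
  conv_rhs => rw [infConv]
  rw [ENNReal.iInf_add]
  refine le_iInf fun v => (iInf_le _ v).trans ?_
  rw [add_assoc, ← mul_add, add_comm (edist w v)]
  gcongr
  exact edist_triangle _ _ _

lemma monotone_infConv (g : T → ℝ≥0∞) : Monotone (infConv g) := by
  intro i j hij z
  refine iInf_mono fun w => ?_
  have hij' : (i : ℝ≥0∞) ≤ j := by exact_mod_cast hij
  gcongr

lemma upperSemicontinuous_infConv (g : T → ℝ≥0∞) (j : ℕ) : UpperSemicontinuous (infConv g j) := by
  refine upperSemicontinuous_iInf fun w => Continuous.upperSemicontinuous ?_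
  exact continuous_const.add ((ENNReal.continuous_const_mul (ENNReal.natCast_ne_top j)).comp
    (continuous_id.edist continuous_const))

lemma iSup_infConv {g : T → ℝ≥0∞} (hg : LowerSemicontinuous g) (z : T) :
    ⨆ j, infConv g j z = g z := by
  refine le_antisymm (iSup_le fun j => infConv_le g j z) (le_of_forall_lt fun a ha => ?_)
  obtain ⟨b, hab, hb⟩ := exists_between ha
  obtain ⟨δ, hδ, hball⟩ := EMetric.mem_nhds_iff.1 (hg z b hb)
  obtain ⟨i, hi⟩ := ENNReal.exists_nat_gt hb.ne_top
  obtain ⟨n, hn⟩ := ENNReal.exists_nat_mul_gt hδ.ne' hb.ne_top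
  refine hab.trans_le (le_iSup_of_le (max i n) (le_iInf fun w => ?_))
  rcases lt_or_ge (edist z w) δ with hw | hw
  · have hbw : b < g w := hball (by rwa [Metric.mem_eball, edist_comm])
    have hbi : b < (max i n : ℕ) := hi.trans_le (by exact_mod_cast le_max_left i n)
    exact le_add_right (le_min hbw.le hbi.le)
  · have hni : (n : ℝ≥0∞) ≤ (max i n : ℕ) := by exact_mod_cast le_max_right i n
    exact le_add_left (hn.le.trans (by gcongr))

lemma setLIntegral_infConv_le {α : Type*} [MeasurableSpace α] {ν : Measure α} {s : Set α}
    (hs : MeasurableSet s) (hνs : ν s ≠ ⊤) {g : T → ℝ≥0∞} {c : ℕ → α → T} {e : α → T}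
    {F : Filter ℕ} [F.NeBot] (hF : F ≤ atTop) (hce : TendstoUniformlyOn c e F s) {A : ℝ≥0∞}
    (hA : ∀ k, ∫⁻ t in s, infConv g k (c k t) ∂ν ≤ A) (j : ℕ) :
    ∫⁻ t in s, infConv g j (e t) ∂ν ≤ A := by
  have integral_le : ∀ ε > 0, ∫⁻ t in s, infConv g j (e t) ∂ν ≤ A + j * ε * ν s := by
    intro ε hε
    obtain ⟨k, hclose, hjk⟩ :=
      ((EMetric.tendstoUniformlyOn_iff.1 hce ε hε).and (hF (eventually_ge_atTop j))).exists
    calc ∫⁻ t in s, infConv g j (e t) ∂ν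
        ≤ ∫⁻ t in s, (infConv g k (c k t) + j * ε) ∂ν := by
          refine setLIntegral_mono' hs fun t ht => (infConv_le_add g j _ (c k t)).trans ?_
          gcongr
          · exact monotone_infConv g hjk _
          · exact (hclose t ht).le
      _ = (∫⁻ t in s, infConv g k (c k t) ∂ν) + j * ε * ν s := by
          rw [lintegral_add_right _ measurable_const, setLIntegral_const]
      _ ≤ A + j * ε * ν s := by
          gcongr
          exact hA k
  have tendsto_bound : Tendsto (fun ε : ℝ≥0∞ => A + j * ε * ν s) (𝓝[>] 0) (𝓝 A) := by
    have hmul : Tendsto (fun ε : ℝ≥0∞ => j * ε * ν s) (𝓝 0) (𝓝 (j * 0 * ν s)) :=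
      ENNReal.Tendsto.mul_const
        (ENNReal.Tendsto.const_mul tendsto_id (Or.inr (ENNReal.natCast_ne_top j))) (Or.inr hνs)
    simpa using (tendsto_const_nhds.add hmul).mono_left (nhdsWithin_le_nhds (s := Ioi 0))
  exact ge_of_tendsto tendsto_bound (eventually_mem_nhdsWithin.mono integral_le)

end Regularization

/-! ### Quasigeodesics with small line integral -/

section CoarseLimit

variable {T : Type*} [PseudoMetricSpace T] {ι : Type*} {F : Filter ι} {c : ι → ℝ → T}
  {δ : ι → ℝ} {e : ℝ → T}

lemma lipschitzWith_of_tendsto_isCoarse [F.NeBot] (hδ : Tendsto δ F (𝓝 0))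
    (hc : ∀ k, IsCoarse (δ k) (c k)) (he : ∀ t, Tendsto (fun k => c k t) F (𝓝 (e t))) :
    LipschitzWith 1 e := by
  refine LipschitzWith.of_dist_le_mul fun s t => ?_
  rw [NNReal.coe_one, one_mul, Real.dist_eq]
  have hbound : Tendsto (fun k => |s - t| + δ k) F (𝓝 |s - t|) := by
    simpa using tendsto_const_nhds.add hδ
  exact le_of_tendsto_of_tendsto' ((he s).dist (he t)) hbound fun k => hc k s t

lemma tendstoUniformlyOn_of_tendsto_isCoarse [F.NeBot] (hδ : Tendsto δ F (𝓝 0))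
    (hc : ∀ k, IsCoarse (δ k) (c k)) (he : ∀ t, Tendsto (fun k => c k t) F (𝓝 (e t)))
    {s : Set ℝ} (hs : IsCompact s) : TendstoUniformlyOn c e F s := by
  refine Metric.tendstoUniformlyOn_iff.2 fun ε hε => ?_
  have hlip := lipschitzWith_of_tendsto_isCoarse hδ hc he
  obtain ⟨N, -, hNfin, hN⟩ := hs.finite_cover_balls (e := ε / 4) (by positivity)
  have hnet : ∀ᶠ k in F, ∀ t ∈ N, dist (c k t) (e t) < ε / 4 :=
    (eventually_all_finite hNfin).2 fun t _ => (he t).eventually (ball_mem_nhds _ (by positivity))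
  filter_upwards [hnet, hδ.eventually_lt_const (show 0 < ε / 4 by positivity)] with k hk hδk t ht
  obtain ⟨t', ht', htt'⟩ := mem_iUnion₂.1 (hN ht)
  rw [mem_ball, Real.dist_eq] at htt'
  have hee : dist (e t) (e t') ≤ |t - t'| := by
    simpa [Real.dist_eq] using hlip.dist_le_mul t t'
  have hcc : dist (c k t') (c k t) ≤ |t - t'| + δ k := by
    simpa only [abs_sub_comm] using hc k t' t
  linarith [dist_triangle4 (e t) (e t') (c k t') (c k t), hk t' ht', dist_comm (e t') (c k t')]

end CoarseLimit

lemma exists_lipschitzWith_of_isCoarse {T : Type*} [MetricSpace T] [CompactSpace T]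
    {g : T → ℝ≥0∞} (hg : LowerSemicontinuous g) {L : ℝ} {c : ℕ → ℝ → T} {δ : ℕ → ℝ}
    (hδ : Tendsto δ atTop (𝓝 0)) (hc : ∀ k, IsCoarse (δ k) (c k)) {x y : T}
    (hx : ∀ k, c k 0 = x) (hy : ∀ k, c k L = y) {A : ℝ≥0∞}
    (hA : ∀ k, ∫⁻ t in Icc 0 L, infConv g k (c k t) ≤ A) :
    ∃ e : ℝ → T, LipschitzWith 1 e ∧ e 0 = x ∧ e L = y ∧ ∫⁻ t in Icc 0 L, g (e t) ≤ A := by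
  let F : Ultrafilter ℕ := hyperfilter ℕ
  have hF : (F : Filter ℕ) ≤ atTop := Nat.hyperfilter_le_atTop
  have hlim (t : ℝ) : ∃ z, Tendsto (fun k => c k t) F (𝓝 z) := by
    obtain ⟨z, -, hz⟩ := isCompact_univ.ultrafilter_le_nhds (F.map fun k => c k t) (by simp)
    exact ⟨z, hz⟩
  choose e he using hlim
  have hδF := hδ.mono_left hF
  have hlip := lipschitzWith_of_tendsto_isCoarse hδF hc he
  refine ⟨e, hlip, tendsto_nhds_unique (he 0) (by simp [hx]),
    tendsto_nhds_unique (he L) (by simp [hy]), ?_⟩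
  simp_rw [← iSup_infConv hg]
  rw [lintegral_iSup (f := fun j t => infConv g j (e t))
    (fun j => ((upperSemicontinuous_infConv g j).comp hlip.continuous).measurable)
    (fun i j hij t => monotone_infConv g hij (e t))]
  exact iSup_le (setLIntegral_infConv_le measurableSet_Icc (by simp) hF
    (tendstoUniformlyOn_of_tendsto_isCoarse hδF hc he isCompact_Icc) hA)

lemma exists_isCoarse_of_coarseDist_lt {T : Type*} [PseudoMetricSpace T] {h : T → ℝ≥0∞}
    {δ l L : ℝ} {x y : T} (hl : 0 < l) (hL : 0 ≤ L) (hhy : h y ≤ ENNReal.ofReal l)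
    (hlt : coarseDist (fun z => ENNReal.ofReal l + h z) δ x y < ENNReal.ofReal (l * L)) :
    ∃ c : ℝ → T, IsCoarse δ c ∧ c 0 = x ∧ c L = y ∧
      ∫⁻ t in Icc 0 L, h (c t) ≤ ENNReal.ofReal (2 * l * L) := by
  simp only [coarseDist, iInf_lt_iff] at hlt
  obtain ⟨ℓ, c, ⟨hℓ, hc, hc0, hcℓ⟩, hint⟩ := hlt
  rw [lintegral_add_left measurable_const, setLIntegral_const, Real.volume_Icc, sub_zero,
    ← ENNReal.ofReal_mul hl.le] at hint
  have hℓL : ℓ ≤ L := by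
    have hmul := (ENNReal.ofReal_lt_ofReal_iff_of_nonneg (by positivity)).1
      (le_self_add.trans_lt hint)
    exact (lt_of_mul_lt_mul_left hmul hl.le).le
  refine ⟨fun t => c (min t ℓ), fun s t => (hc _ _).trans ?_, by simp [hℓ, hc0],
    by simp [hℓL, hcℓ], ?_⟩
  · have hmin : |min s ℓ - min t ℓ| ≤ |s - t| := by
      simpa using abs_min_sub_min_le_max s ℓ t ℓ
    linarith
  calc ∫⁻ t in Icc 0 L, h (c (min t ℓ))
      = (∫⁻ t in Icc 0 ℓ, h (c (min t ℓ))) + ∫⁻ t in Icc ℓ L, h (c (min t ℓ)) :=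
        (setLIntegral_Icc_add_Icc _ hℓ hℓL).symm
    _ = (∫⁻ t in Icc 0 ℓ, h (c t)) + ∫⁻ _ in Icc ℓ L, h y := by
        congr 1
        · exact setLIntegral_congr_fun measurableSet_Icc fun _ ht => by simp only [min_eq_left ht.2]
        · exact setLIntegral_congr_fun measurableSet_Icc fun _ ht => by
            simp only [min_eq_right ht.1, hcℓ]
    _ ≤ ENNReal.ofReal (l * L) + ENNReal.ofReal l * ENNReal.ofReal L := by
        rw [setLIntegral_const, Real.volume_Icc]
        gcongr
        · exact le_add_self.trans hint.le
        · linarith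
    _ = ENNReal.ofReal (2 * l * L) := by
        rw [← ENNReal.ofReal_mul hl.le, ← ENNReal.ofReal_add (by positivity) (by positivity)]
        ring_nf

/-- Points with small means of `g` are joined by curves whose length is at most this multiple of
their distance, see `exists_lipschitzWith_lintegral_le`. -/
def quasiconvexityConst (Cμ : ℝ≥0∞) (CP : ℝ) : ℝ := 2 * telescopingConst Cμ CP + 1

lemma quasiconvexityConst_pos (Cμ : ℝ≥0∞) (CP : ℝ) : 0 < quasiconvexityConst Cμ CP := by
  have := telescopingConst_nonneg Cμ CP
  unfold quasiconvexityConst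
  positivity

section Quasigeodesic

variable {T : Type*} [MetricSpace T] [MeasurableSpace T] [BorelSpace T] [CompactSpace T]
  [PreconnectedSpace T] {μ : Measure T} [IsFiniteMeasure μ] {Cμ : ℝ≥0∞} {CP lP : ℝ}
  (hdbl : IsDoubling μ Cμ) (hCμ : Cμ ≠ ⊤) (hPI : SupportsPoincare μ CP lP)
  {g : T → ℝ≥0∞} {x y : T} {l : ℝ}
  (hxy : 0 < dist x y) (hl : 0 < l) (hrd : 2 * dist x y < diam (univ : Set T))
  (hx : ∀ s ≤ 2 * max lP 1 * dist x y,
    ∫⁻ z in ball x s, g z ∂μ ≤ ENNReal.ofReal l * μ (ball x s))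
  (hy : ∀ s ≤ 2 * max lP 1 * dist x y,
    ∫⁻ z in ball y s, g z ∂μ ≤ ENNReal.ofReal l * μ (ball y s))

include hdbl hCμ hPI hxy hl hrd hx hy

lemma coarseDist_infConv_lt {δ : ℝ} (hδ : 0 < δ) (k : ℕ) :
    coarseDist (fun z => ENNReal.ofReal l + infConv g k z) δ x y <
      ENNReal.ofReal (l * (quasiconvexityConst Cμ CP * dist x y)) := by
  set h : T → ℝ≥0∞ := fun z => ENNReal.ofReal l + infConv g k z with hh
  have hM : ∀ z, h z ≤ (l.toNNReal + k : ℝ≥0) := fun z => by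
    push_cast
    exact add_le_add le_rfl (infConv_le_natCast g k z)
  have havg (w : T) (s : ℝ) (hw : ∫⁻ z in ball w s, g z ∂μ ≤ ENNReal.ofReal l * μ (ball w s)) :
      ∫⁻ z in ball w s, h z ∂μ ≤ ENNReal.ofReal (2 * l) * μ (ball w s) := by
    rw [hh, lintegral_add_left measurable_const, setLIntegral_const, two_mul,
      ENNReal.ofReal_add hl.le hl.le, add_mul]
    gcongr
    exact (lintegral_mono fun z => infConv_le g k z).trans hw
  have hcont := (locallyLipschitz_coarseDist hM hδ x).continuous
  have hle := hPI.abs_sub_le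
    (hcont.integrable_of_hasCompactSupport (HasCompactSupport.of_compactSpace _))
    (measurable_const.add (upperSemicontinuous_infConv g k).measurable)
    (isUpperGradient_coarseDist hδ.le x (coarseDist_ne_top hM hδ x)) hdbl hCμ
    hcont.continuousAt hcont.continuousAt hxy (by positivity : 0 ≤ 2 * l) hrd
    (fun s hs => havg x s (hx s hs)) (fun s hs => havg y s (hy s hs))
  rw [coarseDist_self h hδ.le, ENNReal.toReal_zero, zero_sub, abs_neg,
    abs_of_nonneg ENNReal.toReal_nonneg] at hle
  rw [ENNReal.lt_ofReal_iff_toReal_lt (coarseDist_ne_top hM hδ x y)]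
  refine hle.trans_lt ?_
  rw [quasiconvexityConst]
  linarith [mul_pos hl hxy]

lemma exists_lipschitzWith_lintegral_le (hg : LowerSemicontinuous g)
    (hgy : g y ≤ ENNReal.ofReal l) {L : ℝ} (hL : L = quasiconvexityConst Cμ CP * dist x y) :
    ∃ e : ℝ → T, LipschitzWith 1 e ∧ e 0 = x ∧ e L = y ∧
      ∫⁻ t in Icc 0 L, g (e t) ≤ ENNReal.ofReal (2 * l * L) := by
  have hL0 : 0 ≤ L := hL ▸ mul_nonneg (quasiconvexityConst_pos Cμ CP).le hxy.le
  choose c hc hc0 hcL hint using fun k : ℕ =>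
    exists_isCoarse_of_coarseDist_lt hl hL0 ((infConv_le g k y).trans hgy) (by
      rw [hL]
      exact coarseDist_infConv_lt hdbl hCμ hPI hxy hl hrd hx hy
        (Nat.one_div_pos_of_nat (α := ℝ) (n := k)) k)
  exact exists_lipschitzWith_of_isCoarse hg tendsto_one_div_add_atTop_nhds_zero_nat hc hc0 hcL hint

end Quasigeodesic

/-! ### A weak type estimate -/

/-- The union of the balls of radius at most `S` on which the mean value of `g` exceeds `l`. It is a
superlevel set of the noncentred maximal function of `g`, hence open. -/
def highSet {T : Type*} [PseudoMetricSpace T] [MeasurableSpace T] (μ : Measure T) (g : T → ℝ≥0∞)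
    (S l : ℝ) : Set T :=
  {x | ∃ (z : T) (s : ℝ), 0 < s ∧ s ≤ S ∧ x ∈ ball z s ∧
    ENNReal.ofReal l * μ (ball z s) < ∫⁻ w in ball z s, g w ∂μ}

section HighSet

variable {T : Type*} [PseudoMetricSpace T] [MeasurableSpace T] {μ : Measure T} {g : T → ℝ≥0∞}
  {S l : ℝ} {x : T}

lemma isOpen_highSet (μ : Measure T) (g : T → ℝ≥0∞) (S l : ℝ) : IsOpen (highSet μ g S l) :=
  isOpen_iff_forall_mem_open.2 fun _ ⟨z, s, hs, hsS, hx, h⟩ =>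
    ⟨ball z s, fun _ hw => ⟨z, s, hs, hsS, hw, h⟩, isOpen_ball, hx⟩

lemma antitone_highSet (μ : Measure T) (g : T → ℝ≥0∞) (S : ℝ) : Antitone (highSet μ g S) := by
  rintro l l' hl x ⟨z, s, hs, hsS, hx, h⟩
  exact ⟨z, s, hs, hsS, hx, lt_of_le_of_lt (by gcongr) h⟩

lemma lintegral_ball_le_of_notMem_highSet (hx : x ∉ highSet μ g S l) {s : ℝ} (hs : s ≤ S) :
    ∫⁻ w in ball x s, g w ∂μ ≤ ENNReal.ofReal l * μ (ball x s) := by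
  rcases le_or_gt s 0 with h0 | h0
  · simp [ball_eq_empty.2 h0]
  · by_contra! h
    exact hx ⟨x, s, h0, hs, mem_ball_self h0, h⟩

lemma le_of_notMem_highSet [OpensMeasurableSpace T]
    (hμ : ∀ r, 0 < r → 0 < μ (ball x r) ∧ μ (ball x r) < ⊤) (hg : LowerSemicontinuousAt g x)
    (hS : 0 < S) (hx : x ∉ highSet μ g S l) : g x ≤ ENNReal.ofReal l := by
  by_contra! h
  obtain ⟨b, hlb, hb⟩ := exists_between h
  obtain ⟨δ, hδ, hball⟩ := Metric.mem_nhds_iff.1 (hg b hb)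
  have ⟨hpos, hfin⟩ := hμ _ (lt_min hδ hS)
  have hmean : b * μ (ball x (min δ S)) ≤ ENNReal.ofReal l * μ (ball x (min δ S)) := by
    refine le_trans ?_ (lintegral_ball_le_of_notMem_highSet hx (min_le_right δ S))
    rw [← setLIntegral_const]
    exact setLIntegral_mono' measurableSet_ball fun w hw =>
      (hball (ball_subset_ball (min_le_left _ _) hw)).le
  exact hlb.not_ge ((ENNReal.mul_le_mul_iff_left hpos.ne' hfin.ne).1 hmean)

end HighSet

section Superlevel

variable {T : Type*} [MeasurableSpace T] {μ : Measure T} {g : T → ℝ≥0∞} {p : ℝ}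

lemma rpow_mul_measure_le_of_le_lintegral (hp : 1 ≤ p) {a : ℝ≥0∞} (ha : a ≠ ⊤) {B : Set T}
    (hB : μ B ≠ ⊤) (h : (a + a) * μ B ≤ ∫⁻ w in B, g w ∂μ) :
    a ^ p * μ B ≤ ∫⁻ w in B, {w | a < g w}.indicator (fun w => g w ^ p) w ∂μ := by
  have hlarge : a * μ B ≤ ∫⁻ w in B, {w | a < g w}.indicator g w ∂μ := by
    rw [← ENNReal.add_le_add_iff_left (ENNReal.mul_ne_top ha hB), ← add_mul]
    refine h.trans ?_
    rw [← setLIntegral_const, ← lintegral_add_left measurable_const]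
    refine lintegral_mono fun w => ?_
    by_cases hw : a < g w
    · simp [hw]
    · simp [hw, not_lt.1 hw]
  have hsplit (b : ℝ≥0∞) : b ^ p = b ^ (p - 1) * b := by
    nth_rw 3 [← ENNReal.rpow_one b]
    rw [← ENNReal.rpow_add_of_nonneg _ _ (by linarith) zero_le_one, sub_add_cancel]
  calc a ^ p * μ B = a ^ (p - 1) * (a * μ B) := by rw [hsplit, mul_assoc]
    _ ≤ a ^ (p - 1) * ∫⁻ w in B, {w | a < g w}.indicator g w ∂μ := by gcongr
    _ = ∫⁻ w in B, a ^ (p - 1) * {w | a < g w}.indicator g w ∂μ :=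
        (lintegral_const_mul' _ _ (ENNReal.rpow_ne_top_of_nonneg (by linarith) ha)).symm
    _ ≤ _ := by
        refine lintegral_mono fun w => ?_
        by_cases hw : a < g w
        · simp only [indicator, mem_ofPred_eq, hw, if_true, hsplit (g w)]
          gcongr
        · simp [hw]

lemma tendsto_measure_ofReal_half_lt (hg : AEMeasurable g μ) (hp : 0 < p)
    (hfin : ∫⁻ w, g w ^ p ∂μ ≠ ⊤) :
    Tendsto (fun l : ℝ => μ {w | ENNReal.ofReal (l / 2) < g w}) atTop (𝓝 0) := by
  have hhalf : Tendsto (fun l : ℝ => ENNReal.ofReal (l / 2) ^ p) atTop (𝓝 ⊤) := by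
    have hcont := (ENNReal.continuous_rpow_const (y := p)).tendsto ⊤
    rw [ENNReal.top_rpow_of_pos hp] at hcont
    exact hcont.comp (ENNReal.tendsto_ofReal_atTop.comp (tendsto_id.atTop_div_const (by norm_num)))
  have hquot := ENNReal.Tendsto.const_div hhalf (Or.inr hfin)
  rw [ENNReal.div_top] at hquot
  refine tendsto_of_tendsto_of_tendsto_of_le_of_le' tendsto_const_nhds hquot
    (Eventually.of_forall fun _ => zero_le) ?_
  filter_upwards [eventually_gt_atTop 0] with l hl
  have hpos : ENNReal.ofReal (l / 2) ^ p ≠ 0 :=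
    (ENNReal.rpow_pos (ENNReal.ofReal_pos.2 (half_pos hl)) ENNReal.ofReal_ne_top).ne'
  calc μ {w | ENNReal.ofReal (l / 2) < g w}
      ≤ μ {w | ENNReal.ofReal (l / 2) ^ p ≤ g w ^ p} :=
        measure_mono fun w hw => ENNReal.rpow_le_rpow (le_of_lt hw) hp.le
    _ ≤ (∫⁻ w, g w ^ p ∂μ) / ENNReal.ofReal (l / 2) ^ p :=
        meas_ge_le_lintegral_div (hg.pow_const p) hpos
          (ENNReal.rpow_ne_top_of_nonneg hp.le ENNReal.ofReal_ne_top)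

end Superlevel

section WeakType

variable {T : Type*} [MetricSpace T] [MeasurableSpace T] {μ : Measure T} {Cμ : ℝ≥0∞}
  {g : T → ℝ≥0∞} {p S l : ℝ}

lemma IsDoubling.measure_ball_ne_top (hdbl : IsDoubling μ Cμ) (x : T) {r : ℝ} (hr : 0 < r)
    (hrd : r < diam (univ : Set T)) : μ (ball x r) ≠ ⊤ := by
  obtain ⟨hpos, hle, hfin⟩ := hdbl x r hr hrd
  have hC : Cμ ≠ 0 := by
    rintro rfl
    simp [hpos.ne'] at hle
  exact (ENNReal.lt_top_of_mul_ne_top_right hfin.ne hC).ne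

lemma IsDoubling.measure_ball_eight_mul_le (hdbl : IsDoubling μ Cμ) (x : T) {r : ℝ} (hr : 0 < r)
    (hrd : 4 * r < diam (univ : Set T)) : μ (ball x (8 * r)) ≤ Cμ ^ 3 * μ (ball x r) := by
  have hdouble {s : ℝ} (hs : 0 < s) (hsr : s ≤ 4 * r) : μ (ball x (2 * s)) ≤ Cμ * μ (ball x s) :=
    (hdbl x s hs (hsr.trans_lt hrd)).2.1
  calc μ (ball x (8 * r)) = μ (ball x (2 * (2 * (2 * r)))) := by ring_nf
    _ ≤ Cμ * μ (ball x (2 * (2 * r))) := hdouble (by linarith) (by linarith)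
    _ ≤ Cμ * (Cμ * μ (ball x (2 * r))) := by gcongr; exact hdouble (by linarith) (by linarith)
    _ ≤ Cμ * (Cμ * (Cμ * μ (ball x r))) := by gcongr; exact hdouble hr (by linarith)
    _ = Cμ ^ 3 * μ (ball x r) := by ring

lemma exists_disjoint_balls_covering_highSet {T : Type*} [PseudoMetricSpace T]
    [TopologicalSpace.SeparableSpace T] [MeasurableSpace T] (μ : Measure T) (g : T → ℝ≥0∞)
    (S l : ℝ) :
    ∃ u : Set (T × ℝ), u.Countable ∧ u.PairwiseDisjoint (fun q => ball q.1 q.2) ∧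
      (∀ q ∈ u, 0 < q.2 ∧ q.2 ≤ S ∧
        ENNReal.ofReal l * μ (ball q.1 q.2) < ∫⁻ w in ball q.1 q.2, g w ∂μ) ∧
      highSet μ g S l ⊆ ⋃ q ∈ u, ball q.1 (8 * q.2) := by
  obtain ⟨u, hut, hdisj, hcover⟩ := Vitali.exists_disjoint_subfamily_covering_enlargement_closedBall
    {q : T × ℝ | 0 < q.2 ∧ q.2 ≤ S ∧
      ENNReal.ofReal l * μ (ball q.1 q.2) < ∫⁻ w in ball q.1 q.2, g w ∂μ}
    Prod.fst Prod.snd S (fun q hq => hq.2.1) 4 (by norm_num)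
  have hdisj' : u.PairwiseDisjoint fun q => ball q.1 q.2 :=
    hdisj.mono_on fun q _ => ball_subset_closedBall
  refine ⟨u, hdisj'.countable_of_isOpen (fun _ _ => isOpen_ball)
    fun q hq => ⟨q.1, mem_ball_self (hut hq).1⟩, hdisj', hut, ?_⟩
  rintro x ⟨z, s, hs, hsS, hx, h⟩
  obtain ⟨q, hq, hqs⟩ := hcover (z, s) ⟨hs, hsS, h⟩
  refine mem_biUnion hq (closedBall_subset_ball ?_ (hqs (ball_subset_closedBall hx)))
  linarith [(hut hq).1]

variable [OpensMeasurableSpace T] [TopologicalSpace.SeparableSpace T]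

lemma IsDoubling.rpow_mul_measure_highSet_le (hdbl : IsDoubling μ Cμ) (hg : Measurable g)
    (hp : 1 ≤ p) (hS : 4 * S < diam (univ : Set T)) (hl : 0 ≤ l) :
    ENNReal.ofReal (l / 2) ^ p * μ (highSet μ g S l) ≤
      Cμ ^ 3 * ∫⁻ w in {w | ENNReal.ofReal (l / 2) < g w}, g w ^ p ∂μ := by
  set a := ENNReal.ofReal (l / 2)
  have haa : ENNReal.ofReal l = a + a := by
    rw [← ENNReal.ofReal_add (by positivity) (by positivity), add_halves]
  obtain ⟨u, hcount, hdisj, hu, hcover⟩ := exists_disjoint_balls_covering_highSet μ g S l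
  calc a ^ p * μ (highSet μ g S l)
      ≤ a ^ p * ∑' q : u, μ (ball q.1.1 (8 * q.1.2)) := by
        gcongr
        exact (measure_mono hcover).trans (measure_biUnion_le μ hcount _)
    _ ≤ a ^ p * ∑' q : u, Cμ ^ 3 * μ (ball q.1.1 q.1.2) := by
        gcongr with q
        obtain ⟨hpos, hle, -⟩ := hu q.1 q.2
        exact hdbl.measure_ball_eight_mul_le _ hpos (by linarith)
    _ = Cμ ^ 3 * ∑' q : u, a ^ p * μ (ball q.1.1 q.1.2) := by
        rw [ENNReal.tsum_mul_left, ENNReal.tsum_mul_left]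
        ring
    _ ≤ Cμ ^ 3 * ∑' q : u, ∫⁻ w in ball q.1.1 q.1.2,
          {w | a < g w}.indicator (fun w => g w ^ p) w ∂μ := by
        gcongr with q
        obtain ⟨hpos, hle, hmean⟩ := hu q.1 q.2
        rw [haa] at hmean
        exact rpow_mul_measure_le_of_le_lintegral hp ENNReal.ofReal_ne_top
          (hdbl.measure_ball_ne_top _ hpos (by linarith)) hmean.le
    _ = Cμ ^ 3 * ∫⁻ w in ⋃ q ∈ u, ball q.1 q.2,
          {w | a < g w}.indicator (fun w => g w ^ p) w ∂μ := by
        rw [lintegral_biUnion hcount (fun _ _ => measurableSet_ball) hdisj]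
    _ ≤ Cμ ^ 3 * ∫⁻ w, {w | a < g w}.indicator (fun w => g w ^ p) w ∂μ := by
        gcongr
        exact Measure.restrict_le_self
    _ = _ := by rw [lintegral_indicator (measurableSet_lt measurable_const hg)]

lemma IsDoubling.tendsto_measure_highSet (hdbl : IsDoubling μ Cμ) (hCμ : Cμ ≠ ⊤)
    (hg : Measurable g) (hp : 1 ≤ p) (hS : 4 * S < diam (univ : Set T))
    (hfin : ∫⁻ w, g w ^ p ∂μ ≠ ⊤) :
    Tendsto (fun l : ℝ => ENNReal.ofReal l ^ p * μ (highSet μ g S l)) atTop (𝓝 0) := by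
  have hp0 : 0 < p := by linarith
  have hbound : Tendsto (fun l : ℝ => 2 ^ p * (Cμ ^ 3 *
      ∫⁻ w in {w | ENNReal.ofReal (l / 2) < g w}, g w ^ p ∂μ)) atTop (𝓝 0) := by
    have htail := tendsto_setLIntegral_zero hfin
      (tendsto_measure_ofReal_half_lt hg.aemeasurable hp0 hfin)
    simpa only [mul_zero] using ENNReal.Tendsto.const_mul
      (ENNReal.Tendsto.const_mul htail (Or.inr (ENNReal.pow_ne_top hCμ (n := 3))))
      (Or.inr (ENNReal.rpow_ne_top_of_nonneg hp0.le (ENNReal.ofNat_ne_top (n := 2))))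
  refine tendsto_of_tendsto_of_tendsto_of_le_of_le' tendsto_const_nhds hbound
    (Eventually.of_forall fun _ => zero_le) ?_
  filter_upwards [eventually_ge_atTop 0] with l hl
  have hscale : ENNReal.ofReal l ^ p = 2 ^ p * ENNReal.ofReal (l / 2) ^ p := by
    rw [← ENNReal.mul_rpow_of_nonneg _ _ hp0.le, ← ENNReal.ofReal_ofNat 2,
      ← ENNReal.ofReal_mul (by norm_num), mul_div_cancel₀ l two_ne_zero]
  rw [hscale, mul_assoc]
  exact mul_le_mul_right (hdbl.rpow_mul_measure_highSet_le hg hp hS hl) _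

end WeakType

/-! ### Deck transformations -/

/-- The homeomorphism `θ` generates a free action of `ℤ` whose orbits are the fibres of `π`. -/
structure IsDeckGenerator {T Tt : Type*} [TopologicalSpace Tt] (π : Tt → T) (θ : Tt ≃ₜ Tt) :
    Prop where
  proj_apply : ∀ x, π (θ x) = π x
  exists_zpow_eq : ∀ {x y}, π x = π y → ∃ k : ℤ, (θ ^ k) x = y
  eq_zero_of_zpow_eq : ∀ {k : ℤ} {x}, (θ ^ k) x = x → k = 0

lemma apply_zpow_eq {X Y : Type*} [TopologicalSpace X] {F : X → Y} {θ : X ≃ₜ X}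
    (hθ : ∀ x, F (θ x) = F x) (k : ℤ) (x : X) : F ((θ ^ k) x) = F x := by
  induction k generalizing x with
  | zero => rfl
  | succ k ih => rw [zpow_add_one, Homeomorph.mul_apply, ih, hθ]
  | pred k ih =>
    rw [zpow_sub_one, Homeomorph.mul_apply, ih, ← hθ (θ⁻¹ x), ← Homeomorph.mul_apply,
      mul_inv_cancel, Homeomorph.one_apply]

lemma IsDeckGenerator.proj_zpow {T Tt : Type*} [TopologicalSpace Tt] {π : Tt → T} {θ : Tt ≃ₜ Tt}
    (hθ : IsDeckGenerator π θ) (k : ℤ) (x : Tt) : π ((θ ^ k) x) = π x :=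
  apply_zpow_eq hθ.proj_apply k x

lemma eq_one_of_monodromyPerm_apply_eq {T Tt : Type*} [TopologicalSpace T] [TopologicalSpace Tt]
    [SimplyConnectedSpace Tt] {π : Tt → T} {x₀ : T} (hc : IsCoveringMap π)
    (a : FundamentalGroup T x₀) (e : π ⁻¹' {x₀}) (h : hc.monodromyPerm x₀ a e = e) : a = 1 := by
  obtain ⟨γ, rfl⟩ := Path.Homotopic.Quotient.mk_surjective a
  obtain ⟨e, rfl⟩ := e
  have hlift : γ 0 = π e := γ.source
  let Γ : Path e e := ⟨hc.liftPath γ e hlift, hc.liftPath_zero .., congrArg Subtype.val h⟩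
  have hγ : γ = Γ.map hc.continuous := by
    ext t
    exact (congr_fun (hc.liftPath_lifts γ e hlift) t).symm
  have hnull : Path.Homotopic Γ (Path.refl e) := SimplyConnectedSpace.paths_homotopic _ _
  rw [hγ]
  exact Path.Homotopic.Quotient.eq.2 (hnull.map ⟨π, hc.continuous⟩)

lemma IsGenerator.nontrivial {T : Type*} [TopologicalSpace T] {x₀ : T} {α₀ : Path x₀ x₀}
    (hgen : IsGenerator x₀ α₀) : Nontrivial T := by
  by_contra hT
  have := not_nontrivial_iff_subsingleton.1 hT
  have hpath (γ γ' : Path x₀ x₀) : γ = γ' := by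
    ext t
    exact Subsingleton.elim _ _
  have hone : (FundamentalGroup.fromPath (X := TopCat.of T) ⟦α₀⟧ :
      FundamentalGroup (TopCat.of T) x₀) = 1 := by
    rw [hpath α₀ (Path.refl x₀)]
    rfl
  exact zero_ne_one (hgen.1 (a₁ := 0) (a₂ := 1) (by simp only [hone, one_zpow]))

section Deck

variable {T Tt : Type*} [MetricSpace T] [MetricSpace Tt] {π : Tt → T} {x₀ : T} {α₀ : Path x₀ x₀}
  {τ : Tt → Tt}

lemma CoverSetup.pathConnectedSpace (hcov : CoverSetup π) : PathConnectedSpace T :=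
  have := hcov.2.2.2
  hcov.2.1.pathConnectedSpace hcov.1.continuous

variable (hdeck : IsDeck π x₀ α₀ τ) (hc : IsCoveringMap π)

include hdeck

lemma IsDeck.monodromy_eq {x : T} (η : Path x x₀) (e : π ⁻¹' {x}) :
    τ e = hc.monodromy (.mk (η.trans (α₀.trans η.symm))) e := by
  have h := hdeck.2.2 x (η.trans (α₀.trans η.symm)) ⟨η, Path.Homotopic.refl _⟩
    (hc.liftPath (η.trans (α₀.trans η.symm)).toContinuousMap e (by
      have h0 : π e = x := e.2
      simp [h0])) (fun t => congr_fun (hc.liftPath_lifts ..) t)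
  rw [hc.liftPath_zero] at h
  exact h

lemma IsDeck.monodromy_comm {x : T} (η : Path x x₀) (e e' : π ⁻¹' {x}) (he : τ e = e') :
    hc.monodromy (.mk η) e' =
      hc.monodromyPerm x₀ (FundamentalGroup.fromPath (.mk α₀)) (hc.monodromy (.mk η) e) := by
  have he' : e' = hc.monodromy (.mk (η.trans (α₀.trans η.symm))) e :=
    Subtype.ext (he.symm.trans (hdeck.monodromy_eq hc η e))
  rw [he', hc.coe_monodromyPerm]
  change _ = hc.monodromy (.mk α₀) _
  rw [← hc.monodromy_trans_apply, ← hc.monodromy_trans_apply]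
  congr 1
  simp only [Path.Homotopic.Quotient.mk_trans, Path.Homotopic.Quotient.mk_symm,
    Path.Homotopic.Quotient.trans_assoc, Path.Homotopic.Quotient.symm_trans,
    Path.Homotopic.Quotient.trans_refl]

include hc in
lemma IsDeck.bijective [PathConnectedSpace T] : Function.Bijective τ := by
  constructor
  · intro a b hab
    let η := PathConnectedSpace.somePath (π a) x₀
    have hba : π b = π a := by rw [← hdeck.2.1 a, hab, hdeck.2.1]
    have ha := hdeck.monodromy_comm hc η ⟨a, rfl⟩ ⟨τ a, hdeck.2.1 a⟩ rfl
    have hb := hdeck.monodromy_comm hc η ⟨b, hba⟩ ⟨τ a, hdeck.2.1 a⟩ hab.symm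
    exact congrArg Subtype.val
      ((hc.monodromy_bijective _).1 ((Equiv.injective _) (ha.symm.trans hb)))
  · intro b
    let η := PathConnectedSpace.somePath (π b) x₀
    obtain ⟨c, hcb⟩ := (hc.monodromyPerm x₀ (FundamentalGroup.fromPath (.mk α₀))).surjective
      (hc.monodromy (.mk η) ⟨b, rfl⟩)
    obtain ⟨a, rfl⟩ := (hc.monodromy_bijective (.mk η)).2 c
    have ha : π a = π b := a.2
    have h := hdeck.monodromy_comm hc η a ⟨τ a, (hdeck.2.1 a).trans ha⟩ rfl
    exact ⟨a, congrArg Subtype.val ((hc.monodromy_bijective _).1 (h.trans hcb))⟩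

include hc in
lemma IsDeck.exists_homeomorph [PathConnectedSpace T] : ∃ θ : Tt ≃ₜ Tt, ∀ x, θ x = τ x := by
  have hcomp : π ∘ τ = π := funext hdeck.2.1
  have hloc : IsLocalHomeomorph τ :=
    IsLocalHomeomorph.of_comp (g := π) (by rw [hcomp]; exact hc.isLocalHomeomorph)
      hc.isLocalHomeomorph hdeck.1
  exact ⟨(Equiv.ofBijective τ (hdeck.bijective hc)).toHomeomorphOfContinuousOpen hdeck.1
    hloc.isOpenMap, fun _ => rfl⟩

lemma IsDeck.monodromy_zpow {θ : Tt ≃ₜ Tt} (hθ : ∀ x, θ x = τ x) {x : T} (η : Path x x₀) (k : ℤ)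
    (e e' : π ⁻¹' {x}) (h : (θ ^ k) e.1 = e'.1) :
    hc.monodromy (.mk η) e' =
      (hc.monodromyPerm x₀ (FundamentalGroup.fromPath (.mk α₀)) ^ k) (hc.monodromy (.mk η) e) := by
  have hproj (k : ℤ) : π ((θ ^ k) e) = x :=
    (apply_zpow_eq (fun y => by rw [hθ, hdeck.2.1]) k _).trans e.2
  induction k generalizing e' with
  | zero => rw [Subtype.ext (show e.1 = e'.1 from h), zpow_zero, Equiv.Perm.one_apply]
  | succ k ih =>
    rw [add_comm, zpow_add, zpow_one, Homeomorph.mul_apply] at h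
    rw [hdeck.monodromy_comm hc η ⟨_, hproj k⟩ e' ((hθ _).symm.trans h), ih ⟨_, hproj k⟩ rfl,
      add_comm, zpow_add, zpow_one, Equiv.Perm.mul_apply]
  | pred k ih =>
    have hθe : θ e' = (θ ^ (-(k : ℤ))) e := by
      rw [← h, ← Homeomorph.mul_apply, ← zpow_one_add, add_sub_cancel]
    have hcomm := hdeck.monodromy_comm hc η e' ⟨_, hproj _⟩ ((hθ _).symm.trans hθe)
    rw [ih ⟨_, hproj _⟩ rfl] at hcomm
    rw [sub_eq_neg_add, zpow_add, zpow_neg_one, Equiv.Perm.mul_apply, hcomm]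
    exact (Equiv.symm_apply_apply _ _).symm

include hc in
lemma IsDeck.exists_zpow_eq [PathConnectedSpace Tt] [PathConnectedSpace T]
    (hgen : IsGenerator x₀ α₀) {θ : Tt ≃ₜ Tt} (hθ : ∀ x, θ x = τ x) {x y : Tt} (hxy : π x = π y) :
    ∃ k : ℤ, (θ ^ k) x = y := by
  let M := hc.monodromy (.mk (PathConnectedSpace.somePath (π x) x₀))
  have hx : π (M ⟨x, rfl⟩).1 = x₀ := (M ⟨x, rfl⟩).2
  have hy : π (M ⟨y, hxy.symm⟩).1 = x₀ := (M ⟨y, hxy.symm⟩).2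
  let Γ := PathConnectedSpace.somePath (M ⟨x, rfl⟩).1 (M ⟨y, hxy.symm⟩).1
  let loop : Path x₀ x₀ := (Γ.map hc.continuous).cast hx.symm hy.symm
  have hloop : hc.monodromy (.mk loop) (M ⟨x, rfl⟩) = M ⟨y, hxy.symm⟩ :=
    hc.monodromy_eq_of_map_eq (.mk Γ) rfl
  obtain ⟨k, hk⟩ := hgen.2 (FundamentalGroup.fromPath (X := TopCat.of T) (.mk loop))
  have hproj : π ((θ ^ k) x) = π x := apply_zpow_eq (fun z => by rw [hθ, hdeck.2.1]) k x
  have hM : M ⟨(θ ^ k) x, hproj⟩ = M ⟨y, hxy.symm⟩ := by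
    refine (hdeck.monodromy_zpow hc hθ _ k ⟨x, rfl⟩ ⟨(θ ^ k) x, hproj⟩ rfl).trans ?_
    rw [← map_zpow, ← hloop]
    exact congrArg (fun a => hc.monodromyPerm x₀ a (M ⟨x, rfl⟩)) hk
  exact ⟨k, congrArg Subtype.val ((hc.monodromy_bijective _).1 hM)⟩

include hc in
lemma IsDeck.eq_zero_of_zpow_eq [SimplyConnectedSpace Tt] [PathConnectedSpace T]
    (hgen : IsGenerator x₀ α₀) {θ : Tt ≃ₜ Tt} (hθ : ∀ x, θ x = τ x) {k : ℤ} {x : Tt}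
    (hk : (θ ^ k) x = x) : k = 0 := by
  have hfix := hdeck.monodromy_zpow hc hθ (PathConnectedSpace.somePath (π x) x₀) k
    ⟨x, rfl⟩ ⟨x, rfl⟩ hk
  rw [← map_zpow] at hfix
  refine hgen.1 ?_
  simp only [zpow_zero]
  exact eq_one_of_monodromyPerm_apply_eq hc _ _ hfix.symm

lemma IsDeck.exists_isDeckGenerator (hcov : CoverSetup π) (hgen : IsGenerator x₀ α₀) :
    ∃ θ : Tt ≃ₜ Tt, IsDeckGenerator π θ ∧ ∀ x, θ x = τ x := by
  have := hcov.pathConnectedSpace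
  have := hcov.2.2.2
  obtain ⟨θ, hθ⟩ := hdeck.exists_homeomorph hcov.1
  exact ⟨θ, ⟨fun x => by rw [hθ, hdeck.2.1], hdeck.exists_zpow_eq hcov.1 hgen hθ,
    hdeck.eq_zero_of_zpow_eq hcov.1 hgen hθ⟩, hθ⟩

end Deck

/-! ### Sheets of the covering -/

/-- An isometric section `sec` of `π` over a ball, with open and relatively compact image. The
values of `sec` outside the ball are junk. -/
structure Sheet {T Tt : Type*} [MetricSpace T] [MetricSpace Tt] (π : Tt → T) where
  center : T
  radius : ℝ
  sec : T → Tt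
  radius_pos : 0 < radius
  proj : ∀ z ∈ ball center radius, π (sec z) = z
  dist_sec : ∀ z ∈ ball center radius, ∀ w ∈ ball center radius,
    dist (sec z) (sec w) = dist z w
  isOpen_image : IsOpen (sec '' ball center radius)
  isCompact_closure : IsCompact (closure (sec '' ball center radius))

namespace Sheet

variable {T Tt : Type*} [MetricSpace T] [MetricSpace Tt] {π : Tt → T}

/-- The ball over which the section is defined. -/
def base (P : Sheet π) : Set T := ball P.center P.radius

/-- The image of the section. -/
def sheet (P : Sheet π) : Set Tt := P.sec '' P.base

variable (P : Sheet π)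

lemma isOpen_base : IsOpen P.base := isOpen_ball

lemma isOpen_sheet : IsOpen P.sheet := P.isOpen_image

lemma sec_mem {z : T} (hz : z ∈ P.base) : P.sec z ∈ P.sheet := mem_image_of_mem _ hz

lemma proj_sec {z : T} (hz : z ∈ P.base) : π (P.sec z) = z := P.proj z hz

lemma proj_mem {x : Tt} (hx : x ∈ P.sheet) : π x ∈ P.base := by
  obtain ⟨z, hz, rfl⟩ := hx
  rwa [P.proj_sec hz]

lemma sec_proj {x : Tt} (hx : x ∈ P.sheet) : P.sec (π x) = x := by
  obtain ⟨z, hz, rfl⟩ := hx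
  rw [P.proj_sec hz]

lemma lipschitzOnWith_sec : LipschitzOnWith 1 P.sec P.base :=
  LipschitzOnWith.of_dist_le_mul fun z hz w hw => by
    rw [P.dist_sec z hz w hw, NNReal.coe_one, one_mul]

lemma encard_fiber_inter_sheet (A : Set Tt) (x : T) :
    ((π ⁻¹' {x} ∩ (A ∩ P.sheet)).encard : ℝ≥0∞) =
      (P.base ∩ P.sec ⁻¹' A).indicator 1 x := by
  by_cases hx : x ∈ P.base ∩ P.sec ⁻¹' A
  · have h : π ⁻¹' {x} ∩ (A ∩ P.sheet) = {P.sec x} := by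
      ext a
      simp only [mem_inter_iff, mem_preimage, mem_singleton_iff]
      constructor
      · rintro ⟨rfl, -, ha⟩
        exact (P.sec_proj ha).symm
      · rintro rfl
        exact ⟨P.proj_sec hx.1, hx.2, P.sec_mem hx.1⟩
    rw [h, indicator_of_mem hx, encard_singleton, Pi.one_apply,
      ENat.toENNReal_one]
  · have h : π ⁻¹' {x} ∩ (A ∩ P.sheet) = ∅ := by
      refine eq_empty_of_forall_notMem fun a ⟨h1, h2, h3⟩ => hx ?_
      obtain rfl : π a = x := h1
      refine ⟨P.proj_mem h3, ?_⟩
      rwa [mem_preimage, P.sec_proj h3]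
    rw [h, indicator_of_notMem hx, encard_empty, ENat.toENNReal_zero]

section Measure

variable [MeasurableSpace T] [BorelSpace T] [MeasurableSpace Tt] [BorelSpace Tt]
  {μ : Measure T} {μt : Measure Tt}

lemma measurableSet_base_inter_preimage {A : Set Tt} (hA : MeasurableSet A) :
    MeasurableSet (P.base ∩ P.sec ⁻¹' A) := by
  have h := MeasurableSet.subtype_image P.isOpen_base.measurableSet
    (P.lipschitzOnWith_sec.continuousOn.domRestrict.measurable hA)
  convert h using 1
  ext x
  simp [and_comm]

lemma aemeasurable_sec : AEMeasurable P.sec (μ.restrict P.base) :=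
  P.lipschitzOnWith_sec.continuousOn.aemeasurable P.isOpen_base.measurableSet

lemma map_restrict (hμt : IsLiftedMeasure π μ μt) :
    (μ.restrict P.base).map P.sec = μt.restrict P.sheet := by
  ext A hA
  rw [Measure.map_apply_of_aemeasurable P.aemeasurable_sec hA,
    Measure.restrict_apply' P.isOpen_base.measurableSet, Measure.restrict_apply hA,
    hμt _ (hA.inter P.isOpen_sheet.measurableSet)]
  simp_rw [P.encard_fiber_inter_sheet A]
  rw [lintegral_indicator_one (P.measurableSet_base_inter_preimage hA), inter_comm]

lemma setLIntegral_sheet (hμt : IsLiftedMeasure π μ μt) {F : Tt → ℝ≥0∞} (hF : Measurable F) :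
    ∫⁻ x in P.sheet, F x ∂μt = ∫⁻ z in P.base, F (P.sec z) ∂μ := by
  rw [← P.map_restrict hμt, lintegral_map' hF.aemeasurable P.aemeasurable_sec]

lemma setLIntegral_sheet_comp (hμt : IsLiftedMeasure π μ μt) (hπ : Continuous π)
    {F : T → ℝ≥0∞} (hF : Measurable F) :
    ∫⁻ x in P.sheet, F (π x) ∂μt = ∫⁻ z in P.base, F z ∂μ := by
  refine (P.setLIntegral_sheet hμt (hF.comp hπ.measurable)).trans ?_
  exact setLIntegral_congr_fun P.isOpen_base.measurableSet fun z hz =>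
    congrArg F (P.proj_sec hz)

lemma measure_sheet_inter_preimage_le (hμt : IsLiftedMeasure π μ μt) (hπ : Continuous π)
    {A : Set T} (hA : MeasurableSet A) : μt (P.sheet ∩ π ⁻¹' A) ≤ μ A := by
  have h := P.setLIntegral_sheet_comp hμt hπ (measurable_one.indicator hA)
  rw [← lintegral_indicator_one hA, inter_comm,
    ← Measure.restrict_apply (hπ.measurable hA),
    ← lintegral_indicator_one (hπ.measurable hA)]
  exact h.le.trans (setLIntegral_le_lintegral _ _)

lemma ae_sec (hμt : IsLiftedMeasure π μ μt) {q : Tt → Prop} (h : ∀ᵐ x ∂μt, q x) :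
    ∀ᵐ z ∂μ.restrict P.base, q (P.sec z) := by
  refine ae_of_ae_map P.aemeasurable_sec ?_
  rw [P.map_restrict hμt]
  exact ae_restrict_of_ae h

end Measure

end Sheet

section LiftedMeasure

variable {T Tt : Type*} [MetricSpace T] [MetricSpace Tt] {π : Tt → T}

lemma IsLocalIsometry.exists_sheet [ProperSpace T] (hloc : IsLocalIsometry π)
    (hπ : IsLocalHomeomorph π) (x : Tt) : ∃ P : Sheet π, P.center = π x := by
  obtain ⟨e, hxe, he⟩ := hπ x
  obtain ⟨ε, hε, hiso⟩ := hloc x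
  have hx : e.symm (π x) = x := by rw [he, e.left_inv hxe]
  have hmem : π x ∈ e.target := by rw [he]; exact e.map_source hxe
  have hnhds : e.target ∩ e.symm ⁻¹' ball x ε ∈ 𝓝 (π x) :=
    inter_mem (e.open_target.mem_nhds hmem)
      ((e.continuousAt_symm hmem).preimage_mem_nhds (by rw [hx]; exact ball_mem_nhds x hε))
  obtain ⟨R, hR, hsub⟩ := Metric.nhds_basis_closedBall.mem_iff.1 hnhds
  have hsub' : ball (π x) R ⊆ e.target ∩ e.symm ⁻¹' ball x ε := ball_subset_closedBall.trans hsub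
  have hproj : ∀ z ∈ ball (π x) R, π (e.symm z) = z := fun z hz => by
    rw [he, e.right_inv (hsub' hz).1]
  have hK : IsCompact (e.symm '' closedBall (π x) R) :=
    (isCompact_closedBall (π x) R).image_of_continuousOn
      (e.continuousOn_symm.mono fun z hz => (hsub hz).1)
  exact ⟨{  center := π x
            radius := R
            sec := e.symm
            radius_pos := hR
            proj := hproj
            dist_sec := fun z hz w hw => by
              rw [← hiso _ (hsub' hz).2 _ (hsub' hw).2, hproj z hz, hproj w hw]
            isOpen_image :=
              e.symm.isOpen_image_of_subset_source isOpen_ball fun z hz => (hsub' hz).1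
            isCompact_closure := hK.of_isClosed_subset isClosed_closure
              (closure_minimal (image_mono ball_subset_closedBall) hK.isClosed) }, rfl⟩

lemma IsDeckGenerator.exists_finset_subset_biUnion {ι : Type*} {θ : Tt ≃ₜ Tt}
    (hθ : IsDeckGenerator π θ) (P : ι → Sheet π) (hcover : ∀ z, ∃ i, z ∈ (P i).base)
    {U : Set Tt} (hU : IsCompact (closure U)) :
    ∃ J : Finset (ι × ℤ), U ⊆ ⋃ j ∈ J, (θ ^ j.2) '' (P j.1).sheet := by
  obtain ⟨J, hJ⟩ := hU.elim_finite_subcover (fun j : ι × ℤ => (θ ^ j.2) '' (P j.1).sheet)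
    (fun j => (θ ^ j.2).isOpenMap _ (P j.1).isOpen_sheet) (fun x _ => by
      obtain ⟨i, hi⟩ := hcover (π x)
      obtain ⟨k, hk⟩ := hθ.exists_zpow_eq ((P i).proj_sec hi)
      exact mem_iUnion.2 ⟨(i, k), _, (P i).sec_mem hi, hk⟩)
  exact ⟨J, subset_closure.trans hJ⟩

variable [MeasurableSpace T] [MeasurableSpace Tt] [BorelSpace Tt]
  {μ : Measure T} {μt : Measure Tt}

lemma IsLiftedMeasure.measure_preimage_eq_zero [BorelSpace T]
    (hμt : IsLiftedMeasure π μ μt) (hπ : Continuous π) {N : Set T} (hN : MeasurableSet N)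
    (h0 : μ N = 0) : μt (π ⁻¹' N) = 0 := by
  rw [hμt _ (hπ.measurable hN), ← lintegral_zero (μ := μ)]
  refine lintegral_congr_ae ?_
  filter_upwards [measure_eq_zero_iff_ae_notMem.1 h0] with x hx
  have h : π ⁻¹' {x} ∩ π ⁻¹' N = ∅ :=
    eq_empty_of_forall_notMem fun a ⟨h1, h2⟩ => hx (by
      obtain rfl : π a = x := h1
      exact h2)
  rw [h, encard_empty, ENat.toENNReal_zero]

lemma IsLiftedMeasure.measurePreserving (hμt : IsLiftedMeasure π μ μt) (θ : Tt ≃ₜ Tt)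
    (hθ : ∀ x, π (θ x) = π x) : MeasurePreserving θ μt μt := by
  refine ⟨θ.continuous.measurable, ?_⟩
  ext A hA
  rw [Measure.map_apply θ.continuous.measurable hA, hμt _ hA,
    hμt _ (θ.continuous.measurable hA)]
  refine lintegral_congr fun x => ?_
  have h : π ⁻¹' {x} ∩ θ ⁻¹' A = θ ⁻¹' (π ⁻¹' {x} ∩ A) := by
    ext a
    simp [hθ]
  rw [h, ← θ.image_symm, θ.symm.injective.encard_image]

lemma IsLiftedMeasure.exists_setLIntegral_le {ι : Type*} [Fintype ι]
    (hμt : IsLiftedMeasure π μ μt) {θ : Tt ≃ₜ Tt} (hθ : IsDeckGenerator π θ) (P : ι → Sheet π)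
    (hcover : ∀ z, ∃ i, z ∈ (P i).base) {U : Set Tt} (hU : IsCompact (closure U)) :
    ∃ M : ℝ≥0∞, M < ⊤ ∧ ∀ F : Tt → ℝ≥0∞, (∀ᵐ x ∂μt, ∀ k : ℤ, F ((θ ^ k) x) = F x) →
      ∫⁻ x in U, F x ∂μt ≤ M * ∑ i, ∫⁻ x in (P i).sheet, F x ∂μt := by
  obtain ⟨J, hJ⟩ := hθ.exists_finset_subset_biUnion P hcover hU
  refine ⟨J.card, ENNReal.natCast_lt_top _, fun F hF => ?_⟩
  calc ∫⁻ x in U, F x ∂μt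
      ≤ ∫⁻ x in ⋃ j : J, (θ ^ j.1.2) '' (P j.1.1).sheet, F x ∂μt := by
        refine lintegral_mono_set fun x hx => ?_
        obtain ⟨j, hj, h⟩ := mem_iUnion₂.1 (hJ hx)
        exact mem_iUnion.2 ⟨⟨j, hj⟩, h⟩
    _ ≤ ∑ j ∈ J, ∫⁻ x in (θ ^ j.2) '' (P j.1).sheet, F x ∂μt := by
        refine (lintegral_iUnion_le _ _).trans_eq ?_
        rw [tsum_fintype]
        exact Finset.sum_coe_sort J fun j => ∫⁻ x in (θ ^ j.2) '' (P j.1).sheet, F x ∂μt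
    _ ≤ ∑ j ∈ J, ∑ i, ∫⁻ x in (P i).sheet, F x ∂μt := by
        refine Finset.sum_le_sum fun j _ => ?_
        rw [← (hμt.measurePreserving (θ ^ j.2) (hθ.proj_zpow j.2)).setLIntegral_comp_emb
          (θ ^ j.2).measurableEmbedding,
          lintegral_congr_ae (ae_restrict_of_ae (hF.mono fun x hx => hx j.2))]
        exact Finset.single_le_sum (f := fun i => ∫⁻ x in (P i).sheet, F x ∂μt)
          (fun _ _ => zero_le) (Finset.mem_univ j.1)
    _ = J.card * ∑ i, ∫⁻ x in (P i).sheet, F x ∂μt := by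
        rw [Finset.sum_const, nsmul_eq_mul]

end LiftedMeasure

/-! ### Estimates on a single sheet -/

lemma exists_lowerSemicontinuous_rpow {X : Type*} [TopologicalSpace X] [MeasurableSpace X]
    [BorelSpace X] {μ : Measure X} [μ.WeaklyRegular] {p : ℝ} (hp : 0 < p)
    {g : X → ℝ≥0∞} (hg : Measurable g) (hfin : ∫⁻ x, g x ^ p ∂μ < ⊤) :
    ∃ G : X → ℝ≥0∞, LowerSemicontinuous G ∧ (∀ x, g x ≤ G x) ∧ ∫⁻ x, G x ^ p ∂μ < ⊤ := by
  obtain ⟨G, hgG, hG, hint⟩ := exists_le_lowerSemicontinuous_lintegral_ge μ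
    (fun x => g x ^ p) (hg.pow_const p) one_ne_zero
  have hGp : ∀ x, (G x ^ (1 / p)) ^ p = G x := fun x => by
    rw [← ENNReal.rpow_mul, one_div_mul_cancel hp.ne', ENNReal.rpow_one]
  refine ⟨fun x => G x ^ (1 / p), ?_, fun x => ?_, ?_⟩
  · exact ENNReal.continuous_rpow_const.comp_lowerSemicontinuous hG
      (ENNReal.monotone_rpow_of_nonneg (by positivity))
  · rw [← ENNReal.rpow_le_rpow_iff hp, hGp]
    exact hgG x
  · simp_rw [hGp]
    exact hint.trans_lt (ENNReal.add_lt_top.2 ⟨hfin, ENNReal.one_lt_top⟩)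

lemma Sheet.exists_gradient {T Tt : Type*} [MetricSpace T] [MetricSpace Tt] {π : Tt → T}
    [MeasurableSpace T] [BorelSpace T] [MeasurableSpace Tt] [BorelSpace Tt]
    {μ : Measure T} {μt : Measure Tt} [IsFiniteMeasure μ] (P : Sheet π)
    (hμt : IsLiftedMeasure π μ μt) {p : ℝ} (hp : 1 ≤ p) {f : Tt → ℝ} (hf : MemNloc μt p f) :
    ∃ g : T → ℝ≥0∞, LowerSemicontinuous g ∧ ∫⁻ x, g x ^ p ∂μ < ⊤ ∧
      IsUpperGradientOn P.base (f ∘ P.sec) g := by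
  have hp0 : 0 < p := by linarith
  obtain ⟨ρ, hρ, hwug, hfin⟩ := (hf P.sheet P.isOpen_sheet P.isCompact_closure).2
  obtain ⟨H, hH, hHfin, hug⟩ := hwug.exists_isUpperGradientOn hp hρ hfin
  have hmeas : Measurable (P.base.indicator (H ∘ P.sec)) := fun A hA => by
    rw [indicator_preimage, Set.ite]
    refine MeasurableSet.union ?_ ((measurable_zero hA).diff P.isOpen_base.measurableSet)
    rw [inter_comm]
    exact P.measurableSet_base_inter_preimage (hH hA)
  have hint : ∫⁻ x, P.base.indicator (H ∘ P.sec) x ^ p ∂μ < ⊤ := by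
    rw [P.setLIntegral_sheet hμt (hH.pow_const p)] at hHfin
    rw [← lintegral_indicator P.isOpen_base.measurableSet] at hHfin
    refine lt_of_eq_of_lt (lintegral_congr fun x => ?_) hHfin
    by_cases hx : x ∈ P.base
    · simp [hx]
    · simp [hx, hp0]
  obtain ⟨G, hG, hle, hGfin⟩ := exists_lowerSemicontinuous_rpow hp0 hmeas hint
  refine ⟨G, hG, hGfin, fun γ hγ => ?_⟩
  have hlip : LipschitzOnWith 1 (P.sec ∘ γ.toFun) (Icc γ.a γ.b) := by
    have := P.lipschitzOnWith_sec.comp γ.lip hγ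
    rwa [one_mul] at this
  refine (hug ⟨γ.a, γ.b, γ.hab, P.sec ∘ γ.toFun, hlip⟩ fun t ht => P.sec_mem (hγ t ht)).trans ?_
  refine setLIntegral_mono' measurableSet_Icc fun t ht => ?_
  refine le_trans ?_ (hle _)
  rw [indicator_of_mem (hγ t ht)]
  rfl

lemma exists_pos_radius {D S K M R : ℝ} (hD : 0 < D) (hS : 0 < S) (hK : 0 ≤ K) (hM : 0 ≤ M)
    (hR : 0 < R) : ∃ r > 0, 2 * (2 * r) < D ∧ M * (2 * r) ≤ S ∧ r + K * (2 * r) < R := by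
  obtain ⟨r, hr, h⟩ := exists_pos_mul_lt (lt_min hD (lt_min hS hR)) (4 + 2 * M + (1 + 2 * K))
  obtain ⟨hD, hS, hR⟩ : _ ∧ _ ∧ _ := by simpa only [lt_inf_iff] using h
  have hMr := mul_nonneg hM hr.le
  have hKr := mul_nonneg hK hr.le
  exact ⟨r, hr, by linarith, by linarith, by linarith⟩

lemma IsUpperGradientOn.lipschitzOnWith_diff_highSet {T : Type*} [MetricSpace T]
    [MeasurableSpace T] [BorelSpace T] [CompactSpace T] [PreconnectedSpace T] {μ : Measure T}
    [IsFiniteMeasure μ] {Cμ : ℝ≥0∞} {CP lP : ℝ} (hdbl : IsDoubling μ Cμ) (hCμ : Cμ ≠ ⊤)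
    (hPI : SupportsPoincare μ CP lP) {g : T → ℝ≥0∞} (hg : LowerSemicontinuous g)
    {c : T} {R r S : ℝ} (hS : 0 < S)
    (hrD : 2 * (2 * r) < diam (univ : Set T)) (hrS : 2 * max lP 1 * (2 * r) ≤ S)
    (hrR : r + quasiconvexityConst Cμ CP * (2 * r) < R) {F : T → ℝ}
    (hF : IsUpperGradientOn (ball c R) F g) {l : ℝ} (hl : 0 < l) :
    LipschitzOnWith (Real.toNNReal (2 * l * quasiconvexityConst Cμ CP)) F
      (ball c r \ highSet μ g S l) := by
  set K := quasiconvexityConst Cμ CP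
  have hK0 : 0 < K := quasiconvexityConst_pos Cμ CP
  have hM : 0 < 2 * max lP 1 := by positivity
  refine LipschitzOnWith.of_dist_le_mul fun x ⟨hx, hxN⟩ y ⟨hy, hyN⟩ => ?_
  rw [Real.coe_toNNReal _ (by positivity)]
  rcases eq_or_ne x y with rfl | hne
  · simp
  have hxy : 0 < dist x y := dist_pos.2 hne
  have hxy2 : dist x y < 2 * r := by
    have := dist_triangle_right x y c
    rw [mem_ball] at hx hy
    linarith
  have havg : ∀ {s}, s ≤ 2 * max lP 1 * dist x y → s ≤ S := fun hs =>
    hs.trans (((mul_le_mul_iff_right₀ hM).2 hxy2.le).trans hrS)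
  obtain ⟨e, he, he0, heL, hint⟩ := exists_lipschitzWith_lintegral_le hdbl hCμ hPI hxy hl
    (by linarith) (fun s hs => lintegral_ball_le_of_notMem_highSet hxN (havg hs))
    (fun s hs => lintegral_ball_le_of_notMem_highSet hyN (havg hs)) hg
    (le_of_notMem_highSet (hPI.1 y) (hg y) hS hyN) rfl
  have hin : ∀ t ∈ Icc 0 (K * dist x y), e t ∈ ball c R := fun t ht => by
    have h1 : dist (e t) x ≤ t := by
      have := he.dist_le_mul t 0
      rwa [he0, NNReal.coe_one, one_mul, Real.dist_eq, sub_zero, abs_of_nonneg ht.1] at this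
    have h2 := dist_triangle (e t) x c
    have h3 : K * dist x y ≤ K * (2 * r) := (mul_le_mul_iff_right₀ hK0).2 hxy2.le
    rw [mem_ball] at hx ⊢
    linarith [ht.2]
  have h := hF ⟨0, K * dist x y, by positivity, e, he.lipschitzOnWith⟩ hin
  change edist (F (e 0)) (F (e (K * dist x y))) ≤ ∫⁻ t in Icc 0 (K * dist x y), g (e t) at h
  rw [he0, heL, edist_dist] at h
  have := (ENNReal.ofReal_le_ofReal_iff (by positivity)).1 (h.trans hint)
  linarith

/-! ### Gluing local functions equivariantly -/

/-- Sheets whose bases still cover the base space after shrinking the radius of the `i`-th one to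
`inner i`, together with a generator `θ` of the deck transformations. -/
structure Atlas {T Tt : Type*} [MetricSpace T] [MetricSpace Tt] (π : Tt → T) (θ : Tt ≃ₜ Tt)
    (ι : Type*) where
  chart : ι → Sheet π
  inner : ι → ℝ
  isDeckGenerator : IsDeckGenerator π θ
  continuous_proj : Continuous π
  inner_pos : ∀ i, 0 < inner i
  inner_lt : ∀ i, inner i < (chart i).radius
  exists_mem_ball : ∀ z, ∃ i, z ∈ ball (chart i).center (inner i)

lemma abs_div_sum_sub_div_sum_le {ι : Type*} [Fintype ι] {a b : ι → ℝ} {d m : ℝ}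
    (hb : ∀ i, 0 ≤ b i) (hm : 0 < m) (hma : m ≤ ∑ i, a i) (hb0 : 0 < ∑ i, b i)
    (hab : ∀ i, |a i - b i| ≤ d) (i : ι) :
    |a i / ∑ j, a j - b i / ∑ j, b j| ≤ (1 + Fintype.card ι) * d / m := by
  have ha0 : 0 < ∑ j, a j := hm.trans_le hma
  have hd : 0 ≤ d := (abs_nonneg _).trans (hab i)
  have hsum : |∑ j, b j - ∑ j, a j| ≤ Fintype.card ι * d := by
    rw [← Finset.sum_sub_distrib, ← nsmul_eq_mul]
    exact (Finset.abs_sum_le_sum_abs _ _).trans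
      (Finset.sum_le_card_nsmul _ _ _ fun j _ => (abs_sub_comm _ _).trans_le (hab j))
  have hle_one : b i / ∑ j, b j ≤ 1 := (div_le_one hb0).2
    (Finset.single_le_sum (fun j _ => hb j) (Finset.mem_univ i))
  have heq : a i / ∑ j, a j - b i / ∑ j, b j =
      ((a i - b i) + (b i / ∑ j, b j) * (∑ j, b j - ∑ j, a j)) / ∑ j, a j := by
    field_simp
    ring
  rw [heq, abs_div, abs_of_pos ha0]
  refine div_le_div₀ (by positivity) ?_ hm hma
  refine (abs_add_le _ _).trans ?_
  rw [abs_mul, abs_of_nonneg (div_nonneg (hb i) hb0.le), add_mul, one_mul]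
  exact add_le_add (hab i) ((mul_le_of_le_one_left (abs_nonneg _) hle_one).trans hsum)

namespace Atlas

variable {T Tt : Type*} [MetricSpace T] [MetricSpace Tt] {π : Tt → T} {θ : Tt ≃ₜ Tt} {ι : Type*}
  (𝒜 : Atlas π θ ι)

/-- The shrunk base of the `i`-th sheet. -/
def core (i : ι) : Set T := ball (𝒜.chart i).center (𝒜.inner i)

lemma closedBall_subset_base (i : ι) :
    closedBall (𝒜.chart i).center (𝒜.inner i) ⊆ (𝒜.chart i).base :=
  closedBall_subset_ball (𝒜.inner_lt i)

lemma core_subset_base (i : ι) : 𝒜.core i ⊆ (𝒜.chart i).base :=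
  ball_subset_closedBall.trans (𝒜.closedBall_subset_base i)

/-- The index of the translate of the `i`-th sheet which contains `x`; junk unless `π x` lies in
the base of that sheet. -/
def idx (i : ι) (x : Tt) : ℤ :=
  Classical.epsilon fun k : ℤ => (θ ^ k) ((𝒜.chart i).sec (π x)) = x

lemma zpow_idx {i : ι} {x : Tt} (hx : π x ∈ (𝒜.chart i).base) :
    (θ ^ 𝒜.idx i x) ((𝒜.chart i).sec (π x)) = x :=
  Classical.epsilon_spec (𝒜.isDeckGenerator.exists_zpow_eq ((𝒜.chart i).proj_sec hx))

lemma idx_eq {i : ι} {x : Tt} {k : ℤ} (hx : π x ∈ (𝒜.chart i).base)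
    (h : (θ ^ k) ((𝒜.chart i).sec (π x)) = x) : 𝒜.idx i x = k := by
  have hfix : (θ ^ (-k + 𝒜.idx i x)) ((𝒜.chart i).sec (π x)) = (𝒜.chart i).sec (π x) := by
    rw [zpow_add, Homeomorph.mul_apply, 𝒜.zpow_idx hx]
    nth_rw 1 [← h]
    rw [← Homeomorph.mul_apply, ← zpow_add, neg_add_cancel, zpow_zero, Homeomorph.one_apply]
  have := 𝒜.isDeckGenerator.eq_zero_of_zpow_eq hfix
  lia

lemma idx_zpow {i : ι} {x : Tt} (k : ℤ) (hx : π x ∈ (𝒜.chart i).base) :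
    𝒜.idx i ((θ ^ k) x) = 𝒜.idx i x + k := by
  refine 𝒜.idx_eq (by rwa [𝒜.isDeckGenerator.proj_zpow]) ?_
  rw [𝒜.isDeckGenerator.proj_zpow, add_comm, zpow_add, Homeomorph.mul_apply, 𝒜.zpow_idx hx]

lemma eventually_idx_eq {i : ι} {x : Tt} (hx : π x ∈ (𝒜.chart i).base) :
    ∀ᶠ y in 𝓝 x, π y ∈ (𝒜.chart i).base ∧ 𝒜.idx i y = 𝒜.idx i x := by
  have hopen : IsOpen ((θ ^ 𝒜.idx i x) '' (𝒜.chart i).sheet) :=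
    (θ ^ 𝒜.idx i x).isOpenMap _ (𝒜.chart i).isOpen_sheet
  filter_upwards [hopen.mem_nhds ⟨_, (𝒜.chart i).sec_mem hx, 𝒜.zpow_idx hx⟩]
  rintro _ ⟨y, hy, rfl⟩
  have hb : π ((θ ^ 𝒜.idx i x) y) ∈ (𝒜.chart i).base := by
    rw [𝒜.isDeckGenerator.proj_zpow]
    exact (𝒜.chart i).proj_mem hy
  refine ⟨hb, 𝒜.idx_eq hb ?_⟩
  rw [𝒜.isDeckGenerator.proj_zpow, (𝒜.chart i).sec_proj hy]

/-- The union of the sheets. -/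
def domain : Set Tt := ⋃ i, (𝒜.chart i).sheet

lemma exists_zpow_mem_domain (x : Tt) : ∃ k : ℤ, (θ ^ k) x ∈ 𝒜.domain := by
  obtain ⟨i, hi⟩ := 𝒜.exists_mem_ball (π x)
  refine ⟨-𝒜.idx i x, mem_iUnion.2 ⟨i, ?_⟩⟩
  have h := 𝒜.zpow_idx (𝒜.core_subset_base i hi)
  nth_rw 2 [← h]
  rw [← Homeomorph.mul_apply, ← zpow_add, neg_add_cancel, zpow_zero]
  exact (𝒜.chart i).sec_mem (𝒜.core_subset_base i hi)

lemma isCompact_closure_domain [Finite ι] : IsCompact (closure 𝒜.domain) := by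
  rw [domain, closure_iUnion_of_finite]
  exact isCompact_iUnion fun i => (𝒜.chart i).isCompact_closure

lemma exists_abs_idx_le [Finite ι] : ∃ N : ℝ, 0 ≤ N ∧ ∀ x ∈ 𝒜.domain, ∀ i,
    π x ∈ closedBall (𝒜.chart i).center (𝒜.inner i) → |(𝒜.idx i x : ℝ)| ≤ N := by
  have h : ∀ i, ∃ N : ℝ, ∀ x ∈ closure 𝒜.domain ∩
      π ⁻¹' closedBall (𝒜.chart i).center (𝒜.inner i), |(𝒜.idx i x : ℝ)| ≤ N := fun i => by
    refine (𝒜.isCompact_closure_domain.inter_right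
      (isClosed_closedBall.preimage 𝒜.continuous_proj)).exists_bound_of_continuousOn
      (f := fun x => (𝒜.idx i x : ℝ)) fun x hx => ?_
    refine (continuousAt_const (y := (𝒜.idx i x : ℝ)).congr ?_).continuousWithinAt
    filter_upwards [𝒜.eventually_idx_eq (𝒜.closedBall_subset_base i hx.2)] with y hy
    rw [hy.2]
  choose N hN using h
  have := Fintype.ofFinite ι
  refine ⟨∑ i, |N i|, by positivity, fun x hx i hi => ?_⟩
  refine (hN i x ⟨subset_closure hx, hi⟩).trans ((le_abs_self _).trans ?_)
  exact Finset.single_le_sum (f := fun i => |N i|) (fun i _ => abs_nonneg _) (Finset.mem_univ i)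

/-- The tent function of the `i`-th core; normalizing these gives a partition of unity. -/
def tent (i : ι) (z : T) : ℝ := max 0 (𝒜.inner i - dist z (𝒜.chart i).center)

lemma abs_tent_sub_le (i : ι) (z w : T) : |𝒜.tent i z - 𝒜.tent i w| ≤ dist z w := by
  refine (abs_max_sub_max_le_max _ _ _ _).trans ?_
  rw [sub_self, abs_zero, max_eq_right (abs_nonneg _), sub_sub_sub_cancel_left, abs_sub_comm]
  exact abs_dist_sub_le z w _

lemma mem_core_of_tent_ne_zero {i : ι} {z : T} (h : 𝒜.tent i z ≠ 0) : z ∈ 𝒜.core i := by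
  by_contra hz
  rw [core, mem_ball, not_lt] at hz
  exact h (max_eq_left (by linarith))

variable [Fintype ι]

/-- A partition of unity subordinate to the cores, all of whose members are `Λ`-Lipschitz. -/
structure IsPartition (φ : ι → T → ℝ) (Λ : ℝ) : Prop where
  nonneg : ∀ i z, 0 ≤ φ i z
  sum_eq_one : ∀ z, ∑ i, φ i z = 1
  mem_core : ∀ {i z}, φ i z ≠ 0 → z ∈ 𝒜.core i
  abs_sub_le : ∀ i z w, |φ i z - φ i w| ≤ Λ * dist z w

lemma exists_pos_le_sum_tent [CompactSpace T] : ∃ m > 0, ∀ z, m ≤ ∑ i, 𝒜.tent i z := by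
  obtain ⟨m, hm, hle⟩ := isCompact_univ.exists_forall_le' (f := fun z => ∑ i, 𝒜.tent i z) (a := 0)
    (by unfold tent; fun_prop) fun z _ => by
      obtain ⟨i, hi⟩ := 𝒜.exists_mem_ball z
      refine Finset.sum_pos' (fun j _ => le_max_left _ _) ⟨i, Finset.mem_univ i, ?_⟩
      exact lt_max_of_lt_right (sub_pos.2 hi)
  exact ⟨m, hm, fun z => hle z (mem_univ z)⟩

lemma exists_isPartition [CompactSpace T] :
    ∃ (φ : ι → T → ℝ) (Λ : ℝ), 0 ≤ Λ ∧ 𝒜.IsPartition φ Λ := by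
  have h0 (i : ι) (z : T) : 0 ≤ 𝒜.tent i z := le_max_left _ _
  obtain ⟨m, hm, hle⟩ := 𝒜.exists_pos_le_sum_tent
  refine ⟨fun i z => 𝒜.tent i z / ∑ j, 𝒜.tent j z, (1 + Fintype.card ι) / m, by positivity,
    fun i z => div_nonneg (h0 i z) (hm.trans_le (hle z)).le, fun z => ?_,
    fun {i z} h => 𝒜.mem_core_of_tent_ne_zero (div_ne_zero_iff.1 h).1, fun i z w => ?_⟩
  · rw [← Finset.sum_div, div_self (hm.trans_le (hle z)).ne']
  · rw [div_mul_eq_mul_div]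
    exact abs_div_sum_sub_div_sum_le (h0 · w) hm (hle z) (hm.trans_le (hle w))
      (𝒜.abs_tent_sub_le · z w) i

/-- The equivariant function obtained by gluing local functions with a partition of unity. -/
def glue (φ G : ι → T → ℝ) (x : Tt) : ℝ := ∑ i, φ i (π x) * (G i (π x) + 𝒜.idx i x)

variable {𝒜} {φ G : ι → T → ℝ} {Λ A N K : ℝ} (hφ : 𝒜.IsPartition φ Λ)

include hφ

lemma IsPartition.le_one (i : ι) (z : T) : φ i z ≤ 1 := by
  rw [← hφ.sum_eq_one z]
  exact Finset.single_le_sum (f := fun i => φ i z) (fun j _ => hφ.nonneg j z) (Finset.mem_univ i)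

lemma IsPartition.glue_zpow (k : ℤ) (x : Tt) : 𝒜.glue φ G ((θ ^ k) x) = 𝒜.glue φ G x + k := by
  have h : ∀ i, φ i (π x) * (G i (π x) + 𝒜.idx i ((θ ^ k) x)) =
      φ i (π x) * (G i (π x) + 𝒜.idx i x) + φ i (π x) * k := fun i => by
    by_cases h0 : φ i (π x) = 0
    · simp [h0]
    · rw [𝒜.idx_zpow k (𝒜.core_subset_base i (hφ.mem_core h0))]
      push_cast
      ring
  simp only [glue, 𝒜.isDeckGenerator.proj_zpow, h, Finset.sum_add_distrib, ← Finset.sum_mul,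
    hφ.sum_eq_one, one_mul]

lemma IsPartition.glue_eq {x : Tt} {a : ℝ}
    (h : ∀ i, φ i (π x) ≠ 0 → G i (π x) + 𝒜.idx i x = a) : 𝒜.glue φ G x = a := by
  have h' : ∀ i, φ i (π x) * (G i (π x) + 𝒜.idx i x) = φ i (π x) * a := fun i => by
    by_cases h0 : φ i (π x) = 0
    · simp [h0]
    · rw [h i h0]
  simp only [glue, h', ← Finset.sum_mul, hφ.sum_eq_one, one_mul]

lemma IsPartition.abs_glue_le (hG : ∀ i z, |G i z| ≤ A) {x : Tt}
    (hN : ∀ i, π x ∈ closedBall (𝒜.chart i).center (𝒜.inner i) → |(𝒜.idx i x : ℝ)| ≤ N) :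
    |𝒜.glue φ G x| ≤ A + N := by
  have h : ∀ i, |φ i (π x) * (G i (π x) + 𝒜.idx i x)| ≤ φ i (π x) * (A + N) := fun i => by
    rw [abs_mul, abs_of_nonneg (hφ.nonneg i _)]
    by_cases h0 : φ i (π x) = 0
    · simp [h0]
    · refine mul_le_mul_of_nonneg_left ((abs_add_le _ _).trans (add_le_add (hG i _) ?_))
        (hφ.nonneg i _)
      exact hN i (ball_subset_closedBall (hφ.mem_core h0))
  refine (Finset.abs_sum_le_sum_abs _ _).trans ((Finset.sum_le_sum fun i _ => h i).trans_eq ?_)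
  rw [← Finset.sum_mul, hφ.sum_eq_one, one_mul]

variable (hG : ∀ i z, |G i z| ≤ A) (hGlip : ∀ i z w, |G i z - G i w| ≤ K * dist z w)
  (hC : 0 ≤ Λ * (A + N) + K)

include hG hGlip hC

lemma IsPartition.exists_nhds_abs_mul_sub_mul_le {i : ι} {x : Tt}
    (hN : π x ∈ closedBall (𝒜.chart i).center (𝒜.inner i) → |(𝒜.idx i x : ℝ)| ≤ N) :
    ∃ O ∈ 𝓝 x, ∀ y ∈ O, ∀ z ∈ O, |φ i (π y) * (G i (π y) + 𝒜.idx i y) -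
      φ i (π z) * (G i (π z) + 𝒜.idx i z)| ≤ (Λ * (A + N) + K) * dist (π y) (π z) := by
  by_cases hx : π x ∈ closedBall (𝒜.chart i).center (𝒜.inner i)
  · refine ⟨_, 𝒜.eventually_idx_eq (𝒜.closedBall_subset_base i hx), ?_⟩
    rintro y ⟨-, hy⟩ z ⟨-, hz⟩
    rw [hy, hz]
    calc |φ i (π y) * (G i (π y) + 𝒜.idx i x) - φ i (π z) * (G i (π z) + 𝒜.idx i x)|
        = |(φ i (π y) - φ i (π z)) * (G i (π y) + 𝒜.idx i x) +
            φ i (π z) * (G i (π y) - G i (π z))| := by ring_nf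
      _ ≤ |φ i (π y) - φ i (π z)| * |G i (π y) + 𝒜.idx i x| +
            φ i (π z) * |G i (π y) - G i (π z)| := by
        refine (abs_add_le _ _).trans_eq ?_
        rw [abs_mul, abs_mul, abs_of_nonneg (hφ.nonneg i (π z))]
      _ ≤ Λ * dist (π y) (π z) * (A + N) + K * dist (π y) (π z) := by
        refine add_le_add (mul_le_mul (hφ.abs_sub_le i _ _)
          ((abs_add_le _ _).trans (add_le_add (hG i _) (hN hx))) (abs_nonneg _)
          ((abs_nonneg _).trans (hφ.abs_sub_le i _ _))) ?_
        exact (mul_le_of_le_one_left (abs_nonneg _) (hφ.le_one i _)).trans (hGlip i _ _)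
      _ = (Λ * (A + N) + K) * dist (π y) (π z) := by ring
  · have hopen : IsOpen (π ⁻¹' (closedBall (𝒜.chart i).center (𝒜.inner i))ᶜ) :=
      isClosed_closedBall.isOpen_compl.preimage 𝒜.continuous_proj
    have h0 : ∀ y, π y ∉ closedBall (𝒜.chart i).center (𝒜.inner i) → φ i (π y) = 0 := fun y =>
      not_imp_comm.1 fun h => ball_subset_closedBall (hφ.mem_core h)
    refine ⟨_, hopen.mem_nhds hx, fun y hy z hz => ?_⟩
    rw [h0 y hy, h0 z hz, zero_mul, zero_mul, sub_zero, abs_zero]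
    exact mul_nonneg hC dist_nonneg

lemma IsPartition.exists_nhds_abs_glue_sub_le_of_mem_domain {x : Tt}
    (hN : ∀ i, π x ∈ closedBall (𝒜.chart i).center (𝒜.inner i) → |(𝒜.idx i x : ℝ)| ≤ N) :
    ∃ O ∈ 𝓝 x, ∀ y ∈ O, ∀ z ∈ O, |𝒜.glue φ G y - 𝒜.glue φ G z| ≤
      Fintype.card ι * (Λ * (A + N) + K) * dist (π y) (π z) := by
  choose O hO hle using fun i => hφ.exists_nhds_abs_mul_sub_mul_le hG hGlip hC (hN i)
  refine ⟨⋂ i, O i, Filter.iInter_mem.2 hO, fun y hy z hz => ?_⟩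
  rw [mem_iInter] at hy hz
  rw [glue, glue, ← Finset.sum_sub_distrib, mul_assoc, ← nsmul_eq_mul]
  exact (Finset.abs_sum_le_sum_abs _ _).trans
    (Finset.sum_le_card_nsmul _ _ _ fun i _ => hle i y (hy i) z (hz i))

lemma IsPartition.exists_nhds_abs_glue_sub_le
    (hN : ∀ x ∈ 𝒜.domain, ∀ i,
      π x ∈ closedBall (𝒜.chart i).center (𝒜.inner i) → |(𝒜.idx i x : ℝ)| ≤ N) (x : Tt) :
    ∃ O ∈ 𝓝 x, ∀ y ∈ O, ∀ z ∈ O, |𝒜.glue φ G y - 𝒜.glue φ G z| ≤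
      Fintype.card ι * (Λ * (A + N) + K) * dist (π y) (π z) := by
  obtain ⟨k, hk⟩ := 𝒜.exists_zpow_mem_domain x
  obtain ⟨O, hO, hle⟩ := hφ.exists_nhds_abs_glue_sub_le_of_mem_domain hG hGlip hC (hN _ hk)
  refine ⟨(θ ^ k) ⁻¹' O, (θ ^ k).continuous.continuousAt.preimage_mem_nhds hO,
    fun y hy z hz => ?_⟩
  simpa only [hφ.glue_zpow, 𝒜.isDeckGenerator.proj_zpow, add_sub_add_right_eq_sub]
    using hle _ hy _ hz

end Atlas

/-! ### Upper gradients of differences of equivariant functions -/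

lemma frequently_nhdsWithin_Icc_of_ae {P : ℝ → Prop} {a b t₀ : ℝ} (hab : a < b)
    (ht₀ : t₀ ∈ Icc a b) (hP : ∀ᵐ t ∂volume.restrict (Icc a b), P t) :
    ∃ᶠ t in 𝓝[Icc a b] t₀, P t := by
  have hdense : Dense {t | t ∈ Icc a b → P t} :=
    Measure.dense_of_ae ((ae_restrict_iff' measurableSet_Icc).1 hP)
  have hmem : t₀ ∈ closure (Ioo a b ∩ {t | t ∈ Icc a b → P t}) := by
    refine closure_minimal (hdense.open_subset_closure_inter isOpen_Ioo) isClosed_closure ?_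
    rwa [closure_Ioo hab.ne]
  rw [frequently_nhdsWithin_iff]
  exact (mem_closure_iff_frequently.1 hmem).mono fun t ⟨ht, hPt⟩ =>
    ⟨hPt (Ioo_subset_Icc_self ht), Ioo_subset_Icc_self ht⟩

lemma tendsto_setLIntegral_uIcc {F : ℝ → ℝ≥0∞} {a b t₀ : ℝ} (ht₀ : t₀ ∈ Icc a b)
    (hfin : ∫⁻ t in Icc a b, F t ≠ ⊤) :
    Tendsto (fun t => ∫⁻ r in uIcc t₀ t, F r) (𝓝[Icc a b] t₀) (𝓝 0) := by
  have hvol : Tendsto (fun t => volume.restrict (Icc a b) (uIcc t₀ t)) (𝓝[Icc a b] t₀) (𝓝 0) := by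
    have hlim : Tendsto (fun t => ENNReal.ofReal |t - t₀|) (𝓝[Icc a b] t₀) (𝓝 0) := by
      have hcont : Continuous fun t => ENNReal.ofReal |t - t₀| :=
        ENNReal.continuous_ofReal.comp (by fun_prop)
      simpa using (hcont.tendsto t₀).mono_left nhdsWithin_le_nhds
    refine tendsto_of_tendsto_of_tendsto_of_le_of_le tendsto_const_nhds hlim
      (fun _ => zero_le) fun t => (Measure.restrict_apply_le _ _).trans_eq ?_
    rw [Real.volume_interval]
  refine (tendsto_setLIntegral_zero hfin hvol).congr' ?_
  filter_upwards [self_mem_nhdsWithin] with t ht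
  rw [Measure.restrict_restrict measurableSet_uIcc,
    inter_eq_left.2 (uIcc_subset_Icc ht₀ ht)]

lemma eq_of_frequently_eq {Y : Type*} [EMetricSpace Y] {w : ℝ → Y} {y : Y} {F : ℝ → ℝ≥0∞}
    {a b t₀ δ : ℝ} (ht₀ : t₀ ∈ Icc a b) (hδ : 0 < δ) (hfin : ∫⁻ t in Icc a b, F t ≠ ⊤)
    (hw : ∀ s ∈ Icc a b, ∀ t ∈ Icc a b, s ≤ t → dist s t₀ < δ → dist t t₀ < δ →
      edist (w s) (w t) ≤ ∫⁻ r in Icc s t, F r)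
    (hy : ∃ᶠ t in 𝓝[Icc a b] t₀, w t = y) : w t₀ = y := by
  have near : ∀ᶠ t in 𝓝[Icc a b] t₀, edist (w t₀) (w t) ≤ ∫⁻ r in uIcc t₀ t, F r := by
    filter_upwards [self_mem_nhdsWithin, nhdsWithin_le_nhds (ball_mem_nhds t₀ hδ)] with t ht htδ
    rcases le_total t₀ t with hle | hle
    · rw [uIcc_of_le hle]
      exact hw t₀ ht₀ t ht hle (mem_ball_self hδ) htδ
    · rw [uIcc_of_ge hle, edist_comm]
      exact hw t ht t₀ ht₀ hle htδ (mem_ball_self hδ)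
  rw [← edist_le_zero]
  exact ge_of_tendsto_of_frequently (tendsto_setLIntegral_uIcc ht₀ hfin)
    ((hy.and_eventually near).mono fun t ⟨hyt, hle⟩ => hyt ▸ hle)

lemma edist_sub_sub_le {E : Type*} [SeminormedAddCommGroup E] (a b c d : E) :
    edist (a - b) (c - d) ≤ edist a c + edist b d := by
  simpa only [sub_eq_add_neg, edist_neg_neg] using edist_add_add_le a (-b) c (-d)

namespace UPath

variable {X : Type*} [PseudoMetricSpace X] (γ : UPath X)

lemma integral_indicator {W : Set X} (ρ : X → ℝ≥0∞) (hW : ∀ t ∈ Ioo γ.a γ.b, γ.toFun t ∈ W) :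
    γ.integral (W.indicator ρ) = γ.integral ρ := by
  rw [integral, integral, ← setLIntegral_congr Ioo_ae_eq_Icc, ← setLIntegral_congr Ioo_ae_eq_Icc]
  exact setLIntegral_congr_fun measurableSet_Ioo fun t ht => indicator_of_mem (hW t ht) ρ

/- Only the pieces of the path before its first and after its last exit from `W` matter, since
`u` takes the same value at both exits. -/
lemma edist_le_integral_indicator {Y : Type*} [PseudoEMetricSpace Y] {u : X → Y} {c : Y}
    {ρ : X → ℝ≥0∞} {W : Set X} (hW : IsOpen W)
    (hu : ∀ s t hst hs ht, edist (u (γ.toFun s)) (u (γ.toFun t)) ≤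
      (γ.sub s t hst hs ht).integral ρ)
    (hc : ∀ t ∈ Icc γ.a γ.b, γ.toFun t ∉ W → u (γ.toFun t) = c) :
    edist (u γ.start) (u γ.finish) ≤ γ.integral (W.indicator ρ) := by
  have hclosed : IsClosed (Icc γ.a γ.b ∩ γ.toFun ⁻¹' Wᶜ) :=
    γ.lip.continuousOn.preimage_isClosed_of_isClosed isClosed_Icc hW.isClosed_compl
  have hcomp := isCompact_Icc.of_isClosed_subset hclosed inter_subset_left
  rcases (Icc γ.a γ.b ∩ γ.toFun ⁻¹' Wᶜ).eq_empty_or_nonempty with hempty | hne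
  · refine (hu γ.a γ.b γ.hab le_rfl le_rfl).trans_eq (γ.integral_indicator ρ fun t ht => ?_).symm
    by_contra htW
    exact eq_empty_iff_forall_notMem.1 hempty t ⟨Ioo_subset_Icc_self ht, htW⟩
  obtain ⟨t₁, ⟨ht₁, ht₁W⟩, hmin⟩ := hcomp.exists_isLeast hne
  obtain ⟨t₂, ⟨ht₂, ht₂W⟩, hmax⟩ := hcomp.exists_isGreatest hne
  have h₁₂ : t₁ ≤ t₂ := hmin ⟨ht₂, ht₂W⟩
  have before : edist (u γ.start) c ≤ ∫⁻ t in Icc γ.a t₁, W.indicator ρ (γ.toFun t) := by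
    rw [← hc t₁ ht₁ ht₁W]
    refine (hu γ.a t₁ ht₁.1 le_rfl ht₁.2).trans_eq (integral_indicator _ ρ fun t ht => ?_).symm
    by_contra htW
    exact (hmin ⟨⟨ht.1.le, ht.2.le.trans ht₁.2⟩, htW⟩).not_gt ht.2
  have after : edist c (u γ.finish) ≤ ∫⁻ t in Icc t₂ γ.b, W.indicator ρ (γ.toFun t) := by
    rw [← hc t₂ ht₂ ht₂W]
    refine (hu t₂ γ.b ht₂.2 ht₂.1 le_rfl).trans_eq (integral_indicator _ ρ fun t ht => ?_).symm
    by_contra htW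
    exact (hmax ⟨⟨ht₂.1.trans ht.1.le, ht.2.le⟩, htW⟩).not_gt ht.1
  rw [integral, ← setLIntegral_Icc_add_Icc _ ht₁.1 ht₁.2, ← setLIntegral_Icc_add_Icc _ h₁₂ ht₂.2]
  exact (edist_triangle _ c _).trans (add_le_add before (after.trans le_add_self))

section Measure

variable [MeasurableSpace X] [BorelSpace X]

lemma aemeasurable_comp {H : X → ℝ≥0∞} (hH : Measurable H) :
    AEMeasurable (fun t => H (γ.toFun t)) (volume.restrict (Icc γ.a γ.b)) :=
  hH.comp_aemeasurable (γ.lip.continuousOn.aemeasurable measurableSet_Icc)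

lemma ae_notMem_of_integral_ne_top {W : Set X} (hW : MeasurableSet W)
    (hfin : γ.integral (W.indicator fun _ => ⊤) ≠ ⊤) :
    ∀ᵐ t ∂volume.restrict (Icc γ.a γ.b), γ.toFun t ∉ W := by
  filter_upwards [ae_lt_top' (γ.aemeasurable_comp (measurable_const.indicator hW)) hfin]
    with t ht htW
  rw [indicator_of_mem htW] at ht
  exact ht.ne rfl

end Measure

end UPath

namespace Atlas

variable {T Tt : Type*} [MetricSpace T] [MetricSpace Tt] {π : Tt → T} {θ : Tt ≃ₜ Tt} {ι : Type*}
  (𝒜 : Atlas π θ ι)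

/-- The value of `f` at `x` is the one predicted by equivariance from the values of `f` on the
sheets whose base contains `π x`. -/
def IsEquivariantAt (f : Tt → ℝ) (x : Tt) : Prop :=
  ∀ i, π x ∈ (𝒜.chart i).base → f x = f ((𝒜.chart i).sec (π x)) + 𝒜.idx i x

lemma exists_edist_sec_le (hloc : IsLocalIsometry π) {f : Tt → ℝ} {g : T → ℝ≥0∞} {i : ι}
    (hgrad : IsUpperGradientOn (𝒜.chart i).base (f ∘ (𝒜.chart i).sec) g)
    (γ : UPath Tt) {t₀ : ℝ} (ht₀ : t₀ ∈ Icc γ.a γ.b) (hi : π (γ.toFun t₀) ∈ (𝒜.chart i).base) :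
    ∃ δ > 0, (∀ t ∈ Icc γ.a γ.b, dist t t₀ < δ → π (γ.toFun t) ∈ (𝒜.chart i).base ∧
        𝒜.idx i (γ.toFun t) = 𝒜.idx i (γ.toFun t₀)) ∧
      ∀ s ∈ Icc γ.a γ.b, ∀ t ∈ Icc γ.a γ.b, s ≤ t → dist s t₀ < δ → dist t t₀ < δ →
        edist (π (γ.toFun s)) (π (γ.toFun t)) ≤ ENNReal.ofReal (t - s) ∧
        edist (f ((𝒜.chart i).sec (π (γ.toFun s)))) (f ((𝒜.chart i).sec (π (γ.toFun t)))) ≤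
          ∫⁻ r in Icc s t, g (π (γ.toFun r)) := by
  obtain ⟨ε, hε, hiso⟩ := hloc (γ.toFun t₀)
  obtain ⟨δ, hδ, hsub⟩ := Metric.mem_nhdsWithin_iff.1 <| γ.lip.continuousOn t₀ ht₀ <|
    inter_mem (𝒜.eventually_idx_eq hi) (ball_mem_nhds (γ.toFun t₀) hε)
  have near {t : ℝ} (ht : t ∈ Icc γ.a γ.b) (htδ : dist t t₀ < δ) := hsub ⟨htδ, ht⟩
  have hlip : LipschitzOnWith 1 (π ∘ γ.toFun) (Icc γ.a γ.b ∩ ball t₀ δ) :=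
    LipschitzOnWith.of_dist_le_mul fun s hs t ht => by
      rw [Function.comp_apply, Function.comp_apply, hiso _ (near hs.1 hs.2).2 _ (near ht.1 ht.2).2]
      exact γ.lip.dist_le_mul s hs.1 t ht.1
  refine ⟨δ, hδ, fun t ht htδ => (near ht htδ).1, fun s hs t ht hst hsδ htδ => ⟨?_, ?_⟩⟩
  · simpa only [ENNReal.coe_one, one_mul, Function.comp_apply, edist_comm s t, edist_dist t s,
      Real.dist_eq, abs_of_nonneg (sub_nonneg.2 hst)] using hlip ⟨hs, hsδ⟩ ⟨ht, htδ⟩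
  · have hst' : Icc s t ⊆ Icc γ.a γ.b ∩ ball t₀ δ := by
      refine subset_inter (Icc_subset_Icc hs.1 ht.2) ?_
      rw [Real.ball_eq_Ioo]
      rw [← mem_ball, Real.ball_eq_Ioo] at hsδ htδ
      exact Icc_subset_Ioo hsδ.1 htδ.2
    exact hgrad ⟨s, t, hst, π ∘ γ.toFun, hlip.mono hst'⟩ fun r hr =>
      (near (hst' hr).1 (hst' hr).2).1.1

section Equivariance

variable [MeasurableSpace Tt] [BorelSpace Tt] {f : Tt → ℝ} {g : T → ℝ≥0∞} {Z : Set T}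
  {H : Tt → ℝ≥0∞} {U : Set Tt}

/- The values of `f` along such a path and those predicted from a sheet are both absolutely
continuous, and they agree at almost every time because the path spends no time over `Z`. -/
lemma isEquivariantAt_of_integral_ne_top [MeasurableSpace T] [BorelSpace T]
    (hloc : IsLocalIsometry π)
    (hgrad : ∀ i, IsUpperGradientOn (𝒜.chart i).base (f ∘ (𝒜.chart i).sec) g)
    (hZ : MeasurableSet Z) (hfZ : ∀ x, π x ∉ Z → 𝒜.IsEquivariantAt f x)
    (hH : Measurable H) (hfH : IsUpperGradientOn U f H) {γ : UPath Tt} (hγ : γ.InSet U)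
    (hab : γ.a < γ.b)
    (hfin : γ.integral (fun x => H x + g (π x) + (π ⁻¹' Z).indicator (fun _ => ⊤) x) ≠ ⊤)
    {t₀ : ℝ} (ht₀ : t₀ ∈ Icc γ.a γ.b) : 𝒜.IsEquivariantAt f (γ.toFun t₀) := by
  intro i hi
  obtain ⟨δ, hδ, hbase, hest⟩ := 𝒜.exists_edist_sec_le hloc (hgrad i) γ ht₀ hi
  have hae : ∀ᵐ t ∂volume.restrict (Icc γ.a γ.b), π (γ.toFun t) ∉ Z :=
    γ.ae_notMem_of_integral_ne_top (𝒜.continuous_proj.measurable hZ)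
      (ne_top_of_le_ne_top hfin (γ.integral_mono fun x => le_add_self))
  rw [← sub_eq_zero]
  refine eq_of_frequently_eq (F := fun t => H (γ.toFun t) + g (π (γ.toFun t)))
    (w := fun t => f (γ.toFun t) -
      (f ((𝒜.chart i).sec (π (γ.toFun t))) + 𝒜.idx i (γ.toFun t₀)))
    ht₀ hδ (ne_top_of_le_ne_top hfin (γ.integral_mono fun x => le_self_add)) ?_ ?_
  · intro s hs t ht hst hsδ htδ
    have hfst : edist (f (γ.toFun s)) (f (γ.toFun t)) ≤ ∫⁻ r in Icc s t, H (γ.toFun r) :=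
      hfH (γ.sub s t hst hs.1 ht.2) fun r hr => hγ r (Icc_subset_Icc hs.1 ht.2 hr)
    have hmeas : AEMeasurable (fun r => H (γ.toFun r)) (volume.restrict (Icc s t)) :=
      (γ.sub s t hst hs.1 ht.2).aemeasurable_comp hH
    rw [lintegral_add_left' hmeas]
    exact (edist_sub_sub_le _ _ _ _).trans (add_le_add hfst
      ((edist_add_right _ _ _).trans_le (hest s hs t ht hst hsδ htδ).2))
  · refine ((frequently_nhdsWithin_Icc_of_ae hab ht₀ hae).and_eventually
      (inter_mem self_mem_nhdsWithin (nhdsWithin_le_nhds (ball_mem_nhds t₀ hδ)))).mono ?_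
    rintro t ⟨htZ, ht, htδ⟩
    rw [hfZ _ htZ i (hbase t ht htδ).1, (hbase t ht htδ).2, sub_self]

end Equivariance

section Sub

variable {f v : Tt → ℝ} {g : T → ℝ≥0∞} {C : ℝ}

lemma edist_sub_le_integral (hloc : IsLocalIsometry π)
    (hgrad : ∀ i, IsUpperGradientOn (𝒜.chart i).base (f ∘ (𝒜.chart i).sec) g)
    (hC : 0 ≤ C)
    (hv : ∀ x, ∃ O ∈ 𝓝 x, ∀ y ∈ O, ∀ z ∈ O, |v y - v z| ≤ C * dist (π y) (π z))
    (γ : UPath Tt) (hf : ∀ t ∈ Icc γ.a γ.b, 𝒜.IsEquivariantAt f (γ.toFun t)) :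
    edist (v γ.start - f γ.start) (v γ.finish - f γ.finish) ≤
      γ.integral fun x => ENNReal.ofReal C + g (π x) := by
  refine edist_le_lintegral_of_locally (w := fun t => v (γ.toFun t) - f (γ.toFun t)) γ.hab
    fun t₀ ht₀ => ?_
  obtain ⟨i, hi⟩ := 𝒜.exists_mem_ball (π (γ.toFun t₀))
  obtain ⟨δ, hδ, hbase, hest⟩ :=
    𝒜.exists_edist_sec_le hloc (hgrad i) γ ht₀ (𝒜.core_subset_base i hi)
  obtain ⟨O, hO, hvO⟩ := hv (γ.toFun t₀)
  obtain ⟨δ', hδ', hsub⟩ := Metric.mem_nhdsWithin_iff.1 (γ.lip.continuousOn t₀ ht₀ hO)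
  refine ⟨min δ δ', lt_min hδ hδ', fun s hs t ht hst hsδ htδ => ?_⟩
  rw [lt_min_iff] at hsδ htδ
  obtain ⟨hdist, hfst⟩ := hest s hs t ht hst hsδ.1 htδ.1
  obtain ⟨hbs, his⟩ := hbase s hs hsδ.1
  obtain ⟨hbt, hit⟩ := hbase t ht htδ.1
  have hvst : edist (v (γ.toFun s)) (v (γ.toFun t)) ≤
      ENNReal.ofReal C * ENNReal.ofReal (t - s) := by
    refine le_trans ?_ (mul_le_mul_right hdist _)
    rw [edist_dist, edist_dist, ← ENNReal.ofReal_mul hC, Real.dist_eq]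
    exact ENNReal.ofReal_le_ofReal (hvO _ (hsub ⟨hsδ.2, hs⟩) _ (hsub ⟨htδ.2, ht⟩))
  rw [lintegral_add_left measurable_const, setLIntegral_const, Real.volume_Icc,
    hf s hs i hbs, hf t ht i hbt, his, hit]
  exact (edist_sub_sub_le _ _ _ _).trans
    (add_le_add hvst ((edist_add_right _ _ _).trans_le hfst))

lemma isWeakUpperGradientOn_sub [MeasurableSpace Tt] [BorelSpace Tt] [MeasurableSpace T]
    [BorelSpace T] (hloc : IsLocalIsometry π) {μt : Measure Tt} {p : ℝ} (hp : 1 ≤ p)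
    (hg : Measurable g)
    (hgrad : ∀ i, IsUpperGradientOn (𝒜.chart i).base (f ∘ (𝒜.chart i).sec) g)
    {Z : Set T} (hZ : MeasurableSet Z) (hZ0 : μt (π ⁻¹' Z) = 0)
    (hfZ : ∀ x, π x ∉ Z → 𝒜.IsEquivariantAt f x)
    (hC : 0 ≤ C)
    (hv : ∀ x, ∃ O ∈ 𝓝 x, ∀ y ∈ O, ∀ z ∈ O, |v y - v z| ≤ C * dist (π y) (π z))
    {W : Set T} (hW : IsOpen W)
    (hvf : ∀ x, π x ∉ W → 𝒜.IsEquivariantAt f x → v x = f x)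
    {U : Set Tt} {H : Tt → ℝ≥0∞} (hH : Measurable H) (hfH : IsUpperGradientOn U f H)
    (hHU : ∫⁻ x in U, H x ^ p ∂μt < ⊤) (hgU : ∫⁻ x in U, g (π x) ^ p ∂μt < ⊤) :
    IsWeakUpperGradientOn μt p U (fun x => v x - f x)
      (fun x => W.indicator (fun z => ENNReal.ofReal C + g z) (π x)) := by
  have hπ := 𝒜.continuous_proj.measurable
  refine pathMod_eq_zero_of_integral_eq_top (zero_lt_one.trans_le hp)
    (H := fun x => H x + g (π x) + (π ⁻¹' Z).indicator (fun _ => ⊤) x)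
    ((hH.add (hg.comp hπ)).add (measurable_const.indicator (hπ hZ))) ?_ ?_
  · refine (lintegral_congr_ae (ae_restrict_of_ae ?_)).trans_lt
      (lintegral_add_rpow_lt_top hp hH hHU hgU)
    filter_upwards [measure_eq_zero_iff_ae_notMem.1 hZ0] with x hx
    rw [indicator_of_notMem hx, add_zero]
  · rintro γ ⟨hγU, hγ⟩
    by_contra hfin
    refine hγ ?_
    rcases γ.hab.eq_or_lt with hab | hab
    · rw [UPath.start, UPath.finish, hab, edist_self]
      exact zero_le
    have hf : ∀ t ∈ Icc γ.a γ.b, 𝒜.IsEquivariantAt f (γ.toFun t) := fun t =>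
      𝒜.isEquivariantAt_of_integral_ne_top hloc hgrad hZ hfZ hH hfH hγU hab hfin
    refine γ.edist_le_integral_indicator (u := fun x => v x - f x) (c := 0)
      (hW.preimage 𝒜.continuous_proj) (fun s t hst hs ht => ?_) fun t ht htW => ?_
    · exact 𝒜.edist_sub_le_integral hloc hgrad hC hv (γ.sub s t hst hs ht) fun r hr =>
        hf r (Icc_subset_Icc hs ht hr)
    · exact sub_eq_zero.2 (hvf _ htW (hf t ht))

end Sub

end Atlas

/-! ### Equivariant approximation on the cover -/

/-- All extensions agree at a fixed point of `B \ N l₀`, which makes their sup norms linear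
in `l`. -/
lemma exists_lipschitz_extension {X : Type*} [PseudoMetricSpace X] [BoundedSpace X] {F : X → ℝ}
    {B : Set X} {N : ℝ → Set X} (hN : Antitone N) {κ l₀ : ℝ} (hκ : 0 ≤ κ) (hl₀ : 1 ≤ l₀)
    (hF : ∀ l > 0, LipschitzOnWith (Real.toNNReal (κ * l)) F (B \ N l))
    (hne : (B \ N l₀).Nonempty) :
    ∃ A : ℝ, 0 ≤ A ∧ ∀ l ≥ l₀, ∃ G : X → ℝ,
      (∀ z w, |G z - G w| ≤ κ * l * dist z w) ∧ EqOn G F (B \ N l) ∧ ∀ z, |G z| ≤ A * l := by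
  obtain ⟨q, hqB, hqN⟩ := hne
  refine ⟨|F q| + κ * diam (univ : Set X), by positivity, fun l hl => ?_⟩
  have hl1 : 1 ≤ l := hl₀.trans hl
  obtain ⟨G, hG, hFG⟩ := (hF l (by linarith)).extend_real
  have hlip (z w : X) : |G z - G w| ≤ κ * l * dist z w := by
    have := hG.dist_le_mul z w
    rwa [Real.coe_toNNReal _ (by positivity), Real.dist_eq] at this
  refine ⟨G, hlip, hFG.symm, fun z => ?_⟩
  have hdiam : dist z q ≤ diam (univ : Set X) :=
    dist_le_diam_of_mem (Bornology.IsBounded.all univ) (mem_univ _) (mem_univ _)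
  calc |G z| = |F q + (G z - G q)| := by rw [hFG ⟨hqB, notMem_subset (hN hl) hqN⟩]; congr 1; ring
    _ ≤ |F q| + κ * l * dist z q := (abs_add_le _ _).trans (by gcongr; exact hlip z _)
    _ ≤ |F q| * l + κ * l * diam (univ : Set X) := by
        gcongr
        exact le_mul_of_one_le_right (abs_nonneg _) hl1
    _ = (|F q| + κ * diam (univ : Set X)) * l := by ring

section

variable {T Tt : Type*} [MetricSpace T] [MetricSpace Tt] {π : Tt → T} {θ : Tt ≃ₜ Tt}

lemma IsDeckGenerator.exists_atlas [CompactSpace T] (hθ : IsDeckGenerator π θ) (hπ : Continuous π)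
    {P : T → Sheet π} (hP : ∀ y, (P y).center = y) {r : T → ℝ} (hr : ∀ y, 0 < r y)
    (hrP : ∀ y, r y < (P y).radius) :
    ∃ (J : Finset T) (𝒜 : Atlas π θ J), ∀ i, 𝒜.chart i = P i ∧ 𝒜.inner i = r i := by
  obtain ⟨J, hJ⟩ := CompactSpace.elim_nhds_subcover (fun y => ball y (r y))
    fun y => ball_mem_nhds y (hr y)
  refine ⟨J, ⟨fun i => P i, fun i => r i, hθ, hπ, fun i => hr i, fun i => hrP i, fun z => ?_⟩,
    fun i => ⟨rfl, rfl⟩⟩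
  obtain ⟨y, hy, hzy⟩ := mem_iUnion₂.1 (hJ.ge (mem_univ z))
  exact ⟨⟨y, hy⟩, by rwa [hP]⟩

lemma apply_zpow_eq_add {X : Type*} [TopologicalSpace X] {θ : X ≃ₜ X} {f : X → ℝ} {x : X}
    (h : ∀ k : ℤ, f (θ ((θ ^ k) x)) - f ((θ ^ k) x) = 1) (k : ℤ) : f ((θ ^ k) x) = f x + k := by
  have hsucc (k : ℤ) : f ((θ ^ (k + 1)) x) = f ((θ ^ k) x) + 1 := by
    rw [add_comm k, zpow_add, zpow_one, Homeomorph.mul_apply]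
    linarith [h k]
  induction k using Int.induction_on with
  | zero => simp
  | succ n ih =>
    rw [hsucc, ih]
    push_cast
    ring
  | pred n ih =>
    have := hsucc (-n - 1)
    rw [sub_add_cancel, ih] at this
    push_cast at this ⊢
    linarith

lemma IsDeckGenerator.ae_apply_zpow_eq_add (hθ : IsDeckGenerator π θ) [MeasurableSpace T]
    [MeasurableSpace Tt] [BorelSpace Tt] {μ : Measure T} {μt : Measure Tt}
    (hμt : IsLiftedMeasure π μ μt) {f : Tt → ℝ} (hf : ∀ᵐ x ∂μt, f (θ x) - f x = 1) :
    ∀ᵐ x ∂μt, ∀ k : ℤ, f ((θ ^ k) x) = f x + k := by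
  have h : ∀ᵐ x ∂μt, ∀ k : ℤ, f (θ ((θ ^ k) x)) - f ((θ ^ k) x) = 1 := ae_all_iff.2 fun k =>
    (hμt.measurePreserving (θ ^ k) (hθ.proj_zpow k)).quasiMeasurePreserving.ae hf
  filter_upwards [h] with x hx using apply_zpow_eq_add hx

namespace Atlas

variable {ι : Type*} (𝒜 : Atlas π θ ι)

lemma isEquivariantAt_of_zpow_eq {f : Tt → ℝ} {x : Tt} (h : ∀ k : ℤ, f ((θ ^ k) x) = f x + k) :
    𝒜.IsEquivariantAt f x := fun i hi => by
  have hsec : (θ ^ (-𝒜.idx i x)) x = (𝒜.chart i).sec (π x) := by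
    nth_rw 2 [← 𝒜.zpow_idx hi]
    rw [← Homeomorph.mul_apply, ← zpow_add, neg_add_cancel, zpow_zero, Homeomorph.one_apply]
  rw [← hsec, h]
  push_cast
  ring

lemma exists_null_set [MeasurableSpace T] [BorelSpace T] [MeasurableSpace Tt] [BorelSpace Tt]
    [Countable ι] {μ : Measure T} {μt : Measure Tt} (hμt : IsLiftedMeasure π μ μt) {f : Tt → ℝ}
    (hf : ∀ᵐ x ∂μt, ∀ k : ℤ, f ((θ ^ k) x) = f x + k) :
    ∃ Z : Set T, MeasurableSet Z ∧ μ Z = 0 ∧ ∀ x, π x ∉ Z → 𝒜.IsEquivariantAt f x := by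
  have h : ∀ᵐ z ∂μ, ∀ i, z ∈ (𝒜.chart i).base →
      ∀ k : ℤ, f ((θ ^ k) ((𝒜.chart i).sec z)) = f ((𝒜.chart i).sec z) + k :=
    ae_all_iff.2 fun i =>
      (ae_restrict_iff' (𝒜.chart i).isOpen_base.measurableSet).1 ((𝒜.chart i).ae_sec hμt hf)
  refine ⟨_, measurableSet_toMeasurable μ _, (measure_toMeasurable _).trans h,
    fun x hxZ i hx => ?_⟩
  have := not_not.1 (notMem_subset (subset_toMeasurable μ _) hxZ) i hx (𝒜.idx i x)
  rwa [𝒜.zpow_idx hx] at this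

lemma IsPartition.glue_eq_of_isEquivariantAt [Fintype ι] {𝒜 : Atlas π θ ι} {φ G : ι → T → ℝ} {Λ : ℝ}
    (hφ : 𝒜.IsPartition φ Λ) {f : Tt → ℝ} {N : Set T}
    (hG : ∀ i, EqOn (G i) (f ∘ (𝒜.chart i).sec) (𝒜.core i \ N)) {x : Tt} (hx : π x ∉ N)
    (hfx : 𝒜.IsEquivariantAt f x) : 𝒜.glue φ G x = f x := by
  refine hφ.glue_eq fun i hi => ?_
  rw [hG i ⟨hφ.mem_core hi, hx⟩, hfx i (𝒜.core_subset_base i (hφ.mem_core hi)),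
    Function.comp_apply]

/-- An equivariant function of Lipschitz constant `c` over the base, bounded by `c` on the sheets,
which agrees with `f` over the complement of `N`. -/
structure IsTruncation (f : Tt → ℝ) (N : Set T) (c : ℝ) (v : Tt → ℝ) : Prop where
  zpow_eq : ∀ (k : ℤ) x, v ((θ ^ k) x) = v x + k
  abs_le : ∀ x ∈ 𝒜.domain, |v x| ≤ c
  exists_nhds_abs_sub_le :
    ∀ x, ∃ O ∈ 𝓝 x, ∀ y ∈ O, ∀ z ∈ O, |v y - v z| ≤ c * dist (π y) (π z)
  eq_of_notMem : ∀ x, π x ∉ N → 𝒜.IsEquivariantAt f x → v x = f x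

lemma exists_isTruncation [CompactSpace T] [Finite ι] {f : Tt → ℝ} {N : ℝ → Set T}
    (hN : Antitone N) {κ l₀ : ℝ} (hκ : 0 ≤ κ) (hl₀ : 1 ≤ l₀)
    (hF : ∀ i, ∀ l > 0,
      LipschitzOnWith (Real.toNNReal (κ * l)) (f ∘ (𝒜.chart i).sec) (𝒜.core i \ N l))
    (hne : ∀ i, (𝒜.core i \ N l₀).Nonempty) :
    ∃ Q : ℝ, 0 ≤ Q ∧ ∀ l ≥ l₀, ∃ v, 𝒜.IsTruncation f (N l) (Q * l) v := by
  have := Fintype.ofFinite ι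
  choose A hA hext using fun i => exists_lipschitz_extension hN hκ hl₀ (hF i) (hne i)
  obtain ⟨φ, Λ, hΛ, hφ⟩ := 𝒜.exists_isPartition
  obtain ⟨M, hM, hidx⟩ := 𝒜.exists_abs_idx_le
  have hA0 : 0 ≤ ∑ i, A i := Finset.sum_nonneg fun i _ => hA i
  refine ⟨∑ i, A i + M + Fintype.card ι * (Λ * (∑ i, A i + M) + κ), by positivity,
    fun l hl => ?_⟩
  have hl1 : 1 ≤ l := hl₀.trans hl
  have hAM : (∑ i, A i) * l + M ≤ (∑ i, A i + M) * l := by nlinarith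
  choose G hGlip hGF hGA using fun i => hext i l hl
  replace hGA (i z) : |G i z| ≤ (∑ i, A i) * l := (hGA i z).trans <| by
    gcongr
    exact Finset.single_le_sum (fun i _ => hA i) (Finset.mem_univ i)
  refine ⟨𝒜.glue φ G, hφ.glue_zpow, fun x hx => ?_, fun x => ?_,
    fun x => hφ.glue_eq_of_isEquivariantAt hGF⟩
  · refine (hφ.abs_glue_le hGA (hidx x hx)).trans (hAM.trans ?_)
    exact mul_le_mul_of_nonneg_right (le_add_of_nonneg_right (by positivity)) (by positivity)
  · obtain ⟨O, hO, hle⟩ := hφ.exists_nhds_abs_glue_sub_le hGA hGlip (by positivity) hidx x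
    refine ⟨O, hO, fun y hy z hz => (hle y hy z hz).trans ?_⟩
    refine mul_le_mul_of_nonneg_right ?_ dist_nonneg
    calc Fintype.card ι * (Λ * ((∑ i, A i) * l + M) + κ * l)
        ≤ Fintype.card ι * (Λ * ((∑ i, A i + M) * l) + κ * l) := by gcongr
      _ = Fintype.card ι * (Λ * (∑ i, A i + M) + κ) * l := by ring
      _ ≤ _ := mul_le_mul_of_nonneg_right (le_add_of_nonneg_left (by positivity)) (by positivity)

end Atlas

end

/-! ### Error estimates -/

lemma tendsto_measure_of_tendsto_rpow_mul {α : Type*} [MeasurableSpace α] {μ : Measure α}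
    {N : ℝ → Set α} {p : ℝ} (hp : 0 < p)
    (h : Tendsto (fun l => ENNReal.ofReal l ^ p * μ (N l)) atTop (𝓝 0)) :
    Tendsto (fun l => μ (N l)) atTop (𝓝 0) := by
  refine tendsto_of_tendsto_of_tendsto_of_le_of_le' tendsto_const_nhds h
    (Eventually.of_forall fun _ => zero_le) ?_
  filter_upwards [eventually_ge_atTop 1] with l hl using
    le_mul_of_one_le_left zero_le (ENNReal.one_le_rpow (ENNReal.one_le_ofReal.2 hl) hp)

lemma rpow_one_div_le_of_le_mul_rpow {p : ℝ} (hp : 0 < p) {a b c : ℝ≥0∞} (h : a ≤ b * c ^ p) :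
    a ^ (1 / p) ≤ b ^ (1 / p) * c := by
  refine (ENNReal.rpow_le_rpow h (by positivity)).trans_eq ?_
  rw [ENNReal.mul_rpow_of_nonneg _ _ (by positivity), ← ENNReal.rpow_mul,
    mul_one_div_cancel hp.ne', ENNReal.rpow_one]

lemma locallyLipschitz_of_dist_proj_le {T Tt : Type*} [MetricSpace T] [MetricSpace Tt]
    {π : Tt → T} (hloc : IsLocalIsometry π) {v : Tt → ℝ} {C : ℝ}
    (hv : ∀ x, ∃ O ∈ 𝓝 x, ∀ y ∈ O, ∀ z ∈ O, |v y - v z| ≤ C * dist (π y) (π z)) :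
    LocallyLipschitz v := fun x => by
  obtain ⟨O, hO, hle⟩ := hv x
  obtain ⟨ε, hε, hiso⟩ := hloc x
  refine ⟨Real.toNNReal C, O ∩ ball x ε, inter_mem hO (ball_mem_nhds x hε),
    LipschitzOnWith.of_dist_le_mul fun y hy z hz => ?_⟩
  rw [Real.dist_eq]
  refine (hle y hy.1 z hz.1).trans ?_
  rw [hiso y hy.2 z hz.2]
  exact mul_le_mul_of_nonneg_right (Real.le_coe_toNNReal C) dist_nonneg

section

variable {T Tt : Type*} [MetricSpace T] [MetricSpace Tt] {π : Tt → T} {θ : Tt ≃ₜ Tt}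
  [MeasurableSpace Tt] [BorelSpace Tt] {μt : Measure Tt} {p : ℝ}

lemma Atlas.exists_bound_setLIntegral [MeasurableSpace T] {μ : Measure T} {ι : Type*} [Fintype ι]
    (𝒜 : Atlas π θ ι) (hμt : IsLiftedMeasure π μ μt) :
    ∃ M : Set Tt → ℝ≥0∞, ∀ U, IsCompact (closure U) → M U < ⊤ ∧
      ∀ F : Tt → ℝ≥0∞, (∀ᵐ x ∂μt, ∀ k : ℤ, F ((θ ^ k) x) = F x) →
        ∫⁻ x in U, F x ∂μt ≤ M U * ∑ i, ∫⁻ x in (𝒜.chart i).sheet, F x ∂μt := by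
  have hbase (z : T) : ∃ i, z ∈ (𝒜.chart i).base :=
    (𝒜.exists_mem_ball z).imp fun i hi => 𝒜.core_subset_base i hi
  choose! M hM using fun (U : Set Tt) (hU : IsCompact (closure U)) =>
    hμt.exists_setLIntegral_le 𝒜.isDeckGenerator 𝒜.chart hbase hU
  exact ⟨M, hM⟩

lemma Atlas.IsTruncation.setLIntegral_abs_sub_le {ι : Type*} [Fintype ι] {𝒜 : Atlas π θ ι}
    {f v : Tt → ℝ} {N : Set T} {c : ℝ} {U : Set Tt} {M : ℝ≥0∞} (hv : 𝒜.IsTruncation f N c v)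
    (hp : 0 < p) (hf : ∀ᵐ x ∂μt, ∀ k : ℤ, f ((θ ^ k) x) = f x + k)
    (hM : ∀ F : Tt → ℝ≥0∞, (∀ᵐ x ∂μt, ∀ k : ℤ, F ((θ ^ k) x) = F x) →
      ∫⁻ x in U, F x ∂μt ≤ M * ∑ i, ∫⁻ x in (𝒜.chart i).sheet, F x ∂μt) :
    ∫⁻ x in U, ENNReal.ofReal |v x - f x| ^ p ∂μt ≤ M * ∑ i, ∫⁻ x in (𝒜.chart i).sheet,
      (π ⁻¹' N).indicator (fun x => ENNReal.ofReal c + ENNReal.ofReal |f x|) x ^ p ∂μt := by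
  refine (hM _ ?_).trans (mul_le_mul_right (Finset.sum_le_sum fun i _ => ?_) _)
  · filter_upwards [hf] with x hx k
    rw [hv.zpow_eq, hx, add_sub_add_right_eq_sub]
  · refine lintegral_mono_ae ?_
    filter_upwards [ae_restrict_of_ae hf, ae_restrict_mem (𝒜.chart i).isOpen_sheet.measurableSet]
      with x hx hxs
    gcongr
    by_cases hxN : π x ∈ N
    · have hc := hv.abs_le x (mem_iUnion.2 ⟨i, hxs⟩)
      rw [indicator_of_mem (show x ∈ π ⁻¹' N from hxN),
        ← ENNReal.ofReal_add ((abs_nonneg _).trans hc) (abs_nonneg _)]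
      exact ENNReal.ofReal_le_ofReal ((abs_sub _ _).trans (add_le_add_left hc _))
    · rw [hv.eq_of_notMem x hxN (𝒜.isEquivariantAt_of_zpow_eq hx), sub_self, abs_zero,
        ENNReal.ofReal_zero]
      exact zero_le

variable [MeasurableSpace T] [BorelSpace T] {μ : Measure T}

lemma Sheet.setLIntegral_indicator_le (P : Sheet π) (hμt : IsLiftedMeasure π μ μt)
    (hπ : Continuous π) (hp : 1 ≤ p) {N : Set T} (hN : MeasurableSet N) (c : ℝ≥0∞)
    (h : Tt → ℝ≥0∞) :
    ∫⁻ x in P.sheet, (π ⁻¹' N).indicator (fun x => c + h x) x ^ p ∂μt ≤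
      2 ^ p * (c ^ p * μ N + ∫⁻ x in π ⁻¹' N, h x ^ p ∂μt.restrict P.sheet) := by
  have hN' : MeasurableSet (π ⁻¹' N) := hπ.measurable hN
  calc ∫⁻ x in P.sheet, (π ⁻¹' N).indicator (fun x => c + h x) x ^ p ∂μt
      ≤ ∫⁻ x in P.sheet, (π ⁻¹' N).indicator (fun x => 2 ^ p * (c ^ p + h x ^ p)) x ∂μt := by
        refine lintegral_mono fun x => ?_
        by_cases hx : x ∈ π ⁻¹' N
        · simp only [indicator_of_mem hx]
          exact add_rpow_le_two_rpow_mul hp _ _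
        · simp only [indicator_of_notMem hx, ENNReal.zero_rpow_of_pos (zero_lt_one.trans_le hp),
            le_refl]
    _ = 2 ^ p * (c ^ p * (μt.restrict P.sheet) (π ⁻¹' N) +
          ∫⁻ x in π ⁻¹' N, h x ^ p ∂μt.restrict P.sheet) := by
        rw [lintegral_indicator hN', lintegral_const_mul' _ _ (by finiteness),
          lintegral_add_left measurable_const, setLIntegral_const]
    _ ≤ _ := by
        gcongr
        rw [Measure.restrict_apply hN', inter_comm]
        exact P.measure_sheet_inter_preimage_le hμt hπ hN

lemma Sheet.tendsto_setLIntegral_indicator (P : Sheet π) (hμt : IsLiftedMeasure π μ μt)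
    (hπ : Continuous π) (hp : 1 ≤ p) {N : ℝ → Set T} (hN : ∀ l, MeasurableSet (N l))
    (hNμ : Tendsto (fun l => ENNReal.ofReal l ^ p * μ (N l)) atTop (𝓝 0)) {Q : ℝ} (hQ : 0 ≤ Q)
    {h : Tt → ℝ≥0∞} (hh : ∫⁻ x in P.sheet, h x ^ p ∂μt ≠ ⊤) :
    Tendsto (fun l => ∫⁻ x in P.sheet,
      (π ⁻¹' N l).indicator (fun x => ENNReal.ofReal (Q * l) + h x) x ^ p ∂μt) atTop (𝓝 0) := by
  have hp0 : 0 < p := zero_lt_one.trans_le hp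
  have hconst : Tendsto (fun l => ENNReal.ofReal (Q * l) ^ p * μ (N l)) atTop (𝓝 0) := by
    have := ENNReal.Tendsto.const_mul (a := ENNReal.ofReal Q ^ p) hNμ (Or.inr (by finiteness))
    rw [mul_zero] at this
    refine this.congr fun l => ?_
    rw [ENNReal.ofReal_mul hQ, ENNReal.mul_rpow_of_nonneg _ _ hp0.le, mul_assoc]
  have hint : Tendsto (fun l => ∫⁻ x in π ⁻¹' N l, h x ^ p ∂μt.restrict P.sheet) atTop (𝓝 0) := by
    refine tendsto_setLIntegral_zero hh (tendsto_of_tendsto_of_tendsto_of_le_of_le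
      tendsto_const_nhds (tendsto_measure_of_tendsto_rpow_mul hp0 hNμ) (fun _ => zero_le)
      fun l => ?_)
    rw [Function.comp_apply, Measure.restrict_apply (hπ.measurable (hN l)), inter_comm]
    exact P.measure_sheet_inter_preimage_le hμt hπ (hN l)
  have hbound := ENNReal.Tendsto.const_mul (a := 2 ^ p) (hconst.add hint)
    (Or.inr (by finiteness))
  rw [add_zero, mul_zero] at hbound
  exact tendsto_of_tendsto_of_tendsto_of_le_of_le tendsto_const_nhds hbound (fun _ => zero_le)
    fun l => P.setLIntegral_indicator_le hμt hπ hp (hN l) _ h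

namespace Atlas

variable {ι : Type*} [Fintype ι] {𝒜 : Atlas π θ ι} {f v : Tt → ℝ} {N : Set T} {c : ℝ}
  {U : Set Tt} {M : ℝ≥0∞}

lemma IsTruncation.nSeminorm_sub_le (hv : 𝒜.IsTruncation f N c v) (hc : 0 ≤ c) (hN : IsOpen N)
    (hloc : IsLocalIsometry π) (hμt : IsLiftedMeasure π μ μt) (hp : 1 ≤ p) (hf : MemNloc μt p f)
    (hfθ : ∀ᵐ x ∂μt, ∀ k : ℤ, f ((θ ^ k) x) = f x + k) {g : T → ℝ≥0∞} (hg : Measurable g)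
    (hgfin : ∫⁻ z, g z ^ p ∂μ < ⊤)
    (hgrad : ∀ i, IsUpperGradientOn (𝒜.chart i).base (f ∘ (𝒜.chart i).sec) g)
    (hU : IsOpen U) (hUc : IsCompact (closure U)) (hMfin : M < ⊤)
    (hM : ∀ F : Tt → ℝ≥0∞, (∀ᵐ x ∂μt, ∀ k : ℤ, F ((θ ^ k) x) = F x) →
      ∫⁻ x in U, F x ∂μt ≤ M * ∑ i, ∫⁻ x in (𝒜.chart i).sheet, F x ∂μt) :
    NSeminorm μt p U (fun x => v x - f x) ≤
      (M * ∑ i, ∫⁻ x in (𝒜.chart i).sheet, (π ⁻¹' N).indicator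
        (fun x => ENNReal.ofReal c + ENNReal.ofReal |f x|) x ^ p ∂μt) ^ (1 / p) +
      (M * ∑ i, ∫⁻ x in (𝒜.chart i).sheet, (π ⁻¹' N).indicator
        (fun x => ENNReal.ofReal c + g (π x)) x ^ p ∂μt) ^ (1 / p) := by
  have hp0 : 0 < p := zero_lt_one.trans_le hp
  have hπ := 𝒜.continuous_proj
  have hproj := 𝒜.isDeckGenerator.proj_zpow
  obtain ⟨Z, hZ, hZ0, hfZ⟩ := 𝒜.exists_null_set hμt hfθ
  obtain ⟨ρ, hρ, hρU, hρfin⟩ := (hf U hU hUc).2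
  obtain ⟨H, hH, hHfin, hfH⟩ := hρU.exists_isUpperGradientOn hp hρ hρfin
  have hgU : ∫⁻ x in U, g (π x) ^ p ∂μt < ⊤ := by
    refine (hM (fun x => g (π x) ^ p) (.of_forall fun x k => by rw [hproj])).trans_lt
      (ENNReal.mul_lt_top hMfin (ENNReal.sum_lt_top.2 fun i _ => ?_))
    rw [(𝒜.chart i).setLIntegral_sheet_comp hμt hπ (hg.pow_const p)]
    exact (setLIntegral_le_lintegral _ _).trans_lt hgfin
  have hgradU := 𝒜.isWeakUpperGradientOn_sub hloc hp hg hgrad hZ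
    (hμt.measure_preimage_eq_zero hπ hZ hZ0) hfZ hc hv.exists_nhds_abs_sub_le hN hv.eq_of_notMem
    hH hfH hHfin hgU
  have hmeas : Measurable fun x => N.indicator (fun z => ENNReal.ofReal c + g z) (π x) :=
    ((measurable_const.add hg).indicator hN.measurableSet).comp hπ.measurable
  refine add_le_add ?_ ((iInf₂_le _ ⟨hmeas, hgradU⟩).trans ?_) <;> gcongr
  · exact hv.setLIntegral_abs_sub_le hp0 hfθ hM
  · exact hM (fun x => N.indicator (fun z => ENNReal.ofReal c + g z) (π x) ^ p)
      (.of_forall fun x k => by rw [hproj])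

lemma exists_isTruncation_lt [CompactSpace T] (hμt : IsLiftedMeasure π μ μt)
    (hμ : ∀ i, 0 < μ (𝒜.core i)) (hp : 1 ≤ p) (hf : MemNloc μt p f) {g : T → ℝ≥0∞}
    (hg : Measurable g) (hgfin : ∫⁻ z, g z ^ p ∂μ < ⊤) {N : ℝ → Set T}
    (hNo : ∀ l, IsOpen (N l)) (hN : Antitone N)
    (hNμ : Tendsto (fun l => ENNReal.ofReal l ^ p * μ (N l)) atTop (𝓝 0)) {κ : ℝ} (hκ : 0 ≤ κ)
    (hF : ∀ i, ∀ l > 0,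
      LipschitzOnWith (Real.toNNReal (κ * l)) (f ∘ (𝒜.chart i).sec) (𝒜.core i \ N l))
    {δ : ℝ≥0∞} (hδ : 0 < δ) :
    ∃ (l c : ℝ) (v : Tt → ℝ), 0 ≤ c ∧ 𝒜.IsTruncation f (N l) c v ∧
      ∑ i, ∫⁻ x in (𝒜.chart i).sheet, (π ⁻¹' N l).indicator
        (fun x => ENNReal.ofReal c + ENNReal.ofReal |f x|) x ^ p ∂μt < δ ∧
      ∑ i, ∫⁻ x in (𝒜.chart i).sheet, (π ⁻¹' N l).indicator
        (fun x => ENNReal.ofReal c + g (π x)) x ^ p ∂μt < δ := by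
  have hπ := 𝒜.continuous_proj
  have hNm (l : ℝ) : MeasurableSet (N l) := (hNo l).measurableSet
  obtain ⟨l₀, hl₀, hl₀μ⟩ : ∃ l₀ : ℝ, 1 ≤ l₀ ∧ ∀ i, μ (N l₀) < μ (𝒜.core i) :=
    ((eventually_ge_atTop 1).and (eventually_all.2 fun i =>
      (tendsto_measure_of_tendsto_rpow_mul (zero_lt_one.trans_le hp) hNμ).eventually_lt_const
        (hμ i))).exists
  obtain ⟨Q, hQ, hv⟩ := 𝒜.exists_isTruncation hN hκ hl₀ hF fun i =>
    nonempty_of_not_subset fun h => (measure_mono h).not_gt (hl₀μ i)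
  have hsmall {h : Tt → ℝ≥0∞} (hh : ∀ i, ∫⁻ x in (𝒜.chart i).sheet, h x ^ p ∂μt ≠ ⊤) :
      ∀ᶠ l in atTop, ∑ i, ∫⁻ x in (𝒜.chart i).sheet, (π ⁻¹' N l).indicator
        (fun x => ENNReal.ofReal (Q * l) + h x) x ^ p ∂μt < δ := by
    have := tendsto_finsetSum Finset.univ fun i _ =>
      (𝒜.chart i).tendsto_setLIntegral_indicator hμt hπ hp hNm hNμ hQ (hh i)
    rw [Finset.sum_const_zero] at this
    exact this.eventually_lt_const hδ
  obtain ⟨l, hl, hlf, hlg⟩ := ((eventually_ge_atTop l₀).and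
    ((hsmall (h := fun x => ENNReal.ofReal |f x|) fun i =>
      (hf _ (𝒜.chart i).isOpen_sheet (𝒜.chart i).isCompact_closure).1.ne).and
    (hsmall (h := fun x => g (π x)) fun i => by
      rw [(𝒜.chart i).setLIntegral_sheet_comp hμt hπ (hg.pow_const p)]
      exact ((setLIntegral_le_lintegral _ _).trans_lt hgfin).ne))).exists
  obtain ⟨v, hv⟩ := hv l hl
  exact ⟨l, Q * l, v, mul_nonneg hQ (zero_le_one.trans (hl₀.trans hl)), hv, hlf, hlg⟩

theorem exists_locallyLipschitz_nSeminorm_sub_le [CompactSpace T] {ι : Type*} [Finite ι]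
    (𝒜 : Atlas π θ ι) (hloc : IsLocalIsometry π) (hμt : IsLiftedMeasure π μ μt)
    (hμ : ∀ i, 0 < μ (𝒜.core i)) (hp : 1 ≤ p) (hf : MemNloc μt p f)
    (hfθ : ∀ᵐ x ∂μt, f (θ x) - f x = 1)
    {g : T → ℝ≥0∞} (hg : Measurable g) (hgfin : ∫⁻ z, g z ^ p ∂μ < ⊤)
    (hgrad : ∀ i, IsUpperGradientOn (𝒜.chart i).base (f ∘ (𝒜.chart i).sec) g)
    {N : ℝ → Set T} (hNo : ∀ l, IsOpen (N l)) (hN : Antitone N)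
    (hNμ : Tendsto (fun l => ENNReal.ofReal l ^ p * μ (N l)) atTop (𝓝 0)) {κ : ℝ} (hκ : 0 ≤ κ)
    (hF : ∀ i, ∀ l > 0,
      LipschitzOnWith (Real.toNNReal (κ * l)) (f ∘ (𝒜.chart i).sec) (𝒜.core i \ N l)) :
    ∃ C : Set Tt → ℝ≥0∞, (∀ U, IsOpen U → IsCompact (closure U) → C U < ⊤) ∧
      ∀ ε : ℝ, 0 < ε → ∃ v : Tt → ℝ, LocallyLipschitz v ∧ (∀ x, v (θ x) - v x = 1) ∧
        ∀ U, IsOpen U → IsCompact (closure U) →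
          NSeminorm μt p U (fun x => v x - f x) ≤ C U * ENNReal.ofReal ε := by
  have := Fintype.ofFinite ι
  have hp0 : 0 < p := zero_lt_one.trans_le hp
  have hfk := 𝒜.isDeckGenerator.ae_apply_zpow_eq_add hμt hfθ
  obtain ⟨M, hM⟩ := 𝒜.exists_bound_setLIntegral hμt
  refine ⟨fun U => 2 * M U ^ (1 / p), fun U _ hUc => ?_, fun ε hε => ?_⟩
  · have : M U ≠ ⊤ := (hM U hUc).1.ne
    finiteness
  obtain ⟨l, c, v, hc, hv, hvf, hvg⟩ := exists_isTruncation_lt hμt hμ hp hf hg hgfin hNo hN hNμ hκ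
    hF (ENNReal.rpow_pos (p := p) (ENNReal.ofReal_pos.2 hε) ENNReal.ofReal_ne_top)
  refine ⟨v, locallyLipschitz_of_dist_proj_le hloc hv.exists_nhds_abs_sub_le, fun x => ?_,
    fun U hU hUc => ?_⟩
  · simpa only [zpow_one, Int.cast_one, add_sub_cancel_left] using
      congrArg (· - v x) (hv.zpow_eq 1 x)
  · refine (hv.nSeminorm_sub_le hc (hNo l) hloc hμt hp hf hfk hg hgfin hgrad hU hUc (hM U hUc).1
      (hM U hUc).2).trans ?_
    beta_reduce
    rw [two_mul, add_mul]
    exact add_le_add (rpow_one_div_le_of_le_mul_rpow hp0 (mul_le_mul_right hvf.le _))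
      (rpow_one_div_le_of_le_mul_rpow hp0 (mul_le_mul_right hvg.le _))

end Atlas

end

lemma SupportsPoincare.isFiniteMeasure {T : Type*} [MetricSpace T] [BoundedSpace T]
    [MeasurableSpace T] {μ : Measure T} {CP lP : ℝ} (hPI : SupportsPoincare μ CP lP) :
    IsFiniteMeasure μ := by
  cases isEmpty_or_nonempty T with
  | inl _ => exact ⟨by simp [univ_eq_empty_iff.2 ‹_›]⟩
  | inr h =>
    obtain ⟨r, hr, hball⟩ := (Bornology.IsBounded.all (univ : Set T)).subset_ball_lt 0 h.some
    exact ⟨(measure_mono hball).trans_lt (hPI.1 _ r hr).2⟩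

lemma exists_common_gradient {X Y ι : Type*} [PseudoMetricSpace X] [PseudoEMetricSpace Y]
    [MeasurableSpace X] [BorelSpace X] [Finite ι] {μ : Measure X} {p : ℝ} (hp : 1 ≤ p)
    {B : ι → Set X} {u : ι → X → Y} {g : ι → X → ℝ≥0∞} (hg : ∀ i, LowerSemicontinuous (g i))
    (hgfin : ∀ i, ∫⁻ x, g i x ^ p ∂μ < ⊤) (hgrad : ∀ i, IsUpperGradientOn (B i) (u i) (g i)) :
    ∃ G : X → ℝ≥0∞, LowerSemicontinuous G ∧ ∫⁻ x, G x ^ p ∂μ < ⊤ ∧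
      ∀ i, IsUpperGradientOn (B i) (u i) G := by
  have := Fintype.ofFinite ι
  refine ⟨fun x => ∑ i, g i x, lowerSemicontinuous_sum fun i _ => hg i, ?_, fun i =>
    (hgrad i).mono fun x => Finset.single_le_sum (f := fun i => g i x) (fun _ _ => zero_le)
      (Finset.mem_univ i)⟩
  refine (lintegral_mono fun x => ENNReal.rpow_sum_le_const_mul_sum_rpow Finset.univ
    (fun i => g i x) hp).trans_lt ?_
  rw [lintegral_const_mul' _ _ (by finiteness),
    lintegral_finsetSum _ fun i _ => (hg i).measurable.pow_const p]
  exact ENNReal.mul_lt_top (by finiteness) (ENNReal.sum_lt_top.2 fun i _ => hgfin i)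

/-- The radii of the atlas are so small that two points of a core off `highSet μ g S l` can be
joined, inside the base of the sheet, by a quasiconvex curve on which `g` integrates to at most a
multiple of `l`. -/
lemma IsDeckGenerator.exists_atlas_lipschitzOnWith {T Tt : Type*} [MetricSpace T] [MetricSpace Tt]
    [CompactSpace T] [PreconnectedSpace T] [MeasurableSpace T] [BorelSpace T] [MeasurableSpace Tt]
    [BorelSpace Tt] {μ : Measure T} [IsFiniteMeasure μ] {μt : Measure Tt} {Cμ : ℝ≥0∞} {CP lP : ℝ}
    {π : Tt → T} {θ : Tt ≃ₜ Tt} (hθ : IsDeckGenerator π θ) (hloc : IsLocalIsometry π)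
    (hπ : IsLocalHomeomorph π) (hsurj : Function.Surjective π) (hdbl : IsDoubling μ Cμ)
    (hCμ : Cμ ≠ ⊤) (hPI : SupportsPoincare μ CP lP) (hμt : IsLiftedMeasure π μ μt) {p : ℝ}
    (hp : 1 ≤ p) {f : Tt → ℝ} (hf : MemNloc μt p f) {S : ℝ} (hS : 0 < S)
    (hD : 0 < diam (univ : Set T)) :
    ∃ (J : Finset T) (𝒜 : Atlas π θ J) (g : T → ℝ≥0∞), LowerSemicontinuous g ∧
      ∫⁻ z, g z ^ p ∂μ < ⊤ ∧
      (∀ i, IsUpperGradientOn (𝒜.chart i).base (f ∘ (𝒜.chart i).sec) g) ∧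
      ∀ i, ∀ l > 0, LipschitzOnWith (Real.toNNReal (2 * quasiconvexityConst Cμ CP * l))
        (f ∘ (𝒜.chart i).sec) (𝒜.core i \ highSet μ g S l) := by
  have hK := quasiconvexityConst_pos Cμ CP
  have hsheet : ∀ y, ∃ P : Sheet π, P.center = y := hsurj.forall.2 fun x => hloc.exists_sheet hπ x
  choose P hP using hsheet
  choose r hr hrD hrS hrR using fun y => exists_pos_radius hD hS hK.le
    (show 0 ≤ 2 * max lP 1 by positivity) (P y).radius_pos
  choose g hg hgfin hgrad using fun y => (P y).exists_gradient hμt hp hf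
  obtain ⟨J, 𝒜, h𝒜⟩ := hθ.exists_atlas hπ.continuous hP hr fun y => by
    nlinarith [hrR y, hr y]
  obtain ⟨G, hG, hGfin, hGgrad⟩ := exists_common_gradient hp (fun i : J => hg i)
    (fun i => hgfin i) fun i => hgrad i
  have hgrad𝒜 (i : J) : IsUpperGradientOn (𝒜.chart i).base (f ∘ (𝒜.chart i).sec) G := by
    rw [(h𝒜 i).1]
    exact hGgrad i
  refine ⟨J, 𝒜, G, hG, hGfin, hgrad𝒜, fun i l hl => ?_⟩
  rw [mul_right_comm, Atlas.core, (h𝒜 i).2]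
  refine (hgrad𝒜 i).lipschitzOnWith_diff_highSet hdbl hCμ hPI hG hS (hrD i) (hrS i) ?_ hl
  rw [(h𝒜 i).1]
  exact hrR i

end Duality

open Duality in
theorem statement6_general {T Tt : Type*} [MetricSpace T] [MeasurableSpace T] [BorelSpace T]
    [CompactSpace T] [MetricSpace Tt] [MeasurableSpace Tt] [BorelSpace Tt] {μ : Measure T}
    {μt : Measure Tt} {Cμ : ℝ≥0∞} {CP lP : ℝ} {x₀ : T} {α₀ : Path x₀ x₀} {π : Tt → T}
    {τ : Tt → Tt} (hdbl : IsDoubling μ Cμ) (hPI : SupportsPoincare μ CP lP)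
    (hgen : IsGenerator x₀ α₀) (hcov : CoverSetup π) (hdeck : IsDeck π x₀ α₀ τ)
    (hμt : IsLiftedMeasure π μ μt) {p : ℝ} (hp : 1 ≤ p) {f : Tt → ℝ} (hf : MemNloc μt p f)
    (hτf : ∀ᵐ x ∂μt, f (τ x) - f x = 1) :
    ∃ C : Set Tt → ℝ≥0∞, (∀ U, IsOpen U → IsCompact (closure U) → C U < ⊤) ∧
      ∀ ε : ℝ, 0 < ε → ∃ v : Tt → ℝ, LocallyLipschitz v ∧ (∀ x, v (τ x) - v x = 1) ∧
        ∀ U, IsOpen U → IsCompact (closure U) →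
          NSeminorm μt p U (fun x => v x - f x) ≤ C U * ENNReal.ofReal ε := by
  have := hPI.isFiniteMeasure
  have := hcov.pathConnectedSpace
  have := hgen.nontrivial
  have hD : 0 < diam (univ : Set T) :=
    diam_pos nontrivial_univ isCompact_univ.isBounded
  have hCμ := hdbl.ne_top hD
  obtain ⟨θ, hθ, hθτ⟩ := hdeck.exists_isDeckGenerator hcov hgen
  obtain ⟨J, 𝒜, g, hg, hgfin, hgrad, hF⟩ := hθ.exists_atlas_lipschitzOnWith hcov.2.2.1
    hcov.1.isLocalHomeomorph hcov.2.1 hdbl hCμ hPI hμt hp hf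
    (S := diam (univ : Set T) / 5) (by positivity) hD
  simp only [← hθτ] at hτf ⊢
  exact 𝒜.exists_locallyLipschitz_nSeminorm_sub_le hcov.2.2.1 hμt
    (fun i => (hPI.1 _ _ (𝒜.inner_pos i)).1) hp hf hτf hg.measurable hgfin hgrad
    (isOpen_highSet μ g _) (antitone_highSet μ g _)
    (hdbl.tendsto_measure_highSet hCμ hg.measurable hp (by linarith) hgfin.ne)
    (mul_nonneg zero_le_two (quasiconvexityConst_pos Cμ CP).le) hF

open Duality in
/-- Density of equivariant locally Lipschitz functions in the space of degree-1
functions of `N^{1,p}_loc (T̃)` (after Björn–Björn). -/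
theorem statement6
    (T : Type) [MetricSpace T] [MeasurableSpace T] [BorelSpace T] [CompactSpace T]
    (Tt : Type) [MetricSpace Tt] [MeasurableSpace Tt] [BorelSpace Tt]
    (μ : Measure T) (μt : Measure Tt) (Cμ : ℝ≥0∞) (CP lP : ℝ)
    (x₀ : T) (α₀ : Path x₀ x₀) (π : Tt → T) (τ : Tt → Tt)
    (hdbl : IsDoubling μ Cμ) (hPI : SupportsPoincare μ CP lP)
    (hslsc : SemilocallySimplyConnected T) (hgen : IsGenerator x₀ α₀)
    (hcov : CoverSetup π) (hdeck : IsDeck π x₀ α₀ τ)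
    (hμt : IsLiftedMeasure π μ μt)
    (p : ℝ) (hp : 1 < p)
    (f : Tt → ℝ) (hf : MemNloc μt p f) (hτf : ∀ᵐ x ∂μt, f (τ x) - f x = 1) :
    ∃ C : Set Tt → ℝ≥0∞,
      (∀ U : Set Tt, IsOpen U → IsCompact (closure U) → C U < ⊤) ∧
      ∀ ε : ℝ, 0 < ε →
        ∃ v : Tt → ℝ, LocallyLipschitz v ∧ (∀ x, v (τ x) - v x = 1) ∧
          ∀ U : Set Tt, IsOpen U → IsCompact (closure U) →
            NSeminorm μt p U (fun x => v x - f x) ≤ C U * ENNReal.ofReal ε := by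
  exact statement6_general hdbl hPI hgen hcov hdeck hμt hp.le hf hτf
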